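/- arXiv:2201.03487 — 8 statements merged into one kernel-verified Lean document; each statement's English description precedes it below -/
import Mathlib

section
/- Let E be a Polish space (a separable topological space whose topology is induced by a complete metric). Let ~ be an equivalence relation on E whose graph {(x,y) ∈ E×E : x ~ y} is closed in E×E, and let F : E → [0,∞] be a lower semicontinuous function such that for every R ∈ [0,∞) the sublevel set {x ∈ E : F(x) ≤ R} is compact. Define m : E → [0,∞] by m(x) := inf{F(y) : y ~ x}. Then there exists a Borel measurable map S : E → E such that for every x ∈ E: (i) S(x) ~ x; (ii) if m(x) < ∞ then F(S(x)) ≤ 2·m(x); and (iii) if m(x) = ∞ then S(x) = x. -/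
open scoped NNReal ENNReal

def argminOn {E : Type*} (g : E → ℝ≥0∞) (A : Set E) : Set E :=
  {y | y ∈ A ∧ ∀ z ∈ A, g y ≤ g z}

lemma argmin_hit {E X : Type*} [TopologicalSpace E] [MeasurableSpace X]
    (Γ : X → Set E) (g : E → ℝ≥0∞) (hg : LowerSemicontinuous g)
    (hm : ∀ C, IsClosed C → MeasurableSet {x | (Γ x ∩ C).Nonempty})
    (hmin : ∀ C, IsClosed C → ∀ x, (Γ x ∩ C).Nonempty →
      (argminOn g (Γ x ∩ C)).Nonempty)
    (C : Set E) (hC : IsClosed C) :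
    MeasurableSet {x | (argminOn g (Γ x) ∩ C).Nonempty} := by
  have hcl : ∀ t : ℝ≥0∞, IsClosed {y | g y ≤ t} := fun t => hg.isClosed_preimage t
  have key : {x | (argminOn g (Γ x) ∩ C).Nonempty} =
      {x | (Γ x ∩ C).Nonempty} ∩ ⋂ q : ℚ,
        ({x | (Γ x ∩ {y | g y ≤ ENNReal.ofReal q}).Nonempty}ᶜ ∪
          {x | (Γ x ∩ (C ∩ {y | g y ≤ ENNReal.ofReal q})).Nonempty}) := by
    ext x
    simp only [Set.mem_inter_iff, Set.mem_iInter, Set.mem_union, Set.mem_compl_iff,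
      Set.mem_setOf_eq]
    constructor
    · rintro ⟨y, ⟨hy, hy'⟩, hyC⟩
      refine ⟨⟨y, hy, hyC⟩, fun q => ?_⟩
      by_cases h : (Γ x ∩ {y | g y ≤ ENNReal.ofReal q}).Nonempty
      · obtain ⟨z, hz, hzq⟩ := h
        exact Or.inr ⟨y, hy, hyC, (hy' z hz).trans hzq⟩
      · exact Or.inl h
    · rintro ⟨h1, h2⟩
      obtain ⟨y, ⟨hy, hyC⟩, hy'⟩ := hmin C hC x h1
      refine ⟨y, ⟨hy, fun z hz => ?_⟩, hyC⟩
      by_contra hlt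
      push Not at hlt
      obtain ⟨q, hq0, hq1, hq2⟩ := ENNReal.lt_iff_exists_rat_btwn.1 hlt
      rcases h2 q with h | ⟨w, hw, hwC, hwq⟩
      · exact h ⟨z, hz, hq1.le⟩
      · exact absurd ((hy' w ⟨hw, hwC⟩).trans hwq) (not_le.2 hq2)
  rw [key]
  exact (hm C hC).inter (MeasurableSet.iInter fun q =>
    (hm _ (hcl _)).compl.union (hm _ (hC.inter (hcl _))))

lemma argmin_nonempty {E : Type*} [TopologicalSpace E] (g : E → ℝ≥0∞)
    (hg : LowerSemicontinuous g) (A : Set E) (hA : IsCompact A) (hne : A.Nonempty) :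
    (argminOn g A).Nonempty := by
  obtain ⟨y, hy, h⟩ := (hg.lowerSemicontinuousOn A).exists_isMinOn hne hA
  exact ⟨y, hy, fun z hz => h hz⟩

lemma argmin_compact {E : Type*} [TopologicalSpace E] (g : E → ℝ≥0∞)
    (hg : LowerSemicontinuous g) (A : Set E) (hA : IsCompact A) :
    IsCompact (argminOn g A) := by
  have : argminOn g A = A ∩ ⋂ z ∈ A, {y | g y ≤ g z} := by
    ext y; simp [argminOn]
  rw [this]
  exact hA.inter_right (isClosed_biInter fun z _ => hg.isClosed_preimage _)

theorem stmt_0 {E : Type*} [TopologicalSpace E] [PolishSpace E]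
    [MeasurableSpace E] [BorelSpace E]
    (r : E → E → Prop) (hr : Equivalence r)
    (hgraph : IsClosed {p : E × E | r p.1 p.2})
    (F : E → ℝ≥0∞) (hF : LowerSemicontinuous F)
    (hcpt : ∀ R : ℝ≥0, IsCompact {x : E | F x ≤ R}) :
    ∃ S : E → E, Measurable S ∧ ∀ x : E,
      r (S x) x ∧
      ((⨅ y ∈ {y : E | r y x}, F y) < ⊤ →
        F (S x) ≤ 2 * ⨅ y ∈ {y : E | r y x}, F y) ∧
      ((⨅ y ∈ {y : E | r y x}, F y) = ⊤ → S x = x) := by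
  classical
  rcases isEmpty_or_nonempty E with hE | hE
  · exact ⟨id, measurable_id, fun x => hE.elim x⟩
  letI := TopologicalSpace.upgradeIsCompletelyMetrizable E
  have horb : ∀ x, IsClosed {y | r y x} := fun x =>
    hgraph.preimage (by fun_prop : Continuous fun y : E => (y, x))
  let Γ0 : E → Set E := fun x => {y | r y x ∧ F y < ⊤}
  let d : ℕ → E := TopologicalSpace.denseSeq E
  let g : ℕ → E → ℝ≥0∞ := fun n y => edist y (d n)
  have hg : ∀ n, LowerSemicontinuous (g n) := fun n =>
    (by fun_prop : Continuous fun y : E => edist y (d n)).lowerSemicontinuous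
  let Γ : ℕ → E → Set E := fun n => Nat.rec (fun x => argminOn F (Γ0 x))
    (fun k G x => argminOn (g k) (G x)) n
  have hΓ0 : ∀ x, Γ 0 x = argminOn F (Γ0 x) := fun x => rfl
  have hΓs : ∀ n x, Γ (n+1) x = argminOn (g n) (Γ n x) := fun n x => rfl
  have hm0 : ∀ C, IsClosed C → MeasurableSet {x | (Γ0 x ∩ C).Nonempty} := by
    intro C hC
    have : {x | (Γ0 x ∩ C).Nonempty} =
        ⋃ N : ℕ, {x | ∃ y ∈ {y | F y ≤ ((N : ℝ≥0) : ℝ≥0∞)} ∩ C, r y x} := by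
      ext x
      simp only [Set.mem_iUnion, Set.mem_setOf_eq]
      constructor
      · rintro ⟨y, ⟨hy, hyF⟩, hyC⟩
        obtain ⟨N, hN⟩ := ENNReal.exists_nat_gt hyF.ne
        exact ⟨N, y, ⟨by simpa using hN.le, hyC⟩, hy⟩
      · rintro ⟨N, y, ⟨hyF, hyC⟩, hy⟩
        exact ⟨y, ⟨hy, lt_of_le_of_lt hyF ENNReal.coe_lt_top⟩, hyC⟩
    rw [this]
    refine MeasurableSet.iUnion fun N => IsClosed.measurableSet ?_
    have hK := (hcpt N).inter_right hC
    set K := {y | F y ≤ ((N : ℝ≥0) : ℝ≥0∞)} ∩ C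
    haveI : CompactSpace K := isCompact_iff_compactSpace.1 hK
    have h2 : IsClosed {p : K × E | r p.1 p.2} :=
      hgraph.preimage (by fun_prop : Continuous fun p : K × E => ((p.1 : E), p.2))
    convert isClosedMap_snd_of_compactSpace _ h2 using 1
    ext x
    simp
  have hsub : ∀ x (R : ℝ≥0) , IsCompact ({y | F y ≤ R} ∩ {y | r y x}) := fun x R =>
    (hcpt R).inter_right (horb x)
  have hmin0 : ∀ C, IsClosed C → ∀ x, (Γ0 x ∩ C).Nonempty →
      (argminOn F (Γ0 x ∩ C)).Nonempty := by
    rintro C hC x ⟨y, ⟨hy, hyF⟩, hyC⟩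
    lift F y to ℝ≥0 using hyF.ne with R hR
    obtain ⟨w, ⟨⟨hw1, hw2⟩, hw3⟩, hw⟩ := argmin_nonempty F hF _ ((hsub x R).inter_right hC)
      ⟨y, ⟨hR.symm.le, hy⟩, hyC⟩
    refine ⟨w, ⟨⟨hw2, lt_of_le_of_lt hw1 ENNReal.coe_lt_top⟩, hw3⟩, ?_⟩
    rintro z ⟨⟨hz, -⟩, hzC⟩
    by_cases h : F z ≤ R
    · exact hw z ⟨⟨h, hz⟩, hzC⟩
    · exact le_trans hw1 (not_le.1 h).le
  have hcomp : ∀ n x, IsCompact (Γ n x) := by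
    intro n x
    induction n with
    | zero =>
      rw [hΓ0]
      rcases (argminOn F (Γ0 x)).eq_empty_or_nonempty with h | ⟨y, ⟨hy, hyF⟩, hy'⟩
      · rw [h]; exact isCompact_empty
      · lift F y to ℝ≥0 using hyF.ne with R hR
        convert hsub x R using 1
        ext z
        constructor
        · rintro ⟨⟨h1, h2⟩, h3⟩
          exact ⟨(h3 y ⟨hy, hR ▸ ENNReal.coe_lt_top⟩).trans hR.symm.le, h1⟩
        · rintro ⟨h1, h2⟩
          exact ⟨⟨h2, lt_of_le_of_lt h1 ENNReal.coe_lt_top⟩, fun w hw => le_trans h1 (hy' w hw)⟩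
    | succ n ih => rw [hΓs]; exact argmin_compact _ (hg n) _ ih
  have hm : ∀ n C, IsClosed C → MeasurableSet {x | (Γ n x ∩ C).Nonempty} := by
    intro n
    induction n with
    | zero => exact argmin_hit Γ0 F hF hm0 hmin0
    | succ n ih =>
      exact argmin_hit (Γ n) (g n) (hg n) ih fun C hC x h =>
        argmin_nonempty _ (hg n) _ ((hcomp n x).inter_right hC) h
  have hanti : ∀ n x, Γ (n+1) x ⊆ Γ n x := fun n x y hy => hy.1
  have hne : ∀ x, (Γ 0 x).Nonempty → ∀ n, (Γ n x).Nonempty := by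
    intro x h n
    induction n with
    | zero => exact h
    | succ n ih => exact argmin_nonempty _ (hg n) _ (hcomp n x) ih
  have hinter : ∀ x C, IsClosed C → (∀ n, (Γ n x ∩ C).Nonempty) →
      (⋂ n, (Γ n x ∩ C)).Nonempty := fun x C hC h =>
    IsCompact.nonempty_iInter_of_sequence_nonempty_isCompact_isClosed _
      (fun n => Set.inter_subset_inter_left _ (hanti n x)) h
      ((hcomp 0 x).inter_right hC) (fun n => ((hcomp n x).inter_right hC).isClosed)
  have huniq : ∀ x y z, (∀ n, y ∈ Γ n x) → (∀ n, z ∈ Γ n x) → y = z := by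
    intro x y z hy hz
    have h1 : ∀ n, edist y (d n) = edist z (d n) := fun n =>
      le_antisymm ((hy (n+1)).2 z (hz n)) ((hz (n+1)).2 y (hy n))
    have h2 : (fun w => edist y w) = fun w => edist z w :=
      (TopologicalSpace.denseRange_denseSeq E).equalizer (by fun_prop) (by fun_prop)
        (funext h1)
    have h3 := congrFun h2 z
    simpa using h3
  have hex : ∀ x, ∃ s, ((Γ 0 x).Nonempty → ∀ n, s ∈ Γ n x) ∧ (¬ (Γ 0 x).Nonempty → s = x) := by
    intro x
    by_cases h : (Γ 0 x).Nonempty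
    · obtain ⟨s, hs⟩ := hinter x Set.univ isClosed_univ (by simpa using hne x h)
      exact ⟨s, fun _ n => (Set.mem_iInter.1 hs n).1, fun h' => absurd h h'⟩
    · exact ⟨x, fun h' => absurd h' h, fun _ => rfl⟩
  choose S hS1 hS2 using hex
  have hdom : MeasurableSet {x | (Γ 0 x).Nonempty} := by
    simpa using hm 0 Set.univ isClosed_univ
  refine ⟨S, measurable_of_isClosed fun C hC => ?_, fun x => ?_⟩
  · have : S ⁻¹' C = ({x | (Γ 0 x).Nonempty} ∩ ⋂ n, {x | (Γ n x ∩ C).Nonempty}) ∪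
        ({x | (Γ 0 x).Nonempty}ᶜ ∩ C) := by
      ext x
      by_cases h : (Γ 0 x).Nonempty
      · simp only [Set.mem_preimage, Set.mem_union, Set.mem_inter_iff, Set.mem_setOf_eq, h,
          Set.mem_compl_iff, not_true, false_and, or_false, true_and, Set.mem_iInter]
        constructor
        · exact fun hx n => ⟨S x, hS1 x h n, hx⟩
        · intro hx
          obtain ⟨s, hs⟩ := hinter x C hC hx
          rw [Set.mem_iInter] at hs
          rw [huniq x (S x) s (hS1 x h) fun n => (hs n).1]
          exact (hs 0).2
      · simp [h, hS2 x h]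
    rw [this]
    exact (hdom.inter (MeasurableSet.iInter fun n => hm n C hC)).union
      (hdom.compl.inter hC.measurableSet)
  · by_cases h : (Γ 0 x).Nonempty
    · obtain ⟨⟨h1, h2⟩, h3⟩ := hS1 x h 0
      have hle : F (S x) ≤ ⨅ y ∈ {y : E | r y x}, F y := by
        refine le_iInf₂ fun y hy => ?_
        by_cases hyF : F y < ⊤
        · exact h3 y ⟨hy, hyF⟩
        · rw [not_lt_top_iff.1 hyF]; exact le_top
      refine ⟨h1, fun _ => hle.trans (le_mul_of_one_le_left zero_le one_le_two), fun ht => ?_⟩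
      exact absurd (iInf₂_le (f := fun y (_ : y ∈ {y : E | r y x}) => F y) (S x) h1)
        (by rw [ht]; exact not_le.2 h2)
    · have hSx := hS2 x h
      refine ⟨by rw [hSx]; exact hr.refl x, fun hlt => ?_, fun _ => hSx⟩
      exfalso
      simp only [iInf_lt_iff] at hlt
      obtain ⟨y, hy, hyF⟩ := hlt
      apply h
      have := hmin0 Set.univ isClosed_univ x ⟨y, ⟨hy, hyF⟩, trivial⟩
      rw [Set.inter_univ] at this
      exact this
end

section
/- Let (Ω,ℱ,P) be a probability space and V a finite-dimensional normed real vector space. Let 𝒳 := {(x,v) : x ∈ 𝕋³ = ℝ³/ℤ³, v ∈ ℝ³, ‖v‖ ≤ 1/4} be the set of segments on the 3-torus, and let A be a V-valued stochastic process indexed by 𝒳 (each A(ℓ) is measurable) which is almost surely additive: for every segment (x,v) ∈ 𝒳 and every c ∈ [0,1], A(x,v) = A(x,cv) + A(x+cv,(1−c)v) almost surely. Suppose there exist r,s ∈ (0,1), p,M > 0 and α ∈ (0,1] such that E[‖A(x,v)‖^p] ≤ M‖v‖^{pα} for every segment with 0 < ‖v‖ < r, and such that E[‖A(∂P)‖^p]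 ≤ M|P|^{pα/2} for every triangle P = (x,v,w) with x ∈ 𝕋³, v,w ∈ ℝ³, ‖v‖,‖w‖,‖v−w‖ ≤ 1/4 and area |P| := ‖v×w‖/2 < s, where A(∂P) := A(x,v) + A(x+v,w−v) + A(x+w,−w). Then A admits a modification Ã (i.e. for each ℓ ∈ 𝒳, P(Ã(ℓ) = A(ℓ)) = 1) which is almost surely a continuous function on 𝒳, and for every ᾱ ∈ (0, α − 24/p) there exists λ > 0, depending only on p, α, ᾱ, such that E[ sup{ (‖Ã(x,v)‖/‖v‖^ᾱ)^p : (x,v) ∈ 𝒳, 0 < ‖v‖ < r } ] ≤ λ M ((s^{−6} + r^{−12}) r^{p(α−ᾱ)} + 1). -/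
noncomputable section
open MeasureTheory
open scoped ENNReal

/-- The 3-torus `𝕋³ = ℝ³/ℤ³`. -/
abbrev T3 : Type := Fin 3 → AddCircle (1 : ℝ)

/-- `ℝ³` with the Euclidean norm. -/
abbrev E3 : Type := EuclideanSpace ℝ (Fin 3)

/-- The quotient map `ℝ³ → 𝕋³`. -/
def tq (v : E3) : T3 := fun i => (v i : AddCircle (1 : ℝ))

/-- The cross product of two vectors in `ℝ³`. -/
def cross (v w : E3) : E3 :=
  (WithLp.equiv 2 (Fin 3 → ℝ)).symm
    ![v 1 * w 2 - v 2 * w 1, v 2 * w 0 - v 0 * w 2, v 0 * w 1 - v 1 * w 0]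

/-- The area `|P| = ‖v × w‖ / 2` of the triangle `P = (x, v, w)`. -/
def triArea (v w : E3) : ℝ := ‖cross v w‖ / 2

universe uo uv

section helpers
open Filter Topology

def dl (n : ℕ) : ℝ := (1/2 : ℝ) ^ n

def pt (n : ℕ) (a : Fin 3 → ℤ) : E3 := WithLp.toLp 2 (fun i => (a i : ℝ) * dl n)

def fl (n : ℕ) (x : E3) : Fin 3 → ℤ := fun i => ⌊x i * 2 ^ n⌋

def Nb (a b : Fin 3 → ℤ) : Prop := ∀ i, |b i - a i| ≤ 1

lemma dl_pos (n : ℕ) : 0 < dl n := by unfold dl; positivity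

lemma dl_le_one (n : ℕ) : dl n ≤ 1 := by
  unfold dl; exact pow_le_one₀ (by norm_num) (by norm_num)

lemma dl_succ (n : ℕ) : dl (n+1) = dl n / 2 := by unfold dl; rw [pow_succ]; ring

lemma dl_anti {m n : ℕ} (h : m ≤ n) : dl n ≤ dl m := by
  unfold dl; exact pow_le_pow_of_le_one (by norm_num) (by norm_num) h

lemma dl_mul (n : ℕ) : dl n * 2 ^ n = 1 := by
  unfold dl; rw [← mul_pow]; norm_num

lemma two_pow_dl (n : ℕ) : (2:ℝ) ^ n = 1 / dl n := by
  have := dl_mul n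
  have h := dl_pos n
  field_simp; linarith

lemma norm_le_two {v : E3} {d : ℝ} (hd : 0 ≤ d) (h : ∀ i, |v i| ≤ d) : ‖v‖ ≤ 2 * d := by
  rw [EuclideanSpace.norm_eq]
  apply Real.sqrt_le_iff.2
  refine ⟨by positivity, ?_⟩
  have : ∀ i, ‖v i‖ ^ 2 ≤ d ^ 2 := fun i => by
    rw [Real.norm_eq_abs]; exact pow_le_pow_left₀ (abs_nonneg _) (h i) 2
  calc ∑ i, ‖v i‖ ^ 2 ≤ ∑ _i : Fin 3, d ^ 2 := Finset.sum_le_sum fun i _ => this i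
    _ = 3 * d ^ 2 := by simp
    _ ≤ _ := by nlinarith [sq_nonneg d]

lemma abs_le_norm (v : E3) (i : Fin 3) : |v i| ≤ ‖v‖ := by
  have := PiLp.norm_apply_le v i
  simpa [Real.norm_eq_abs] using this

lemma nb_norm {n : ℕ} {a b : Fin 3 → ℤ} (h : Nb a b) : ‖pt n b - pt n a‖ ≤ 2 * dl n := by
  apply norm_le_two (dl_pos n).le
  intro i
  have h1 : (pt n b - pt n a) i = ((b i - a i : ℤ) : ℝ) * dl n := by simp [pt]; ring
  rw [h1, abs_mul, abs_of_pos (dl_pos n)]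
  have : |((b i - a i : ℤ) : ℝ)| ≤ 1 := by exact_mod_cast h i
  nlinarith [dl_pos n]

lemma nb_symm {a b : Fin 3 → ℤ} (h : Nb a b) : Nb b a := fun i => by
  rw [abs_sub_comm]; exact h i

lemma pt_succ (n : ℕ) (a : Fin 3 → ℤ) : pt (n+1) (fun i => 2 * a i) = pt n a := by
  unfold pt; congr 1; funext i; rw [dl_succ]; push_cast; ring

lemma fl_coord (n : ℕ) (x : E3) (i : Fin 3) : |pt n (fl n x) i - x i| ≤ dl n := by
  have h1 := Int.floor_le (x i * 2 ^ n)
  have h2 := Int.lt_floor_add_one (x i * 2 ^ n)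
  have hd := dl_pos n
  have h3 := dl_mul n
  have h4 : pt n (fl n x) i = (⌊x i * 2 ^ n⌋ : ℝ) * dl n := by simp [pt, fl]
  have h5 : x i = (x i * 2 ^ n) * dl n := by
    calc x i = x i * (dl n * 2 ^ n) := by rw [h3, mul_one]
      _ = _ := by ring
  rw [h4, h5, abs_le]
  rw [← h5]
  constructor <;> nlinarith

lemma fl_dist (n : ℕ) (x : E3) : ‖pt n (fl n x) - x‖ ≤ 2 * dl n :=
  norm_le_two (dl_pos n).le fun i => by simpa using fl_coord n x i

lemma fl_succ (n : ℕ) (x : E3) : Nb (fun i => 2 * fl n x i) (fl (n+1) x) := by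
  intro i
  simp only [fl]
  have h1 := Int.floor_le (x i * 2 ^ n)
  have h2 := Int.lt_floor_add_one (x i * 2 ^ n)
  have h3 := Int.floor_le (x i * 2 ^ (n+1))
  have h4 := Int.lt_floor_add_one (x i * 2 ^ (n+1))
  set u := ⌊x i * 2 ^ n⌋
  set w := ⌊x i * 2 ^ (n+1)⌋
  have e : x i * 2 ^ (n+1) = 2 * (x i * 2 ^ n) := by rw [pow_succ]; ring
  rw [e] at h3 h4
  have a1 : (w : ℝ) < ((2 * u + 2 : ℤ) : ℝ) := by push_cast; linarith
  have a2 : ((2 * u : ℤ) : ℝ) < ((w + 1 : ℤ) : ℝ) := by push_cast; linarith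
  have a1' : w < 2 * u + 2 := by exact_mod_cast a1
  have a2' : 2 * u < w + 1 := by exact_mod_cast a2
  rw [abs_le]; constructor <;> omega

lemma fl_near {n : ℕ} {x y : E3} (h : ‖y - x‖ ≤ dl n) : Nb (fl n x) (fl n y) := by
  intro i
  have hc : |y i - x i| ≤ dl n := le_trans (by simpa using abs_le_norm (y - x) i) h
  simp only [fl]
  have h1 := Int.floor_le (x i * 2 ^ n)
  have h2 := Int.lt_floor_add_one (x i * 2 ^ n)
  have h3 := Int.floor_le (y i * 2 ^ n)
  have h4 := Int.lt_floor_add_one (y i * 2 ^ n)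
  set u := ⌊x i * 2 ^ n⌋
  set w := ⌊y i * 2 ^ n⌋
  have hd := dl_mul n
  have hp : (0:ℝ) < 2 ^ n := by positivity
  rw [abs_le] at hc
  have c1 : y i * 2 ^ n - x i * 2 ^ n ≤ 1 := by nlinarith [hc.2]
  have c2 : -1 ≤ y i * 2 ^ n - x i * 2 ^ n := by nlinarith [hc.1]
  have a1 : (w : ℝ) < ((u + 2 : ℤ) : ℝ) := by push_cast; linarith
  have a2 : ((u : ℤ) : ℝ) < ((w + 2 : ℤ) : ℝ) := by push_cast; linarith
  have a1' : w < u + 2 := by exact_mod_cast a1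
  have a2' : u < w + 2 := by exact_mod_cast a2
  rw [abs_le]; constructor <;> omega

lemma fl_len (n : ℕ) (x y : E3) :
    ‖pt n (fl n y) - pt n (fl n x)‖ ≤ ‖y - x‖ + 4 * dl n := by
  have h1 := fl_dist n x
  have h2 := fl_dist n y
  have : pt n (fl n y) - pt n (fl n x) =
    (pt n (fl n y) - y) - (pt n (fl n x) - x) + (y - x) := by abel
  rw [this]
  calc _ ≤ ‖(pt n (fl n y) - y) - (pt n (fl n x) - x)‖ + ‖y - x‖ := norm_add_le _ _
    _ ≤ ‖pt n (fl n y) - y‖ + ‖pt n (fl n x) - x‖ + ‖y - x‖ := by gcongr; exact norm_sub_le _ _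
    _ ≤ _ := by linarith

/-- pathwise hypotheses -/
structure Good {V : Type*} [NormedAddCommGroup V] (f : E3 → E3 → V) (κ ρ β : ℝ) (N : ℕ) :
    Prop where
  h1 : ∀ n, N ≤ n → ∀ a b, Nb a b → ‖f (pt n a) (pt n b)‖ ≤ κ * dl n ^ β
  h2 : ∀ n, N ≤ n → ∀ a b c, Nb b c → ‖pt n b - pt n a‖ ≤ ρ + 6 * dl N →
    ‖f (pt n a) (pt n b) + f (pt n b) (pt n c) + f (pt n c) (pt n a)‖
      ≤ κ * ((‖pt n b - pt n a‖ + dl n) * dl n) ^ (β/2)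
  h3 : ∀ a b, ‖pt N b - pt N a‖ ≤ ρ + 6 * dl N →
    ‖f (pt N a) (pt N b)‖ ≤ κ * (‖pt N b - pt N a‖ + dl N) ^ β
  h4 : ∀ n, N ≤ n → ∀ a b, ‖pt n b - pt n a‖ ≤ ρ + 8 * dl N →
    f (pt n a) (pt n b) = - f (pt n b) (pt n a)

section det
variable {V : Type*} [NormedAddCommGroup V] {f : E3 → E3 → V} {κ ρ β : ℝ} {N : ℕ}

lemma dl_rpow_le {n : ℕ} (hβ : 0 < β) {L : ℝ} (hL : 0 ≤ L) :
    dl n ^ β ≤ ((L + dl n) * dl n) ^ (β/2) := by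
  have hd := dl_pos n
  calc dl n ^ β = (dl n * dl n) ^ (β/2) := by
        rw [Real.mul_rpow hd.le hd.le, ← Real.rpow_add hd]; congr 1; ring
    _ ≤ _ := by
      apply Real.rpow_le_rpow (by positivity) _ (by positivity)
      gcongr; linarith

lemma Good.half (hg : Good f κ ρ β N) (hκ : 0 ≤ κ) (hβ : 0 < β) {n : ℕ} (hn : N ≤ n)
    {a b c : Fin 3 → ℤ} (hb : Nb b c) (hL : ‖pt n b - pt n a‖ ≤ ρ + 6 * dl N) :
    ‖f (pt n a) (pt n c) - f (pt n a) (pt n b)‖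
      ≤ 2 * κ * ((‖pt n b - pt n a‖ + dl n) * dl n) ^ (β/2) := by
  have t := hg.h2 n hn a b c hb hL
  have s := hg.h1 n hn b c hb
  have hca : ‖pt n a - pt n c‖ ≤ ρ + 8 * dl N := by
    have e : pt n a - pt n c = -(pt n b - pt n a) - (pt n c - pt n b) := by abel
    rw [e]
    have := norm_sub_le (-(pt n b - pt n a)) (pt n c - pt n b)
    rw [norm_neg] at this
    have h2 := nb_norm (n := n) hb
    have h3 := dl_anti hn
    linarith
  have a4 := hg.h4 n hn c a hca
  rw [a4] at t
  have d := dl_rpow_le (n := n) hβ (norm_nonneg (pt n b - pt n a))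
  have e : f (pt n a) (pt n c) - f (pt n a) (pt n b) = f (pt n b) (pt n c) -
    (f (pt n a) (pt n b) + f (pt n b) (pt n c) + -f (pt n a) (pt n c)) := by abel
  rw [e]
  calc _ ≤ _ := norm_sub_le _ _
    _ ≤ κ * dl n ^ β + κ * ((‖pt n b - pt n a‖ + dl n) * dl n) ^ (β/2) := add_le_add s t
    _ ≤ κ * ((‖pt n b - pt n a‖ + dl n) * dl n) ^ (β/2) +
        κ * ((‖pt n b - pt n a‖ + dl n) * dl n) ^ (β/2) := by gcongr
    _ = _ := by ring

lemma Good.step (hg : Good f κ ρ β N) (hκ : 0 ≤ κ) (hβ : 0 < β) {n : ℕ} (hn : N ≤ n)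
    {a b a' b' : Fin 3 → ℤ} (ha : Nb a a') (hb : Nb b b')
    (hL : ‖pt n b - pt n a‖ ≤ ρ + 4 * dl N) :
    ‖f (pt n a') (pt n b') - f (pt n a) (pt n b)‖
      ≤ 4 * κ * ((‖pt n b - pt n a‖ + 3 * dl n) * dl n) ^ (β/2) := by
  have hd := dl_pos n
  have hdN := dl_pos N
  have hnN := dl_anti hn
  have h1 := hg.half hκ hβ hn hb (a := a) (by linarith)
  have l1 : ‖pt n a - pt n b'‖ ≤ ‖pt n b - pt n a‖ + 2 * dl n := by
    have e : pt n a - pt n b' = -(pt n b - pt n a) - (pt n b' - pt n b) := by abel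
    rw [e]
    have := norm_sub_le (-(pt n b - pt n a)) (pt n b' - pt n b)
    rw [norm_neg] at this
    have h2 := nb_norm (n := n) hb
    linarith
  have l2 : ‖pt n a' - pt n b'‖ ≤ ‖pt n b - pt n a‖ + 4 * dl n := by
    have e : pt n a' - pt n b' = (pt n a - pt n b') + (pt n a' - pt n a) := by abel
    rw [e]
    have := norm_add_le (pt n a - pt n b') (pt n a' - pt n a)
    have h2 := nb_norm (n := n) ha
    linarith
  have h2 := hg.half hκ hβ hn ha (a := b') (by linarith)
  rw [hg.h4 n hn b' a' (by linarith), hg.h4 n hn b' a (by linarith)] at h2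
  have e : f (pt n a') (pt n b') - f (pt n a) (pt n b) =
    -(-f (pt n a') (pt n b') - -f (pt n a) (pt n b')) +
    (f (pt n a) (pt n b') - f (pt n a) (pt n b)) := by abel
  rw [e]
  refine (norm_add_le _ _).trans ?_
  rw [norm_neg]
  have m1 : ((‖pt n b - pt n a‖ + dl n) * dl n) ^ (β/2) ≤
      ((‖pt n b - pt n a‖ + 3 * dl n) * dl n) ^ (β/2) := by
    apply Real.rpow_le_rpow (by positivity) _ (by positivity)
    gcongr; linarith
  have m2 : ((‖pt n a - pt n b'‖ + dl n) * dl n) ^ (β/2) ≤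
      ((‖pt n b - pt n a‖ + 3 * dl n) * dl n) ^ (β/2) := by
    apply Real.rpow_le_rpow (by positivity) _ (by positivity)
    gcongr ?_ * _; linarith
  calc _ ≤ _ := add_le_add h2 h1
    _ ≤ 2 * κ * ((‖pt n b - pt n a‖ + 3 * dl n) * dl n) ^ (β/2) +
      2 * κ * ((‖pt n b - pt n a‖ + 3 * dl n) * dl n) ^ (β/2) := by gcongr
    _ = _ := by ring

def uu (f : E3 → E3 → V) (x y : E3) (n : ℕ) : V := f (pt n (fl n x)) (pt n (fl n y))

lemma Good.chain (hg : Good f κ ρ β N) (hκ : 0 ≤ κ) (hβ : 0 < β) {n : ℕ} (hn : N ≤ n)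
    {x y : E3} (h : ‖y - x‖ ≤ ρ) :
    ‖uu f x y (n+1) - uu f x y n‖ ≤ 4 * κ * ((‖y - x‖ + 6 * dl n) * dl n) ^ (β/2) := by
  have hd := dl_pos n
  have l := fl_len n x y
  have hnN := dl_anti hn
  have := hg.step hκ hβ (n := n+1) (by omega) (fl_succ n x) (fl_succ n y)
    (by rw [pt_succ, pt_succ]; linarith)
  rw [pt_succ, pt_succ] at this
  refine this.trans ?_
  rw [dl_succ]
  gcongr ?_ * ?_
  apply Real.rpow_le_rpow (by positivity) _ (by positivity)
  gcongr ?_ * ?_ <;> linarith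

def GG (β : ℝ) : ℝ := 1 / (1 - (1/2 : ℝ) ^ (β/2))

lemma half_lt {β : ℝ} (hβ : 0 < β) : (1/2 : ℝ) ^ (β/2) < 1 :=
  Real.rpow_lt_one (by norm_num) (by norm_num) (by positivity)

lemma GG_pos {β : ℝ} (hβ : 0 < β) : 0 < GG β := by
  have := half_lt hβ
  unfold GG; apply one_div_pos.2; linarith

lemma Good.geo (hg : Good f κ ρ β N) (hκ : 0 ≤ κ) (hβ : 0 < β) {m : ℕ} (hm : N ≤ m)
    {x y : E3} (h : ‖y - x‖ ≤ ρ) (k : ℕ) :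
    dist (uu f x y (m + k)) (uu f x y (m + (k + 1))) ≤
      4 * κ * ((‖y - x‖ + 6 * dl m) * dl m) ^ (β/2) * ((1/2 : ℝ) ^ (β/2)) ^ k := by
  rw [dist_comm, dist_eq_norm]
  refine (hg.chain hκ hβ (n := m + k) (by omega) h).trans ?_
  have hd := dl_pos m
  have hk := dl_pos k
  have hmk := dl_pos (m + k)
  have e : dl (m + k) = dl m * dl k := by unfold dl; rw [pow_add]
  have e2 : ((1/2 : ℝ) ^ (β/2)) ^ k = dl k ^ (β/2) := by
    unfold dl; rw [← Real.rpow_natCast, ← Real.rpow_mul (by norm_num), mul_comm,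
      Real.rpow_mul (by norm_num), Real.rpow_natCast]
  rw [e2, mul_assoc (4 * κ), ← Real.mul_rpow (by positivity) hk.le]
  gcongr ?_ * ?_
  apply Real.rpow_le_rpow (by positivity) _ (by positivity)
  rw [mul_assoc, ← e]
  gcongr ?_ * _
  have := dl_anti (show m ≤ m + k by omega)
  linarith

lemma Good.cauchy (hg : Good f κ ρ β N) (hκ : 0 ≤ κ) (hβ : 0 < β) {x y : E3}
    (h : ‖y - x‖ ≤ ρ) [CompleteSpace V] : ∃ v, Tendsto (uu f x y) atTop (𝓝 v) := by
  have hc : CauchySeq (fun k => uu f x y (N + k)) :=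
    cauchySeq_of_le_geometric _ _ (half_lt hβ) (fun k => hg.geo hκ hβ le_rfl h k)
  obtain ⟨v, hv⟩ := cauchySeq_tendsto_of_complete hc
  refine ⟨v, ?_⟩
  rw [← tendsto_add_atTop_iff_nat N]
  simpa [add_comm] using hv

lemma Good.err (hg : Good f κ ρ β N) (hκ : 0 ≤ κ) (hβ : 0 < β) {x y : E3}
    (h : ‖y - x‖ ≤ ρ) {v : V} (hv : Tendsto (uu f x y) atTop (𝓝 v)) {m : ℕ} (hm : N ≤ m) :
    ‖uu f x y m - v‖ ≤ 4 * κ * ((‖y - x‖ + 6 * dl m) * dl m) ^ (β/2) * GG β := by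
  have hv' : Tendsto (fun k => uu f x y (m + k)) atTop (𝓝 v) := by
    have := (tendsto_add_atTop_iff_nat m).2 hv
    simpa [add_comm] using this
  have := dist_le_of_le_geometric_of_tendsto _ _ (half_lt hβ)
    (fun k => hg.geo hκ hβ hm h k) hv' 0
  rw [dist_eq_norm] at this
  simpa [GG, div_eq_mul_inv] using this

/-- limit process -/
def ft (f : E3 → E3 → V) (x y : E3) : V := limUnder atTop (uu f x y)

lemma Good.ft_tendsto [CompleteSpace V] (hg : Good f κ ρ β N) (hκ : 0 ≤ κ) (hβ : 0 < β)
    {x y : E3} (h : ‖y - x‖ ≤ ρ) : Tendsto (uu f x y) atTop (𝓝 (ft f x y)) :=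
  tendsto_nhds_limUnder (hg.cauchy hκ hβ h)

lemma sq_rpow {t β : ℝ} (ht : 0 ≤ t) : (t * t) ^ (β/2) = t ^ β := by
  rw [Real.mul_rpow ht ht, ← sq, ← Real.rpow_natCast, ← Real.rpow_mul ht]; congr 1
  push_cast; ring

lemma Good.bound [CompleteSpace V] (hg : Good f κ ρ β N) (hκ : 0 ≤ κ) (hβ : 0 < β)
    (hβ1 : β ≤ 1) (hρ : ρ ≤ 1)
    {x y : E3} (h : ‖y - x‖ ≤ ρ) (h0 : 0 < ‖y - x‖) :
    ‖ft f x y‖ ≤ κ * (14 * (1 + 4 * GG β)) * ‖y - x‖ ^ β := by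
  have hG := GG_pos hβ
  set L := ‖y - x‖ with hLdef
  have c14 : (14:ℝ) ^ β ≤ 14 := by
    calc (14:ℝ) ^ β ≤ 14 ^ (1:ℝ) := Real.rpow_le_rpow_of_exponent_le (by norm_num) hβ1
      _ = 14 := by simp
  -- main: there is a level
  suffices H : ∃ m, N ≤ m ∧ dl m ≤ 2 * L ∧ ‖uu f x y m‖ ≤ κ * (14 * L) ^ β by
    obtain ⟨m, hm, hdm, hu⟩ := H
    have e := hg.err hκ hβ h (hg.ft_tendsto hκ hβ h) hm
    have hd := dl_pos m
    have : ((L + 6 * dl m) * dl m) ^ (β/2) ≤ (14 * L) ^ β := by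
      rw [← sq_rpow (t := 14 * L) (by positivity)]
      apply Real.rpow_le_rpow (by positivity) _ (by positivity)
      apply mul_le_mul <;> first | positivity | linarith
    have t : ‖ft f x y‖ ≤ ‖uu f x y m‖ + ‖uu f x y m - ft f x y‖ := by
      have := norm_sub_le (uu f x y m) (uu f x y m - ft f x y)
      simpa using this
    calc ‖ft f x y‖ ≤ κ * (14 * L) ^ β + 4 * κ * ((L + 6 * dl m) * dl m) ^ (β/2) * GG β := by
          linarith
      _ ≤ κ * (14 * L) ^ β + 4 * κ * (14 * L) ^ β * GG β := by gcongr
      _ = κ * (14 ^ β * (1 + 4 * GG β)) * L ^ β := by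
          rw [Real.mul_rpow (by norm_num) h0.le]; ring
      _ ≤ _ := by gcongr
  by_cases hc : L ≤ dl N
  · obtain ⟨m, hm1, hm2⟩ := exists_nat_pow_near_of_lt_one h0 (h.trans hρ)
      (show (0:ℝ) < 1/2 by norm_num) (by norm_num)
    change dl (m+1) < L at hm1
    change L ≤ dl m at hm2
    have hd := dl_pos m
    rcases le_total N m with hNm | hNm
    · refine ⟨m, hNm, by rw [dl_succ] at hm1; linarith, ?_⟩
      refine (hg.h1 m hNm _ _ (fl_near hm2)).trans ?_
      rw [dl_succ] at hm1
      gcongr; linarith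
    · -- level N works
      rcases eq_or_lt_of_le hNm with rfl | hlt
      · refine ⟨m, le_rfl, by rw [dl_succ] at hm1; linarith, ?_⟩
        refine (hg.h1 m le_rfl _ _ (fl_near hm2)).trans ?_
        rw [dl_succ] at hm1
        gcongr; linarith
      · exfalso
        have := dl_anti (show m + 1 ≤ N by omega)
        linarith
  · push Not at hc
    have hd := dl_pos N
    refine ⟨N, le_rfl, by linarith, ?_⟩
    have l := fl_len N x y
    refine (hg.h3 _ _ (by linarith)).trans ?_
    gcongr; linarith

lemma Good.cont [CompleteSpace V] (hg : Good f κ ρ β N) (hκ : 0 ≤ κ) (hβ : 0 < β)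
    (hρ : ρ ≤ 1) :
    ContinuousOn (fun q : E3 × E3 => ft f q.1 q.2) {q | ‖q.2 - q.1‖ < ρ} := by
  have hG := GG_pos hβ
  intro q hq
  apply ContinuousAt.continuousWithinAt
  rw [Metric.continuousAt_iff]
  intro ε hε
  set K := 4 * κ * (8:ℝ) ^ (β/2) * (1 + 2 * GG β) with hK
  have hK0 : 0 ≤ K := by positivity
  have lim : Tendsto (fun m : ℕ => K * ((1/2:ℝ) ^ (β/2)) ^ m) atTop (𝓝 0) := by
    have := (tendsto_pow_atTop_nhds_zero_of_lt_one (by positivity) (half_lt hβ)).const_mul K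
    simpa using this
  obtain ⟨m, hm1, hm2⟩ := ((lim.eventually (gt_mem_nhds hε)).and (eventually_ge_atTop N)).exists
  have hd := dl_pos m
  have hd1 := dl_le_one m
  have hq' : ‖q.2 - q.1‖ < ρ := hq
  refine ⟨min (dl m) ((ρ - ‖q.2 - q.1‖) / 2), lt_min hd (by linarith), ?_⟩
  intro q' hd'
  rw [lt_min_iff] at hd'
  have d1 : ‖q'.1 - q.1‖ ≤ dist q' q := by rw [← dist_eq_norm]; exact le_max_left _ _
  have d2 : ‖q'.2 - q.2‖ ≤ dist q' q := by rw [← dist_eq_norm]; exact le_max_right _ _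
  have hL' : ‖q'.2 - q'.1‖ ≤ ρ := by
    have e : q'.2 - q'.1 = (q'.2 - q.2) - (q'.1 - q.1) + (q.2 - q.1) := by abel
    rw [e]
    have i1 := norm_add_le ((q'.2 - q.2) - (q'.1 - q.1)) (q.2 - q.1)
    have i2 := norm_sub_le (q'.2 - q.2) (q'.1 - q.1)
    linarith [hd'.2]
  have e1 := hg.err hκ hβ hq'.le (hg.ft_tendsto hκ hβ hq'.le) hm2
  have e2 := hg.err hκ hβ hL' (hg.ft_tendsto hκ hβ hL') hm2
  have l := fl_len m q.1 q.2
  have hmN := dl_anti hm2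
  have e3 := hg.step hκ hβ hm2 (fl_near (n := m) (d1.trans hd'.1.le))
    (fl_near (n := m) (d2.trans hd'.1.le)) (by linarith)
  have em : ((1/2 : ℝ) ^ (β/2)) ^ m = dl m ^ (β/2) := by
    unfold dl; rw [← Real.rpow_natCast, ← Real.rpow_mul (by norm_num), mul_comm,
      Real.rpow_mul (by norm_num), Real.rpow_natCast]
  have b : ∀ t : ℝ, 0 ≤ t → t ≤ 8 → (t * dl m) ^ (β/2) ≤ 8 ^ (β/2) * dl m ^ (β/2) := by
    intro t ht ht'
    rw [← Real.mul_rpow (by norm_num) hd.le]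
    apply Real.rpow_le_rpow (by positivity) _ (by positivity)
    gcongr
  have b1 := b (‖q.2 - q.1‖ + 6 * dl m) (by positivity) (by linarith)
  have b2 := b (‖q'.2 - q'.1‖ + 6 * dl m) (by positivity) (by linarith)
  have b3 := b (‖pt m (fl m q.2) - pt m (fl m q.1)‖ + 3 * dl m) (by positivity) ?_
  swap
  · -- crude
    nlinarith
  rw [dist_eq_norm]
  have t : ‖ft f q'.1 q'.2 - ft f q.1 q.2‖ ≤ ‖uu f q'.1 q'.2 m - ft f q'.1 q'.2‖ +
      ‖uu f q'.1 q'.2 m - uu f q.1 q.2 m‖ + ‖uu f q.1 q.2 m - ft f q.1 q.2‖ := by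
    have e : ft f q'.1 q'.2 - ft f q.1 q.2 = -(uu f q'.1 q'.2 m - ft f q'.1 q'.2) +
      (uu f q'.1 q'.2 m - uu f q.1 q.2 m) + (uu f q.1 q.2 m - ft f q.1 q.2) := by abel
    rw [e]
    refine (norm_add_le _ _).trans ?_
    gcongr
    refine (norm_add_le _ _).trans ?_
    rw [norm_neg]
  rw [em] at hm1
  refine lt_of_le_of_lt ?_ hm1
  set X := (8:ℝ) ^ (β/2) * dl m ^ (β/2)
  have eK : K * dl m ^ (β/2) = 4 * κ * X * GG β + 4 * κ * X + 4 * κ * X * GG β := by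
    rw [hK]; ring
  rw [eK]
  refine t.trans ?_
  have f1 : 4 * κ * ((‖q.2 - q.1‖ + 6 * dl m) * dl m) ^ (β/2) * GG β ≤ 4 * κ * X * GG β := by
    gcongr
  have f2 : 4 * κ * ((‖q'.2 - q'.1‖ + 6 * dl m) * dl m) ^ (β/2) * GG β ≤ 4 * κ * X * GG β := by
    gcongr
  have f3 : 4 * κ * ((‖pt m (fl m q.2) - pt m (fl m q.1)‖ + 3 * dl m) * dl m) ^ (β/2) ≤
      4 * κ * X := by gcongr
  have e3' : ‖uu f q'.1 q'.2 m - uu f q.1 q.2 m‖ ≤ _ := e3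
  linarith

end det


lemma pt_shift (n : ℕ) (a k : Fin 3 → ℤ) :
    pt n (fun i => a i + 2 ^ n * k i) = pt n a + pt 0 k := by
  ext i
  have := dl_mul n
  simp only [pt, PiLp.add_apply]
  push_cast
  have h0 : dl 0 = 1 := by simp [dl]
  rw [h0]
  linear_combination (k i : ℝ) * this

lemma fl_shift (n : ℕ) (x : E3) (k : Fin 3 → ℤ) :
    fl n (x + pt 0 k) = fun i => fl n x i + 2 ^ n * k i := by
  funext i
  simp only [fl, pt, PiLp.add_apply]
  have h0 : dl 0 = 1 := by simp [dl]
  rw [h0, ← Int.floor_add_intCast]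
  congr 1; push_cast; ring

lemma ft_per {V : Type*} [NormedAddCommGroup V] {f : E3 → E3 → V}
    (hf : ∀ k x y, f (x + pt 0 k) (y + pt 0 k) = f x y) (k : Fin 3 → ℤ) (x y : E3) :
    ft f (x + pt 0 k) (y + pt 0 k) = ft f x y := by
  have : uu f (x + pt 0 k) (y + pt 0 k) = uu f x y := by
    funext n
    simp only [uu, fl_shift, pt_shift, hf]
  simp only [ft, this]

def Cu (n : ℕ) : Finset (Fin 3 → ℤ) := Fintype.piFinset fun _ => Finset.Ico 0 (2 ^ n)
def Bx (n : ℕ) : Finset (Fin 3 → ℤ) := Fintype.piFinset fun _ => Finset.Icc (-(2 ^ n)) (2 ^ n)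

lemma card_Cu (n : ℕ) : ((Cu n).card : ℝ) = 1 / dl n ^ 3 := by
  have : (Cu n).card = (2 ^ n) ^ 3 := by
    simp [Cu, Fintype.card_piFinset]
    norm_cast
  rw [this]; push_cast; rw [two_pow_dl]; simp

lemma card_Bx (n : ℕ) : ((Bx n).card : ℝ) ≤ 27 / dl n ^ 3 := by
  have : (Bx n).card ≤ (3 * 2 ^ n) ^ 3 := by
    simp only [Bx, Fintype.card_piFinset, Int.card_Icc, Finset.prod_const, Finset.card_univ,
      Fintype.card_fin]
    apply Nat.pow_le_pow_left
    have : 1 ≤ 2 ^ n := Nat.one_le_two_pow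
    have e : ((2 ^ n : ℕ) : ℤ) = (2:ℤ) ^ n := by push_cast; rfl
    rw [← e]; omega
  calc ((Bx n).card : ℝ) ≤ (((3 * 2 ^ n) ^ 3 : ℕ) : ℝ) := by exact_mod_cast this
    _ = (3 * 2 ^ n) ^ 3 := by push_cast; rfl
    _ = _ := by rw [two_pow_dl, mul_pow, div_pow]; norm_num; ring

lemma card_B0 : ((Bx 0).card : ℝ) ≤ 27 := by
  have := card_Bx 0
  simpa [dl] using this

lemma exists_rep (n : ℕ) (a : Fin 3 → ℤ) :
    ∃ a' ∈ Cu n, ∃ k : Fin 3 → ℤ, a = fun i => a' i + 2 ^ n * k i := by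
  refine ⟨fun i => a i % 2 ^ n, ?_, fun i => a i / 2 ^ n, ?_⟩
  · simp only [Cu, Fintype.mem_piFinset, Finset.mem_Ico]
    intro i
    exact ⟨Int.emod_nonneg _ (by positivity), Int.emod_lt_of_pos _ (by positivity)⟩
  · funext i; exact (Int.emod_add_mul_ediv _ _).symm

lemma mem_B0 {a b : Fin 3 → ℤ} (h : Nb a b) : b - a ∈ Bx 0 := by
  simp only [Bx, Fintype.mem_piFinset, Finset.mem_Icc]
  intro i
  have := abs_le.1 (h i)
  simpa using this

lemma pt_sub (n : ℕ) (a b : Fin 3 → ℤ) : pt n (b - a) = pt n b - pt n a := by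
  ext i; simp [pt]; ring

lemma pt_add (n : ℕ) (a b : Fin 3 → ℤ) : pt n (b + a) = pt n b + pt n a := by
  ext i; simp [pt]; ring

lemma mem_Bx {n : ℕ} {j : Fin 3 → ℤ} (h : ‖pt n j‖ ≤ 1) : j ∈ Bx n := by
  simp only [Bx, Fintype.mem_piFinset, Finset.mem_Icc]
  intro i
  have h1 := (abs_le_norm (pt n j) i).trans h
  have h2 : pt n j i = (j i : ℝ) * dl n := rfl
  have hd := dl_pos n
  have hm := dl_mul n
  have hp : (0:ℝ) < 2 ^ n := by positivity
  rw [h2, abs_le] at h1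
  have e : (j i : ℝ) = (j i * dl n) * 2 ^ n := by
    rw [mul_assoc, hm, mul_one]
  constructor
  · have : ((-(2 ^ n) : ℤ) : ℝ) ≤ (j i : ℝ) := by
      push_cast; rw [e]; nlinarith [h1.1]
    exact_mod_cast this
  · have : (j i : ℝ) ≤ ((2 ^ n : ℤ) : ℝ) := by
      push_cast; rw [e]; nlinarith [h1.2]
    exact_mod_cast this

lemma B0_nb {e : Fin 3 → ℤ} (h : e ∈ Bx 0) (a : Fin 3 → ℤ) : Nb a (a + e) := by
  simp only [Bx, Fintype.mem_piFinset, Finset.mem_Icc] at h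
  intro i
  have := h i
  rw [abs_le]; simpa using this

structure Proc {Ω : Type*} [MeasurableSpace Ω] (P : Measure Ω)
    {V : Type*} [NormedAddCommGroup V] [MeasurableSpace V]
    (F : E3 → E3 → Ω → V) (p α r s M : ℝ) : Prop where
  m : ∀ x y, ‖y - x‖ ≤ 1/4 → Measurable (F x y)
  seg : ∀ x y, ‖y - x‖ < r → ‖y - x‖ ≤ 1/4 →
    ∫⁻ ω, ENNReal.ofReal ‖F x y ω‖ ^ p ∂P ≤ ENNReal.ofReal (M * ‖y - x‖ ^ (p * α))
  tri : ∀ x y z, ‖y - x‖ ≤ 1/4 → ‖z - x‖ ≤ 1/4 → ‖z - y‖ ≤ 1/4 → ‖y - x‖ * ‖z - y‖ < s →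
    ∫⁻ ω, ENNReal.ofReal ‖F x y ω + F y z ω + F z x ω‖ ^ p ∂P ≤
      ENNReal.ofReal (M * (‖y - x‖ * ‖z - y‖) ^ (p * α / 2))
  per : ∀ k x y ω, F (x + pt 0 k) (y + pt 0 k) ω = F x y ω

set_option linter.unusedSectionVars false
section gen
variable {Ω : Type*} [MeasurableSpace Ω] {P : Measure Ω}
    {V : Type*} [NormedAddCommGroup V] [MeasurableSpace V] [OpensMeasurableSpace V]

lemma wt_meas {X : Ω → V} (hX : Measurable X) (p w : ℝ) :
    Measurable fun ω => ENNReal.ofReal (‖X ω‖ / w) ^ p :=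
  ((hX.norm.div_const w).ennreal_ofReal).pow_const p

lemma wt_int {X : Ω → V} (hX : Measurable X) {p w B : ℝ} (hp : 0 < p) (hw : 0 < w)
    (h : ∫⁻ ω, ENNReal.ofReal ‖X ω‖ ^ p ∂P ≤ ENNReal.ofReal B) :
    ∫⁻ ω, ENNReal.ofReal (‖X ω‖ / w) ^ p ∂P ≤ ENNReal.ofReal (B / w ^ p) := by
  have e : ∀ ω, ENNReal.ofReal (‖X ω‖ / w) ^ p =
      ENNReal.ofReal ‖X ω‖ ^ p * ENNReal.ofReal ((w ^ p)⁻¹) := by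
    intro ω
    rw [ENNReal.ofReal_rpow_of_nonneg (by positivity) hp.le,
      ENNReal.ofReal_rpow_of_nonneg (by positivity) hp.le,
      ← ENNReal.ofReal_mul (by positivity), Real.div_rpow (by positivity) hw.le]
    rfl
  simp_rw [e]
  rw [lintegral_mul_const _ ((hX.norm.ennreal_ofReal).pow_const p)]
  calc _ ≤ ENNReal.ofReal B * ENNReal.ofReal ((w ^ p)⁻¹) := by gcongr
    _ = _ := by rw [← ENNReal.ofReal_mul' (by positivity)]; rfl

lemma wt_pt {X : V} {p w : ℝ} {S : ℝ≥0∞} (hp : 0 < p) (hw : 0 < w) (hS : S ≠ ⊤)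
    (h : ENNReal.ofReal (‖X‖ / w) ^ p ≤ S) : ‖X‖ ≤ S.toReal ^ (1/p) * w := by
  rw [ENNReal.ofReal_rpow_of_nonneg (by positivity) hp.le, ENNReal.ofReal_le_iff_le_toReal hS] at h
  have h2 := Real.rpow_le_rpow (by positivity) h (show 0 ≤ 1/p by positivity)
  rw [← Real.rpow_mul (by positivity), mul_one_div_cancel hp.ne', Real.rpow_one] at h2
  rwa [div_le_iff₀ hw] at h2

lemma ae_zero {X : Ω → V} (hX : Measurable X) {p : ℝ} (hp : 0 < p)
    (h : ∫⁻ ω, ENNReal.ofReal ‖X ω‖ ^ p ∂P ≤ 0) : ∀ᵐ ω ∂P, X ω = 0 := by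
  have h0 := le_antisymm h bot_le
  rw [lintegral_eq_zero_iff
    ((hX.norm.ennreal_ofReal).pow_const p)] at h0
  filter_upwards [h0] with ω hω
  simp [ENNReal.rpow_eq_zero_iff, hp, not_lt.2 hp.le] at hω
  exact hω

/-- Moments decaying geometrically force a.s. convergence to zero. -/
lemma ae_tendsto {X : ℕ → Ω → V} (hX : ∀ n, Measurable (X n)) {p : ℝ} (hp : 0 < p) {C θ : ℝ}
    (hC : 0 ≤ C) (hθ : 0 ≤ θ) (hθ1 : θ < 1)
    (h : ∀ n, ∫⁻ ω, ENNReal.ofReal ‖X n ω‖ ^ p ∂P ≤ ENNReal.ofReal (C * θ ^ n)) :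
    ∀ᵐ ω ∂P, Tendsto (fun n => X n ω) atTop (𝓝 0) := by
  have hm : ∀ n, Measurable fun ω => ENNReal.ofReal ‖X n ω‖ ^ p := fun n =>
    ((hX n).norm.ennreal_ofReal).pow_const p
  have hfin : ∫⁻ ω, ∑' n, ENNReal.ofReal ‖X n ω‖ ^ p ∂P ≠ ⊤ := by
    rw [lintegral_tsum fun n => (hm n).aemeasurable]
    refine ne_top_of_le_ne_top ?_ (ENNReal.tsum_le_tsum h)
    rw [← ENNReal.ofReal_tsum_of_nonneg (fun n => by positivity)
      ((summable_geometric_of_lt_one hθ hθ1).mul_left C)]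
    exact ENNReal.ofReal_ne_top
  filter_upwards [ae_lt_top (Measurable.tsum hm) hfin] with ω hω
  have ht := ENNReal.tendsto_atTop_zero_of_tsum_ne_top hω.ne
  have h2 : Tendsto (fun n => (ENNReal.ofReal ‖X n ω‖ ^ p) ^ (1/p)) atTop (𝓝 (0 ^ (1/p))) :=
    ht.ennrpow_const _
  rw [ENNReal.zero_rpow_of_pos (by positivity)] at h2
  have h3 : Tendsto (fun n => ENNReal.ofReal ‖X n ω‖) atTop (𝓝 0) := by
    refine h2.congr fun n => ?_
    rw [← ENNReal.rpow_mul, mul_one_div_cancel hp.ne', ENNReal.rpow_one]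
  rw [tendsto_zero_iff_norm_tendsto_zero]
  have h4 := (ENNReal.tendsto_toReal ENNReal.zero_ne_top).comp h3
  simpa [Function.comp_def] using h4

end gen


lemma rb1 {p α β d l : ℝ} (hp : 0 < p) (hα : 0 < α) (hα1 : α ≤ 1)
    (hγ : 24 < p * (α - β)) (hd : 0 < d) (hd1 : d ≤ 1) (hl : 0 ≤ l) (hl2 : l ≤ 2 * d) :
    l ^ (p * α) / (d ^ β) ^ p ≤ 2 ^ p * d ^ 24 := by
  rw [div_le_iff₀ (by positivity), ← Real.rpow_mul hd.le]
  have h1 : l ^ (p * α) ≤ (2 * d) ^ (p * α) := Real.rpow_le_rpow hl hl2 (by positivity)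
  rw [Real.mul_rpow (by norm_num) hd.le] at h1
  have h2 : (2:ℝ) ^ (p * α) ≤ 2 ^ p :=
    Real.rpow_le_rpow_of_exponent_le (by norm_num) (by nlinarith)
  have h3 : d ^ (p * α) ≤ d ^ 24 * d ^ (β * p) := by
    rw [← Real.rpow_natCast, ← Real.rpow_add hd]
    apply Real.rpow_le_rpow_of_exponent_ge hd hd1
    push_cast; nlinarith
  calc l ^ (p * α) ≤ 2 ^ (p * α) * d ^ (p * α) := h1
    _ ≤ 2 ^ p * (d ^ 24 * d ^ (β * p)) := by gcongr
    _ = _ := by ring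

lemma rb2 {p α β d L l : ℝ} (hp : 0 < p) (hα : 0 < α) (hα1 : α ≤ 1)
    (hγ : 24 < p * (α - β)) (hd : 0 < d) (hL : 0 ≤ L) (hLd : L + d ≤ 1)
    (hl : 0 ≤ l) (hl2 : l ≤ 2 * d) :
    (L * l) ^ (p * α / 2) / (((L + d) * d) ^ (β/2)) ^ p ≤ 2 ^ p * d ^ 12 := by
  have hY : 0 < (L + d) * d := by positivity
  have hYd : (L + d) * d ≤ d := by nlinarith
  have hY1 : (L + d) * d ≤ 1 := by nlinarith
  set Y := (L + d) * d with hYdef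
  rw [div_le_iff₀ (by positivity), ← Real.rpow_mul hY.le]
  have h1 : (L * l) ^ (p * α / 2) ≤ (2 * Y) ^ (p * α / 2) := by
    apply Real.rpow_le_rpow (by positivity) _ (by positivity)
    rw [hYdef]; nlinarith
  rw [Real.mul_rpow (by norm_num) hY.le] at h1
  have h2 : (2:ℝ) ^ (p * α / 2) ≤ 2 ^ p :=
    Real.rpow_le_rpow_of_exponent_le (by norm_num) (by nlinarith)
  have h3 : Y ^ (p * α / 2) ≤ Y ^ 12 * Y ^ (β / 2 * p) := by
    rw [← Real.rpow_natCast, ← Real.rpow_add hY]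
    apply Real.rpow_le_rpow_of_exponent_ge hY hY1
    push_cast; nlinarith
  calc (L * l) ^ (p * α / 2) ≤ 2 ^ (p * α / 2) * Y ^ (p * α / 2) := h1
    _ ≤ 2 ^ p * (Y ^ 12 * Y ^ (β / 2 * p)) := by gcongr
    _ ≤ 2 ^ p * (d ^ 12 * Y ^ (β / 2 * p)) := by gcongr
    _ = _ := by ring

lemma rb4 {p α β d L r : ℝ} (hp : 0 < p) (hα : 0 < α)
    (hγ : 24 < p * (α - β)) (hd : 0 < d) (hL : 0 ≤ L) (hr : L + d ≤ r) :
    L ^ (p * α) / ((L + d) ^ β) ^ p ≤ r ^ (p * (α - β)) := by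
  have hY : 0 < L + d := by positivity
  rw [div_le_iff₀ (by positivity), ← Real.rpow_mul hY.le]
  calc L ^ (p * α) ≤ (L + d) ^ (p * α) := Real.rpow_le_rpow hL (by linarith) (by positivity)
    _ = (L + d) ^ (p * (α - β)) * (L + d) ^ (β * p) := by
      rw [← Real.rpow_add hY]; congr 1; ring
    _ ≤ _ := by gcongr

set_option linter.unusedSectionVars false
section sums
variable {Ω : Type*} [MeasurableSpace Ω] {P : Measure Ω}

lemma int_sum_le {ι : Type*} (t : Finset ι) (f : ι → Ω → ℝ≥0∞) {B c : ℝ} (hB : 0 ≤ B)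
    (hc : (t.card : ℝ) ≤ c) (hm : ∀ i ∈ t, Measurable (f i))
    (h : ∀ i ∈ t, ∫⁻ ω, f i ω ∂P ≤ ENNReal.ofReal B) :
    ∫⁻ ω, ∑ i ∈ t, f i ω ∂P ≤ ENNReal.ofReal (c * B) := by
  rw [lintegral_finsetSum t hm]
  calc ∑ i ∈ t, ∫⁻ ω, f i ω ∂P ≤ ∑ i ∈ t, ENNReal.ofReal B := Finset.sum_le_sum h
    _ = ENNReal.ofReal (t.card * B) := by
      rw [Finset.sum_const, nsmul_eq_mul, ENNReal.ofReal_mul (by positivity)]; simp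
    _ ≤ _ := by gcongr

variable {V : Type*} [NormedAddCommGroup V] [MeasurableSpace V]

def T1 (F : E3 → E3 → Ω → V) (p β : ℝ) (n : ℕ) (ω : Ω) : ℝ≥0∞ :=
  ∑ a ∈ Cu n, ∑ e ∈ Bx 0, ENNReal.ofReal (‖F (pt n a) (pt n (a + e)) ω‖ / dl n ^ β) ^ p

def T2 (F : E3 → E3 → Ω → V) (p β R : ℝ) (n : ℕ) (ω : Ω) : ℝ≥0∞ :=
  ∑ a ∈ Cu n, ∑ j ∈ (Bx n).filter (fun j => ‖pt n j‖ ≤ R), ∑ e ∈ Bx 0,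
    ENNReal.ofReal (‖F (pt n a) (pt n (a + j)) ω + F (pt n (a + j)) (pt n (a + j + e)) ω
      + F (pt n (a + j + e)) (pt n a) ω‖ / ((‖pt n j‖ + dl n) * dl n) ^ (β/2)) ^ p

def T4 (F : E3 → E3 → Ω → V) (p β R : ℝ) (n : ℕ) (ω : Ω) : ℝ≥0∞ :=
  ∑ a ∈ Cu n, ∑ j ∈ (Bx n).filter (fun j => ‖pt n j‖ ≤ R),
    ENNReal.ofReal (‖F (pt n a) (pt n (a + j)) ω‖ / (‖pt n j‖ + dl n) ^ β) ^ p

def SS (F : E3 → E3 → Ω → V) (p β R : ℝ) (N : ℕ) (ω : Ω) : ℝ≥0∞ :=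
  (∑' k, (T1 F p β (N + k) ω + T2 F p β R (N + k) ω)) + T4 F p β R N ω

variable [BorelSpace V] [SecondCountableTopology V]
variable {F : E3 → E3 → Ω → V} {p α β r s M R : ℝ} {N : ℕ}

lemma len1 {n : ℕ} {e : Fin 3 → ℤ} (he : e ∈ Bx 0) (a : Fin 3 → ℤ) :
    ‖pt n (a + e) - pt n a‖ ≤ 2 * dl n := nb_norm (B0_nb he a)

lemma len2 {n : ℕ} (j a : Fin 3 → ℤ) : ‖pt n (a + j) - pt n a‖ = ‖pt n j‖ := by
  rw [pt_add]; congr 1; abel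

lemma T1_bd (hF : Proc P F p α r s M) (hp : 0 < p) (hα : 0 < α) (hα1 : α ≤ 1) (hM : 0 < M)
    (hγ : 24 < p * (α - β)) {n : ℕ} (hr : 2 * dl n < r) (h4 : 2 * dl n ≤ 1/4) :
    Measurable (T1 F p β n) ∧
    ∫⁻ ω, T1 F p β n ω ∂P ≤ ENNReal.ofReal (27 * 2 ^ p * M * dl n) := by
  have hd := dl_pos n
  have hd1 := dl_le_one n
  have hmm : ∀ a, ∀ e ∈ Bx 0, Measurable fun ω =>
      ENNReal.ofReal (‖F (pt n a) (pt n (a + e)) ω‖ / dl n ^ β) ^ p := fun a e he =>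
    wt_meas (hF.m _ _ ((len1 he a).trans h4)) _ _
  have hmm2 : ∀ a ∈ Cu n, Measurable fun ω => ∑ e ∈ Bx 0,
      ENNReal.ofReal (‖F (pt n a) (pt n (a + e)) ω‖ / dl n ^ β) ^ p := fun a _ =>
    Finset.measurable_fun_sum _ fun e he => hmm a e he
  refine ⟨Finset.measurable_fun_sum _ hmm2, ?_⟩
  have key : ∀ a ∈ Cu n, ∫⁻ ω, ∑ e ∈ Bx 0,
      ENNReal.ofReal (‖F (pt n a) (pt n (a + e)) ω‖ / dl n ^ β) ^ p ∂P ≤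
        ENNReal.ofReal (27 * (M * (2 ^ p * dl n ^ 24))) := by
    intro a _
    refine int_sum_le _ _ (by positivity) card_B0 (fun e he => hmm a e he) fun e he => ?_
    have l := len1 (n := n) he a
    refine (wt_int (hF.m _ _ (l.trans h4)) hp (by positivity)
      (hF.seg _ _ (lt_of_le_of_lt l hr) (l.trans h4))).trans ?_
    apply ENNReal.ofReal_le_ofReal
    rw [mul_div_assoc]
    gcongr
    exact rb1 hp hα hα1 hγ hd hd1 (norm_nonneg _) l
  refine (int_sum_le _ _ (by positivity) (card_Cu n).le hmm2 key).trans ?_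
  apply ENNReal.ofReal_le_ofReal
  have e : 1 / dl n ^ 3 * (27 * (M * (2 ^ p * dl n ^ 24))) = 27 * 2 ^ p * M * dl n ^ 21 := by
    field_simp
  rw [e]
  gcongr
  exact pow_le_of_le_one hd.le hd1 (by norm_num)

lemma T2_bd (hF : Proc P F p α r s M) (hp : 0 < p) (hα : 0 < α) (hα1 : α ≤ 1) (hM : 0 < M)
    (hγ : 24 < p * (α - β)) {n : ℕ} (hs : dl n ≤ s) (h4 : R + 2 * dl n ≤ 1/4)
    (hR : 0 ≤ R) :
    Measurable (T2 F p β R n) ∧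
    ∫⁻ ω, T2 F p β R n ω ∂P ≤ ENNReal.ofReal (729 * 2 ^ p * M * dl n) := by
  have hd := dl_pos n
  have hd1 := dl_le_one n
  have side : ∀ a : Fin 3 → ℤ, ∀ j ∈ (Bx n).filter (fun j => ‖pt n j‖ ≤ R), ∀ e ∈ Bx 0,
      ‖pt n (a + j) - pt n a‖ ≤ R ∧ ‖pt n (a + j + e) - pt n a‖ ≤ 1/4 ∧
      ‖pt n (a + j + e) - pt n (a + j)‖ ≤ 2 * dl n := by
    intro a j hj e he
    have hj' := (Finset.mem_filter.1 hj).2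
    have l := len1 (n := n) he (a + j)
    refine ⟨(len2 j a).le.trans hj', ?_, l⟩
    have ee : pt n (a + j + e) - pt n a =
      (pt n (a + j + e) - pt n (a + j)) + (pt n (a + j) - pt n a) := by abel
    rw [ee]
    refine (norm_add_le _ _).trans ?_
    rw [len2 j a]; linarith
  have hX : ∀ a : Fin 3 → ℤ, ∀ j ∈ (Bx n).filter (fun j => ‖pt n j‖ ≤ R), ∀ e ∈ Bx 0,
      Measurable fun ω => F (pt n a) (pt n (a + j)) ω + F (pt n (a + j)) (pt n (a + j + e)) ω
      + F (pt n (a + j + e)) (pt n a) ω := by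
    intro a j hj e he
    obtain ⟨s1, s2, s3⟩ := side a j hj e he
    refine ((hF.m _ _ (by linarith)).add (hF.m _ _ (by linarith))).add (hF.m _ _ ?_)
    rw [norm_sub_rev]; exact s2
  have m1 : ∀ a : Fin 3 → ℤ, ∀ j ∈ (Bx n).filter (fun j => ‖pt n j‖ ≤ R), ∀ e ∈ Bx 0,
      Measurable fun ω => ENNReal.ofReal (‖F (pt n a) (pt n (a + j)) ω +
      F (pt n (a + j)) (pt n (a + j + e)) ω
      + F (pt n (a + j + e)) (pt n a) ω‖ / ((‖pt n j‖ + dl n) * dl n) ^ (β/2)) ^ p :=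
    fun a j hj e he => wt_meas (hX a j hj e he) _ _
  have m2 : ∀ a : Fin 3 → ℤ, ∀ j ∈ (Bx n).filter (fun j => ‖pt n j‖ ≤ R),
      Measurable fun ω => ∑ e ∈ Bx 0, ENNReal.ofReal (‖F (pt n a) (pt n (a + j)) ω +
      F (pt n (a + j)) (pt n (a + j + e)) ω
      + F (pt n (a + j + e)) (pt n a) ω‖ / ((‖pt n j‖ + dl n) * dl n) ^ (β/2)) ^ p :=
    fun a j hj => Finset.measurable_fun_sum _ fun e he => m1 a j hj e he
  have m3 : ∀ a ∈ Cu n, Measurable fun ω => ∑ j ∈ (Bx n).filter (fun j => ‖pt n j‖ ≤ R),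
      ∑ e ∈ Bx 0, ENNReal.ofReal (‖F (pt n a) (pt n (a + j)) ω +
      F (pt n (a + j)) (pt n (a + j + e)) ω
      + F (pt n (a + j + e)) (pt n a) ω‖ / ((‖pt n j‖ + dl n) * dl n) ^ (β/2)) ^ p :=
    fun a _ => Finset.measurable_fun_sum _ fun j hj => m2 a j hj
  refine ⟨Finset.measurable_fun_sum _ m3, ?_⟩
  have cf : (((Bx n).filter (fun j => ‖pt n j‖ ≤ R)).card : ℝ) ≤ 27 / dl n ^ 3 :=
    le_trans (by exact_mod_cast Finset.card_filter_le _ _) (card_Bx n)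
  have i3 := int_sum_le (P := P) (Cu n) _
    (B := 27 / dl n ^ 3 * (27 * (M * (2 ^ p * dl n ^ 12))))
    (by positivity) (card_Cu n).le m3
    (fun a _ => int_sum_le _ _ (B := 27 * (M * (2 ^ p * dl n ^ 12))) (by positivity) cf (m2 a)
      (fun j hj => int_sum_le _ _ (B := M * (2 ^ p * dl n ^ 12)) (by positivity) card_B0
        (m1 a j hj) (fun e he => ?_)))
  · refine i3.trans ?_
    apply ENNReal.ofReal_le_ofReal
    have e : 1 / dl n ^ 3 * (27 / dl n ^ 3 * (27 * (M * (2 ^ p * dl n ^ 12)))) =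
        729 * 2 ^ p * M * dl n ^ 6 := by
      field_simp; norm_num
    rw [e]
    gcongr
    exact pow_le_of_le_one hd.le hd1 (by norm_num)
  · obtain ⟨s1, s2, s3⟩ := side a j hj e he
    refine (wt_int (hX a j hj e he) hp (by positivity)
      (hF.tri _ _ _ (by linarith) s2 (by linarith) ?_)).trans ?_
    · have := norm_nonneg (pt n (a + j) - pt n a)
      have := norm_nonneg (pt n (a + j + e) - pt n (a + j))
      nlinarith
    · apply ENNReal.ofReal_le_ofReal
      rw [mul_div_assoc]
      gcongr
      rw [len2] at s1 ⊢
      exact rb2 hp hα hα1 hγ hd (norm_nonneg _) (by linarith) (norm_nonneg _) s3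

lemma T4_bd (hF : Proc P F p α r s M) (hp : 0 < p) (hα : 0 < α) (hM : 0 < M)
    (hγ : 24 < p * (α - β)) {n : ℕ} (h4 : R ≤ 1/4) (hr : R + dl n ≤ r) :
    Measurable (T4 F p β R n) ∧
    ∫⁻ ω, T4 F p β R n ω ∂P ≤ ENNReal.ofReal (27 * M * (1 / dl n ^ 6) * r ^ (p * (α - β))) := by
  have hd := dl_pos n
  have hd1 := dl_le_one n
  by_cases hr0 : 0 ≤ r
  swap
  · have e : (Bx n).filter (fun j => ‖pt n j‖ ≤ R) = ∅ := by
      apply Finset.filter_false_of_mem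
      intro j _ h
      have := norm_nonneg (pt n j)
      linarith
    have : T4 F p β R n = fun _ => 0 := by
      funext ω; simp [T4, e]
    rw [this]; simp
  have m1 : ∀ a : Fin 3 → ℤ, ∀ j ∈ (Bx n).filter (fun j => ‖pt n j‖ ≤ R),
      Measurable fun ω => ENNReal.ofReal (‖F (pt n a) (pt n (a + j)) ω‖ /
        (‖pt n j‖ + dl n) ^ β) ^ p := fun a j hj =>
    wt_meas (hF.m _ _ (by rw [len2]; linarith [(Finset.mem_filter.1 hj).2])) _ _
  have m2 : ∀ a ∈ Cu n, Measurable fun ω => ∑ j ∈ (Bx n).filter (fun j => ‖pt n j‖ ≤ R),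
      ENNReal.ofReal (‖F (pt n a) (pt n (a + j)) ω‖ /
        (‖pt n j‖ + dl n) ^ β) ^ p := fun a _ =>
    Finset.measurable_fun_sum _ fun j hj => m1 a j hj
  refine ⟨Finset.measurable_fun_sum _ m2, ?_⟩
  have cf : (((Bx n).filter (fun j => ‖pt n j‖ ≤ R)).card : ℝ) ≤ 27 / dl n ^ 3 :=
    le_trans (by exact_mod_cast Finset.card_filter_le _ _) (card_Bx n)
  have i3 := int_sum_le (P := P) (Cu n) _
    (B := 27 / dl n ^ 3 * (M * r ^ (p * (α - β))))
    (by positivity) (card_Cu n).le m2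
    (fun a _ => int_sum_le _ _ (B := M * r ^ (p * (α - β))) (by positivity) cf (m1 a)
      (fun j hj => ?_))
  · refine i3.trans ?_
    apply ENNReal.ofReal_le_ofReal
    apply le_of_eq
    field_simp
  · have hj' := (Finset.mem_filter.1 hj).2
    refine (wt_int (hF.m _ _ (by rw [len2]; linarith)) hp (by positivity)
      (hF.seg _ _ (by rw [len2]; linarith) (by rw [len2]; linarith))).trans ?_
    apply ENNReal.ofReal_le_ofReal
    rw [mul_div_assoc, len2]
    gcongr
    exact rb4 hp hα hγ hd (norm_nonneg _) (by linarith)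

lemma SS_bd (hF : Proc P F p α r s M) (hp : 0 < p) (hα : 0 < α) (hα1 : α ≤ 1) (hM : 0 < M)
    (hγ : 24 < p * (α - β)) (hR : 0 ≤ R) (hs : dl N ≤ s) (h4 : R + 2 * dl N ≤ 1/4)
    (hr : R + 3 * dl N ≤ r) :
    Measurable (SS F p β R N) ∧
    ∫⁻ ω, SS F p β R N ω ∂P ≤ ENNReal.ofReal (2000 * 2 ^ p * M *
      (1 / dl N ^ 6 * r ^ (p * (α - β)) + 1)) := by
  have hd := dl_pos N
  have hr0 : 0 < r := by linarith
  have c1 : ∀ k, _ := fun k => T1_bd (β := β) hF hp hα hα1 hM hγ (n := N + k)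
    (by linarith [dl_anti (show N ≤ N + k by omega)])
    (by linarith [dl_anti (show N ≤ N + k by omega)])
  have c2 : ∀ k, _ := fun k => T2_bd (β := β) (R := R) hF hp hα hα1 hM hγ (n := N + k)
    (by linarith [dl_anti (show N ≤ N + k by omega)])
    (by linarith [dl_anti (show N ≤ N + k by omega)]) hR
  have c4 := T4_bd (β := β) (R := R) hF hp hα hM hγ (n := N) (by linarith) (by linarith)
  have hm : ∀ k, Measurable fun ω => T1 F p β (N + k) ω + T2 F p β R (N + k) ω :=
    fun k => (c1 k).1.add (c2 k).1
  have hmt : Measurable fun ω => ∑' k, (T1 F p β (N + k) ω + T2 F p β R (N + k) ω) :=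
    Measurable.tsum hm
  refine ⟨hmt.add c4.1, ?_⟩
  unfold SS
  rw [lintegral_add_right _ c4.1, lintegral_tsum fun k => (hm k).aemeasurable]
  have b : ∀ k, ∫⁻ ω, (T1 F p β (N + k) ω + T2 F p β R (N + k) ω) ∂P ≤
      ENNReal.ofReal (756 * 2 ^ p * M * (1/2) ^ k) := by
    intro k
    rw [lintegral_add_right _ (c2 k).1]
    refine (add_le_add (c1 k).2 (c2 k).2).trans ?_
    have hk := dl_pos (N + k)
    rw [← ENNReal.ofReal_add (by positivity) (by positivity)]
    apply ENNReal.ofReal_le_ofReal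
    have := dl_anti (show k ≤ N + k by omega)
    change _ ≤ 756 * 2 ^ p * M * dl k
    calc _ = 756 * 2 ^ p * M * dl (N + k) := by ring
      _ ≤ _ := by gcongr
  have b2 : ∑' k, ∫⁻ ω, (T1 F p β (N + k) ω + T2 F p β R (N + k) ω) ∂P ≤
      ENNReal.ofReal (756 * 2 ^ p * M * 2) := by
    refine (ENNReal.tsum_le_tsum b).trans ?_
    rw [← ENNReal.ofReal_tsum_of_nonneg (fun n => by positivity)
      (summable_geometric_two.mul_left _), tsum_mul_left, tsum_geometric_two]
  refine (add_le_add b2 c4.2).trans ?_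
  rw [← ENNReal.ofReal_add (by positivity) (by positivity)]
  apply ENNReal.ofReal_le_ofReal
  have h2p : (1:ℝ) ≤ 2 ^ p := Real.one_le_rpow (by norm_num) hp.le
  have hX : 0 ≤ 1 / dl N ^ 6 * r ^ (p * (α - β)) := by positivity
  set X := 1 / dl N ^ 6 * r ^ (p * (α - β))
  have e : 27 * M * (1 / dl N ^ 6) * r ^ (p * (α - β)) = 27 * M * X := by ring
  rw [e]
  have : M * X ≤ 2 ^ p * (M * X) := le_mul_of_one_le_left (by positivity) h2p
  have : 0 ≤ 2 ^ p * M := by positivity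
  nlinarith

end sums


section core
variable {Ω : Type*} [MeasurableSpace Ω] {P : Measure Ω}
variable {V : Type*} [NormedAddCommGroup V] [NormedSpace ℝ V] [MeasurableSpace V]
  [BorelSpace V] [SecondCountableTopology V]
variable {F : E3 → E3 → Ω → V} {p α β r s M ρ : ℝ} {N : ℕ}

lemma anti_ae (hF : Proc P F p α r s M) (hp : 0 < p) (hα : 0 < α) (hs : 0 < s)
    {x y : E3} (h : ‖y - x‖ ≤ 1/4) : ∀ᵐ ω ∂P, F x y ω = - F y x ω := by
  have hx : ∀ y : E3, ∀ᵐ ω ∂P, F y y ω = 0 := by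
    intro y
    have m := hF.m y y (by simp)
    have t := hF.tri y y y (by simp) (by simp) (by simp) (by simpa using hs)
    have e : (0:ℝ) ^ (p * α / 2) = 0 := Real.zero_rpow (by positivity)
    simp only [sub_self, norm_zero, mul_zero, e, ENNReal.ofReal_zero] at t
    filter_upwards [ae_zero ((m.add m).add m) hp t] with ω hω
    have h3 : (3:ℝ) • F y y ω = 0 := by
      rw [← hω]
      have : (3:ℝ) = 1 + 1 + 1 := by norm_num
      rw [this, add_smul, add_smul, one_smul]; rfl
    exact (smul_eq_zero.1 h3).resolve_left (by norm_num)
  have t := hF.tri x y y h h (by simp) (by simpa using hs)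
  have e : (0:ℝ) ^ (p * α / 2) = 0 := Real.zero_rpow (by positivity)
  simp only [sub_self, norm_zero, mul_zero, e, ENNReal.ofReal_zero] at t
  have h' : ‖x - y‖ ≤ 1/4 := by rw [norm_sub_rev]; exact h
  filter_upwards [ae_zero (((hF.m x y h).add (hF.m y y (by simp))).add (hF.m y x h')) hp t,
    hx y] with ω h1 h2
  simp only [Pi.add_apply, h2, add_zero] at h1
  exact eq_neg_of_add_eq_zero_left h1

lemma anti_all (hF : Proc P F p α r s M) (hp : 0 < p) (hα : 0 < α) (hs : 0 < s) :
    ∀ᵐ ω ∂P, ∀ n a b, ‖pt n b - pt n a‖ ≤ 1/4 →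
      F (pt n a) (pt n b) ω = - F (pt n b) (pt n a) ω := by
  rw [ae_all_iff]; intro n
  rw [ae_all_iff]; intro a
  rw [ae_all_iff]; intro b
  by_cases h : ‖pt n b - pt n a‖ ≤ 1/4
  · filter_upwards [anti_ae hF hp hα hs h] with ω hω _ using hω
  · exact Eventually.of_forall fun ω h' => absurd h' h

lemma good_of (hF : Proc P F p α r s M) (hp : 0 < p) (h14 : ρ + 8 * dl N ≤ 1/4) {ω : Ω}
    (hS : SS F p β (ρ + 6 * dl N) N ω ≠ ⊤)
    (ha : ∀ n a b, ‖pt n b - pt n a‖ ≤ 1/4 →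
      F (pt n a) (pt n b) ω = - F (pt n b) (pt n a) ω) :
    Good (fun x y => F x y ω) ((SS F p β (ρ + 6 * dl N) N ω).toReal ^ (1/p)) ρ β N := by
  set R := ρ + 6 * dl N with hR
  have hdN := dl_pos N
  have redb : ∀ (n : ℕ) (a' k b : Fin 3 → ℤ),
      pt n b = pt n (a' + (b - fun i => a' i + 2 ^ n * k i)) + pt 0 k := by
    intro n a' k b
    rw [← pt_shift]; congr 1; funext i; simp only [Pi.add_apply, Pi.sub_apply]; ring
  have le1 : ∀ k, T1 F p β (N + k) ω ≤ SS F p β R N ω := fun k =>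
    le_trans (le_trans le_self_add (ENNReal.le_tsum (f := fun k => T1 F p β (N + k) ω +
      T2 F p β R (N + k) ω) k)) le_self_add
  have le2 : ∀ k, T2 F p β R (N + k) ω ≤ SS F p β R N ω := fun k =>
    le_trans (le_trans le_add_self (ENNReal.le_tsum (f := fun k => T1 F p β (N + k) ω +
      T2 F p β R (N + k) ω) k)) le_self_add
  constructor
  · intro n hn a b hab
    obtain ⟨k, rfl⟩ := Nat.exists_eq_add_of_le hn
    have hd := dl_pos (N + k)
    apply wt_pt hp (by positivity) hS
    refine le_trans ?_ (le1 k)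
    obtain ⟨a', ha', q, rfl⟩ := exists_rep (N + k) a
    set e := b - fun i => a' i + 2 ^ (N + k) * q i with he
    have hb := redb (N + k) a' q b
    rw [hb, pt_shift, hF.per]
    unfold T1
    refine le_trans ?_ (Finset.single_le_sum (fun _ _ => bot_le) ha')
    exact Finset.single_le_sum (f := fun e => ENNReal.ofReal (‖F (pt (N + k) a')
      (pt (N + k) (a' + e)) ω‖ / dl (N + k) ^ β) ^ p) (fun _ _ => bot_le) (mem_B0 hab)
  · intro n hn a b c hbc hab
    obtain ⟨k, rfl⟩ := Nat.exists_eq_add_of_le hn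
    have hd := dl_pos (N + k)
    apply wt_pt hp (by positivity) hS
    refine le_trans ?_ (le2 k)
    obtain ⟨a', ha', q, rfl⟩ := exists_rep (N + k) a
    rw [← pt_sub] at hab ⊢
    set j := b - fun i => a' i + 2 ^ (N + k) * q i with hj
    have hb := redb (N + k) a' q b
    have hc : pt (N + k) c = pt (N + k) (a' + j + (c - b)) + pt 0 q := by
      rw [← pt_shift]; congr 1; funext i; simp only [hj, Pi.add_apply, Pi.sub_apply]; ring
    rw [hb, hc, pt_shift, hF.per, hF.per, hF.per]
    unfold T2
    refine le_trans ?_ (Finset.single_le_sum (fun _ _ => bot_le) ha')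
    have hjm : j ∈ (Bx (N + k)).filter (fun j => ‖pt (N + k) j‖ ≤ R) :=
      Finset.mem_filter.2 ⟨mem_Bx (by linarith), hab⟩
    refine le_trans ?_ (Finset.single_le_sum (fun _ _ => bot_le) hjm)
    exact Finset.single_le_sum (f := fun e => ENNReal.ofReal (‖F (pt (N + k) a')
      (pt (N + k) (a' + j)) ω + F (pt (N + k) (a' + j)) (pt (N + k) (a' + j + e)) ω
      + F (pt (N + k) (a' + j + e)) (pt (N + k) a') ω‖ /
        ((‖pt (N + k) j‖ + dl (N + k)) * dl (N + k)) ^ (β/2)) ^ p)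
        (fun _ _ => bot_le) (mem_B0 hbc)
  · intro a b hab
    apply wt_pt hp (by positivity) hS
    refine le_trans ?_ (le_add_self : T4 F p β R N ω ≤ _)
    obtain ⟨a', ha', q, rfl⟩ := exists_rep N a
    rw [← pt_sub] at hab ⊢
    set j := b - fun i => a' i + 2 ^ N * q i with hj
    have hb := redb N a' q b
    rw [hb, pt_shift, hF.per]
    unfold T4
    refine le_trans ?_ (Finset.single_le_sum (fun _ _ => bot_le) ha')
    have hjm : j ∈ (Bx N).filter (fun j => ‖pt N j‖ ≤ R) :=
      Finset.mem_filter.2 ⟨mem_Bx (by linarith), hab⟩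
    exact Finset.single_le_sum (f := fun j => ENNReal.ofReal (‖F (pt N a')
      (pt N (a' + j)) ω‖ / (‖pt N j‖ + dl N) ^ β) ^ p)
        (fun _ _ => bot_le) hjm
  · intro n hn a b hab
    exact ha n a b (hab.trans h14)

lemma rpow_dl (C q : ℝ) (hC : 0 ≤ C) (n : ℕ) :
    (C * dl n) ^ q = C ^ q * ((1/2 : ℝ) ^ q) ^ n := by
  rw [Real.mul_rpow hC (dl_pos n).le]
  congr 1
  unfold dl
  rw [← Real.rpow_natCast, ← Real.rpow_mul (by norm_num), mul_comm,
      Real.rpow_mul (by norm_num), Real.rpow_natCast]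

/-- approximation at dyadic points converges to the process itself -/
lemma approx_ae (hF : Proc P F p α r s M) (hp : 0 < p) (hα : 0 < α) (hs : 0 < s) (hM : 0 < M)
    (h14 : ρ + 8 * dl N ≤ 1/4) (hr : ρ + 8 * dl N ≤ r) (hdS : dl N ≤ s) (hρ : 0 < ρ)
    {x y : E3} (h : ‖y - x‖ ≤ ρ) :
    ∀ᵐ ω ∂P, Tendsto (fun n => uu (fun x y => F x y ω) x y n) atTop (𝓝 (F x y ω)) := by
  have hdN := dl_pos N
  -- shifted levels
  let X : ℕ → E3 := fun k => pt (N + k) (fl (N + k) x)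
  let Y : ℕ → E3 := fun k => pt (N + k) (fl (N + k) y)
  have hX : ∀ k, ‖X k - x‖ ≤ 2 * dl (N + k) := fun k => fl_dist _ _
  have hY : ∀ k, ‖Y k - y‖ ≤ 2 * dl (N + k) := fun k => fl_dist _ _
  have hle : ∀ k, dl (N + k) ≤ dl N := fun k => dl_anti (by omega)
  have hk : ∀ k, dl (N + k) ≤ dl k := fun k => dl_anti (by omega)
  have hpos : ∀ k, 0 < dl (N + k) := fun k => dl_pos _
  have hYx : ∀ k, ‖Y k - x‖ ≤ ρ + 2 * dl N := fun k => by
    have e : Y k - x = (Y k - y) + (y - x) := by abel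
    rw [e]; refine (norm_add_le _ _).trans ?_; linarith [hY k, hle k]
  have hYX : ∀ k, ‖Y k - X k‖ ≤ ρ + 4 * dl N := fun k => by
    have e : Y k - X k = (Y k - x) - (X k - x) := by abel
    rw [e]; refine (norm_sub_le _ _).trans ?_; linarith [hYx k, hX k, hle k]
  have hθ1 : (1/2:ℝ) ^ (p * α) < 1 := Real.rpow_lt_one (by norm_num) (by norm_num) (by positivity)
  have hθ2 : (1/2:ℝ) ^ (p * α / 2) < 1 :=
    Real.rpow_lt_one (by norm_num) (by norm_num) (by positivity)
  -- short segments
  have seg : ∀ (x : E3) (X : ℕ → E3), (∀ k, ‖X k - x‖ ≤ 2 * dl (N + k)) →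
      ∀ᵐ ω ∂P, Tendsto (fun k => F x (X k) ω) atTop (𝓝 0) := by
    intro x X hX
    refine ae_tendsto (fun k => hF.m _ _ (by linarith [hX k, hle k])) hp (C := M * 2 ^ (p * α))
      (by positivity) (by positivity) hθ1 fun k => ?_
    refine (hF.seg _ _ (by linarith [hX k, hle k]) (by linarith [hX k, hle k])).trans ?_
    apply ENNReal.ofReal_le_ofReal
    rw [mul_assoc, ← rpow_dl 2 _ (by norm_num)]
    gcongr
    linarith [hX k, hk k]
  -- triangles
  have tri : ∀ (z : ℕ → E3) (x : E3) (X : ℕ → E3), (∀ k, ‖X k - x‖ ≤ 2 * dl (N + k)) →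
      (∀ k, ‖x - z k‖ ≤ 1/4) → (∀ k, ‖X k - z k‖ ≤ 1/4) →
      ∀ᵐ ω ∂P, Tendsto (fun k => F (z k) x ω + F x (X k) ω + F (X k) (z k) ω) atTop (𝓝 0) := by
    intro z x X hX h1 h2
    refine ae_tendsto (fun k => ((hF.m _ _ (h1 k)).add
      (hF.m _ _ (by linarith [hX k, hle k]))).add (hF.m _ _ (by rw [norm_sub_rev]; exact h2 k)))
      hp (C := M * 2 ^ (p * α / 2)) (by positivity) (by positivity) hθ2 fun k => ?_
    refine (hF.tri _ _ _ (h1 k) (h2 k) (by linarith [hX k, hle k]) ?_).trans ?_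
    · have i1 := hX k
      have i2 := hle k
      have i3 := h1 k
      have := norm_nonneg (x - z k)
      have := norm_nonneg (X k - x)
      nlinarith
    apply ENNReal.ofReal_le_ofReal
    rw [mul_assoc, ← rpow_dl 2 _ (by norm_num)]
    apply mul_le_mul_of_nonneg_left _ hM.le
    apply Real.rpow_le_rpow (by positivity) _ (by positivity)
    have i1 := hX k
    have i2 := hk k
    have i3 := h1 k
    have := norm_nonneg (x - z k)
    have := norm_nonneg (X k - x)
    nlinarith
  have an : ∀ᵐ ω ∂P, ∀ k, F (Y k) x ω = - F x (Y k) ω ∧ F (X k) (Y k) ω = - F (Y k) (X k) ω := by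
    rw [ae_all_iff]; intro k
    filter_upwards [anti_ae hF hp hα hs (x := Y k) (y := x)
        (by rw [norm_sub_rev]; linarith [hYx k]),
      anti_ae hF hp hα hs (x := X k) (y := Y k) (by linarith [hYX k])] with ω h1 h2
    exact ⟨h1, h2⟩
  filter_upwards [seg x X hX, seg y Y hY, an,
    tri (fun _ => x) y Y hY (fun k => by linarith) (fun k => by linarith [hYx k]),
    tri Y x X hX (fun k => by rw [norm_sub_rev]; linarith [hYx k])
      (fun k => by rw [norm_sub_rev]; linarith [hYX k])] with ω s1 s2 an t1 t2
  rw [← tendsto_add_atTop_iff_nat N]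
  have comb := ((s2.sub t1).add (t2.sub s1)).add_const (F x y ω)
  simp only [sub_zero, add_zero, zero_add] at comb
  refine comb.congr fun k => ?_
  have e : uu (fun x y => F x y ω) x y (k + N) = F (X k) (Y k) ω := by
    simp only [uu, X, Y, add_comm k N]
  rw [e, (an k).1]
  abel

end core


lemma tq_add (x y : E3) : tq (x + y) = tq x + tq y := by
  funext i; simp [tq]

lemma tq_pt (k : Fin 3 → ℤ) : tq (pt 0 k) = 0 := by
  funext i
  simp only [tq, pt, Pi.zero_apply]
  rw [AddCircle.coe_eq_zero_iff]
  exact ⟨k i, by simp [dl]⟩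

lemma tq_eq_zero {x : E3} (h : tq x = 0) : ∃ k, x = pt 0 k := by
  have : ∀ i, ∃ n : ℤ, n • (1:ℝ) = x i := fun i => by
    rw [← AddCircle.coe_eq_zero_iff]; exact congrFun h i
  choose k hk using this
  refine ⟨k, ?_⟩
  ext i
  simp [pt, dl, ← hk i]

lemma tq_surj : Function.Surjective tq := by
  intro x
  have : ∀ i, ∃ t : ℝ, (t : AddCircle (1:ℝ)) = x i := fun i => QuotientAddGroup.mk_surjective (x i)
  choose t ht using this
  exact ⟨WithLp.toLp 2 t, funext fun i => ht i⟩

lemma tq_cont : Continuous tq := by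
  apply continuous_pi
  intro i
  exact (AddCircle.continuous_mk' (1:ℝ)).comp (by fun_prop : Continuous fun v : E3 => v i)

lemma tq_open : IsOpenMap tq := by
  have h1 : IsOpenMap (Pi.map (fun (_ : Fin 3) (t : ℝ) => (t : AddCircle (1:ℝ)))) :=
    IsOpenMap.piMap (fun _ => QuotientAddGroup.isOpenMap_coe)
      (Eventually.of_forall fun _ => QuotientAddGroup.mk_surjective)
  have h2 : IsOpenMap (fun v : E3 => (v.ofLp : Fin 3 → ℝ)) :=
    (PiLp.homeomorph 2 (fun _ : Fin 3 => ℝ)).isOpenMap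
  exact h1.comp h2

lemma triArea_le (v w : E3) : triArea v w ≤ ‖v‖ * ‖w - v‖ := by
  have h : ‖cross v w‖ ≤ ‖v‖ * ‖w - v‖ := by
    refine (sq_le_sq₀ (norm_nonneg _) (by positivity)).1 ?_
    rw [mul_pow, EuclideanSpace.norm_sq_eq, EuclideanSpace.norm_sq_eq, EuclideanSpace.norm_sq_eq]
    simp only [Fin.sum_univ_three, Real.norm_eq_abs, sq_abs, cross]
    simp
    nlinarith [sq_nonneg (v 0 * (w 0 - v 0) + v 1 * (w 1 - v 1) + v 2 * (w 2 - v 2))]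
  unfold triArea
  have := norm_nonneg (cross v w)
  linarith

lemma triArea_nonneg (v w : E3) : 0 ≤ triArea v w := by unfold triArea; positivity

lemma exists_level {r s : ℝ} (hr : r ∈ Set.Ioo (0:ℝ) 1) (hs : s ∈ Set.Ioo (0:ℝ) 1) :
    ∃ N : ℕ, 128 * dl N ≤ s ∧ 128 * dl N ≤ r ∧
      1 / dl N ^ 6 ≤ 256 ^ 6 * (s ^ (-(6:ℝ)) + r ^ (-(12:ℝ))) := by
  obtain ⟨hr0, hr1⟩ := hr
  obtain ⟨hs0, hs1⟩ := hs
  have hm : 0 < min s r := lt_min hs0 hr0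
  obtain ⟨n, h1, h2⟩ := exists_nat_pow_near_of_lt_one (x := min s r / 128) (by positivity)
    (by linarith [min_le_left s r]) (show (0:ℝ) < 1/2 by norm_num) (by norm_num)
  change dl (n+1) < _ at h1
  change _ ≤ dl n at h2
  have a1 := min_le_left s r
  have a2 := min_le_right s r
  have hd := dl_pos (n+1)
  refine ⟨n+1, by linarith, by linarith, ?_⟩
  have h3 : min s r / 256 ≤ dl (n+1) := by rw [dl_succ]; linarith
  have e6 : s ^ (-(6:ℝ)) = 1 / s ^ 6 := by
    rw [Real.rpow_neg hs0.le, one_div]; norm_cast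
  have e12 : r ^ (-(12:ℝ)) = 1 / r ^ 12 := by
    rw [Real.rpow_neg hr0.le, one_div]; norm_cast
  have hle : 1 / dl (n+1) ^ 6 ≤ 1 / (min s r / 256) ^ 6 := by gcongr
  refine hle.trans ?_
  have e : 1 / (min s r / 256) ^ 6 = 256 ^ 6 * (1 / (min s r) ^ 6) := by field_simp
  rw [e, e6, e12]
  gcongr
  rcases min_choice s r with h | h <;> rw [h]
  · have : 0 ≤ 1 / r ^ 12 := by positivity
    linarith
  · have : 0 ≤ 1 / s ^ 6 := by positivity
    have : 1 / r ^ 6 ≤ 1 / r ^ 12 := by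
      apply one_div_le_one_div_of_le (by positivity)
      exact pow_le_pow_of_le_one hr0.le hr1.le (by norm_num)
    linarith

section core
variable {Ω : Type*} [MeasurableSpace Ω] {P : Measure Ω}
variable {V : Type*} [NormedAddCommGroup V] [NormedSpace ℝ V] [MeasurableSpace V]
  [BorelSpace V] [SecondCountableTopology V] [CompleteSpace V]

theorem core {F : E3 → E3 → Ω → V} {p α β r s M : ℝ}
    (hF : Proc P F p α r s M) (hp : 0 < p) (hα : 0 < α) (hα1 : α ≤ 1) (hβ : 0 < β) (hβ1 : β ≤ 1)
    (hγ : 24 < p * (α - β)) (hM : 0 < M)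
    (hr : r ∈ Set.Ioo (0:ℝ) 1) (hs : s ∈ Set.Ioo (0:ℝ) 1) :
    (∀ x y, ‖y - x‖ ≤ min r (1/4) / 2 →
      ∀ᵐ ω ∂P, ft (fun x y => F x y ω) x y = F x y ω) ∧
    (∀ᵐ ω ∂P, ContinuousOn (fun q : E3 × E3 => ft (fun x y => F x y ω) q.1 q.2)
      {q | ‖q.2 - q.1‖ < min r (1/4) / 2}) ∧
    ∃ Z : Ω → ℝ≥0∞, Measurable Z ∧
      ∫⁻ ω, Z ω ∂P ≤ ENNReal.ofReal (2000 * 2 ^ p * M *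
        (256 ^ 6 * (s ^ (-(6:ℝ)) + r ^ (-(12:ℝ))) * r ^ (p * (α - β)) + 1)) ∧
      ∀ᵐ ω ∂P, Z ω ≠ ⊤ ∧ ∀ x y, 0 < ‖y - x‖ → ‖y - x‖ ≤ min r (1/4) / 2 →
        ‖ft (fun x y => F x y ω) x y‖ ≤
          (Z ω).toReal ^ (1/p) * (14 * (1 + 4 * GG β)) * ‖y - x‖ ^ β := by
  obtain ⟨N, hNs, hNr, hN6⟩ := exists_level hr hs
  obtain ⟨hr0, hr1⟩ := hr
  obtain ⟨hs0, hs1⟩ := hs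
  have hd := dl_pos N
  set ρ := min r (1/4) / 2 with hρdef
  have hρ0 : 0 < ρ := by have : 0 < min r (1/4) := lt_min hr0 (by norm_num)
                         linarith
  have hm1 : 32 * dl N ≤ min r (1/4) := le_min (by linarith) (by linarith)
  have hm2 := min_le_left r (1/4)
  have hm3 := min_le_right r (1/4)
  have h14 : ρ + 8 * dl N ≤ 1/4 := by linarith
  have hrr : ρ + 8 * dl N < r := by linarith
  have hdS : dl N ≤ s := by linarith
  have hSS := SS_bd (β := β) (R := ρ + 6 * dl N) (N := N) hF hp hα hα1 hM hγ (by positivity) hdS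
    (by linarith) (by linarith)
  have hfin : ∀ᵐ ω ∂P, SS F p β (ρ + 6 * dl N) N ω < ⊤ :=
    ae_lt_top hSS.1 (ne_top_of_le_ne_top ENNReal.ofReal_ne_top hSS.2)
  have hgood : ∀ᵐ ω ∂P, Good (fun x y => F x y ω)
      ((SS F p β (ρ + 6 * dl N) N ω).toReal ^ (1/p)) ρ β N := by
    filter_upwards [hfin, anti_all hF hp hα hs0] with ω h1 h2
    exact good_of hF hp h14 h1.ne h2
  refine ⟨?_, ?_, SS F p β (ρ + 6 * dl N) N, hSS.1, ?_, ?_⟩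
  · intro x y hxy
    filter_upwards [hgood, approx_ae hF hp hα hs0 hM h14 hrr.le hdS hρ0 hxy] with ω hg ht
    exact tendsto_nhds_unique (hg.ft_tendsto (by positivity) hβ hxy) ht
  · filter_upwards [hgood] with ω hg
    exact hg.cont (by positivity) hβ (by linarith)
  · refine hSS.2.trans ?_
    apply ENNReal.ofReal_le_ofReal
    gcongr
  · filter_upwards [hgood, hfin] with ω hg hf
    exact ⟨hf.ne, fun x y h0 h => hg.bound (by positivity) hβ hβ1 (by linarith) h h0⟩

/-- section of the quotient map -/
def sec : T3 → E3 := Function.surjInv tq_surj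

lemma tq_sec (x : T3) : tq (sec x) = x := Function.surjInv_eq tq_surj x

/-- continuous version on short segments -/
def A0 (A : T3 → E3 → Ω → V) (x : T3) (v : E3) (ω : Ω) : V :=
  ft (fun x y => A (tq x) (y - x) ω) (sec x) (sec x + v)

lemma A0_tq (A : T3 → E3 → Ω → V) (z v : E3) (ω : Ω) :
    A0 A (tq z) v ω = ft (fun x y => A (tq x) (y - x) ω) z (z + v) := by
  have h : tq (sec (tq z) - z) = 0 := by
    have h1 : tq (sec (tq z)) = tq z := tq_sec _
    have h2 := tq_add (sec (tq z) - z) z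
    rw [sub_add_cancel, h1] at h2
    exact left_eq_add.1 (by rw [add_comm]; exact h2)
  obtain ⟨k, hk⟩ := tq_eq_zero h
  have e : sec (tq z) = z + pt 0 k := by rw [← hk]; abel
  unfold A0
  rw [e, show z + pt 0 k + v = z + v + pt 0 k by abel]
  apply ft_per
  intro k x y
  rw [tq_add, tq_pt, add_zero, add_sub_add_right_eq_sub]

lemma A0_cont {A : T3 → E3 → Ω → V} {ω : Ω} {ρ : ℝ}
    (h : ContinuousOn (fun q : E3 × E3 => ft (fun x y => A (tq x) (y - x) ω) q.1 q.2)
      {q | ‖q.2 - q.1‖ < ρ}) {x : T3} {v : E3} (hv : ‖v‖ < ρ) :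
    ContinuousAt (fun q : T3 × E3 => A0 A q.1 q.2 ω) (x, v) := by
  obtain ⟨z, rfl⟩ := tq_surj x
  let φ : E3 × E3 → T3 × E3 := Prod.map tq id
  have ho : IsOpenMap φ := tq_open.prodMap IsOpenMap.id
  have hc : Continuous φ := tq_cont.prodMap continuous_id
  have hn := ho.map_nhds_eq (x := (z, v)) hc.continuousAt
  change Tendsto _ (𝓝 (φ (z, v))) _
  rw [← hn, tendsto_map'_iff]
  have hopen : IsOpen {q : E3 × E3 | ‖q.2 - q.1‖ < ρ} :=
    isOpen_lt (by fun_prop) continuous_const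
  have hcat := h.continuousAt (x := (z, z + v)) (hopen.mem_nhds (by simpa using hv))
  have hcomp : ContinuousAt (fun q : E3 × E3 =>
      ft (fun x y => A (tq x) (y - x) ω) q.1 (q.1 + q.2)) (z, v) :=
    ContinuousAt.comp (f := fun q : E3 × E3 => (q.1, q.1 + q.2)) (x := (z, v)) hcat
      (by fun_prop)
  have e : ((fun q : T3 × E3 => A0 A q.1 q.2 ω) ∘ φ) = fun q : E3 × E3 =>
      ft (fun x y => A (tq x) (y - x) ω) q.1 (q.1 + q.2) := by
    funext q; exact A0_tq A q.1 q.2 ω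
  rw [e]
  have := hcomp.tendsto
  simpa [φ, A0_tq] using this

/-- sum over `n` equal pieces -/
def Sm (A : T3 → E3 → Ω → V) (n : ℕ) (x : T3) (v : E3) (ω : Ω) : V :=
  ∑ j ∈ Finset.range n, A0 A (x + tq (((j : ℝ) / n) • v)) ((1 / (n : ℝ)) • v) ω

lemma Sm_cont {A : T3 → E3 → Ω → V} {ω : Ω} {ρ : ℝ}
    (h : ContinuousOn (fun q : E3 × E3 => ft (fun x y => A (tq x) (y - x) ω) q.1 q.2)
      {q | ‖q.2 - q.1‖ < ρ}) {n : ℕ} (hn : 0 < n) {x : T3} {v : E3} (hv : ‖v‖ / n < ρ) :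
    ContinuousAt (fun q : T3 × E3 => Sm A n q.1 q.2 ω) (x, v) := by
  unfold Sm
  apply tendsto_finsetSum
  intro j _
  have hg : ContinuousAt (fun q : T3 × E3 =>
      (q.1 + tq (((j : ℝ) / n) • q.2), (1 / (n : ℝ)) • q.2)) (x, v) := by
    have := tq_cont
    fun_prop
  have hA := A0_cont (A := A) h (x := x + tq (((j : ℝ) / n) • v)) (v := (1 / (n : ℝ)) • v) (by
    rw [norm_smul, Real.norm_of_nonneg (by positivity)]
    rwa [one_div, inv_mul_eq_div])
  exact ContinuousAt.comp (f := fun q : T3 × E3 =>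
      (q.1 + tq (((j : ℝ) / n) • q.2), (1 / (n : ℝ)) • q.2)) (x := (x, v)) hA hg

lemma add_sum {A : T3 → E3 → Ω → V}
    (hadd : ∀ (x : T3) (v : E3), ‖v‖ ≤ 1/4 → ∀ c ∈ Set.Icc (0:ℝ) 1,
          ∀ᵐ ω ∂P, A x v ω = A x (c • v) ω + A (x + tq (c • v)) ((1 - c) • v) ω)
    (x : T3) (u : E3) (n : ℕ) (h : n * ‖u‖ ≤ 1/4) :
    ∀ᵐ ω ∂P, A x ((n : ℝ) • u) ω = ∑ j ∈ Finset.range n, A (x + tq ((j : ℝ) • u)) u ω := by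
  induction n with
  | zero =>
    have t0 : tq 0 = 0 := by have := tq_add 0 0; simpa using this
    filter_upwards [hadd x 0 (by simp) 0 (by simp)] with ω hω
    simp [t0] at hω
    simpa using hω
  | succ n ih =>
    have hn : (n : ℝ) * ‖u‖ ≤ 1/4 := by
      push_cast at h; nlinarith [norm_nonneg u]
    have hn1 : (0:ℝ) < n + 1 := by positivity
    filter_upwards [ih hn, hadd x (((n + 1 : ℕ) : ℝ) • u)
      (by rw [norm_smul, Real.norm_of_nonneg (by positivity)]; exact h) (n / (n + 1))
      ⟨by positivity, by rw [div_le_one hn1]; linarith⟩] with ω h1 h2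
    rw [h2, Finset.sum_range_succ, ← h1]
    have e1 : ((n : ℝ) / (n + 1)) • (((n + 1 : ℕ) : ℝ) • u) = (n : ℝ) • u := by
      rw [smul_smul]; congr 1; push_cast; field_simp
    have e2 : (1 - (n : ℝ) / (n + 1)) • (((n + 1 : ℕ) : ℝ) • u) = u := by
      rw [smul_smul]
      have : (1 - (n : ℝ) / (n + 1)) * ((n + 1 : ℕ) : ℝ) = 1 := by push_cast; field_simp; ring
      rw [this, one_smul]
    rw [e1, e2]

lemma Sm_mod {A : T3 → E3 → Ω → V} {ρ : ℝ}
    (hadd : ∀ (x : T3) (v : E3), ‖v‖ ≤ 1/4 → ∀ c ∈ Set.Icc (0:ℝ) 1,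
          ∀ᵐ ω ∂P, A x v ω = A x (c • v) ω + A (x + tq (c • v)) ((1 - c) • v) ω)
    (hmod : ∀ x y, ‖y - x‖ ≤ ρ →
      ∀ᵐ ω ∂P, ft (fun x y => A (tq x) (y - x) ω) x y = A (tq x) (y - x) ω)
    {n : ℕ} (hn : 0 < n) {x : T3} {v : E3} (h4 : ‖v‖ ≤ 1/4) (hv : ‖v‖ / n < ρ) :
    ∀ᵐ ω ∂P, Sm A n x v ω = A x v ω := by
  have hn' : (0:ℝ) < n := by exact_mod_cast hn
  set u := (1 / (n : ℝ)) • v with hu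
  have hun : ‖u‖ = ‖v‖ / n := by
    rw [hu, norm_smul, Real.norm_of_nonneg (by positivity), one_div, inv_mul_eq_div]
  have hnu : (n : ℝ) • u = v := by rw [hu, smul_smul, mul_one_div_cancel hn'.ne', one_smul]
  have h1 := add_sum hadd x u n (by rw [hun, mul_div_cancel₀ _ hn'.ne']; exact h4)
  have h2 : ∀ᵐ ω ∂P, ∀ j : ℕ, A0 A (x + tq ((j : ℝ) • u)) u ω = A (x + tq ((j : ℝ) • u)) u ω := by
    rw [ae_all_iff]; intro j
    obtain ⟨z, hz⟩ := tq_surj (x + tq ((j : ℝ) • u))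
    filter_upwards [hmod z (z + u) (by rw [add_sub_cancel_left, hun]; exact hv.le)] with ω hω
    rw [← hz, A0_tq, hω, add_sub_cancel_left]
  filter_upwards [h1, h2] with ω h1 h2
  rw [hnu] at h1
  rw [h1]
  unfold Sm
  refine Finset.sum_congr rfl fun j _ => ?_
  rw [← h2 j]
  have : ((j : ℝ) / n) • v = (j : ℝ) • u := by rw [hu, smul_smul, mul_one_div]
  rw [this]

end core


section fin
variable {Ω : Type*} [MeasurableSpace Ω] {P : Measure Ω}
variable {V : Type*} [NormedAddCommGroup V] [NormedSpace ℝ V] [MeasurableSpace V]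
  [BorelSpace V] [SecondCountableTopology V] [CompleteSpace V]

lemma tq_zero : tq 0 = 0 := by have := tq_add 0 0; simpa using this

lemma mkProc {A : T3 → E3 → Ω → V} {p α r s M : ℝ} (hp : 0 < p) (hα : 0 < α) (hM : 0 < M)
    (hm : ∀ (x : T3) (v : E3), ‖v‖ ≤ 1/4 → Measurable (A x v))
    (hadd : ∀ (x : T3) (v : E3), ‖v‖ ≤ 1/4 → ∀ c ∈ Set.Icc (0:ℝ) 1,
          ∀ᵐ ω ∂P, A x v ω = A x (c • v) ω + A (x + tq (c • v)) ((1 - c) • v) ω)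
    (hseg : ∀ (x : T3) (v : E3), 0 < ‖v‖ → ‖v‖ < r → ‖v‖ ≤ 1/4 →
          ∫⁻ ω, ENNReal.ofReal ‖A x v ω‖ ^ p ∂P ≤ ENNReal.ofReal (M * ‖v‖ ^ (p * α)))
    (htri : ∀ (x : T3) (v w : E3), ‖v‖ ≤ 1/4 → ‖w‖ ≤ 1/4 → ‖v - w‖ ≤ 1/4 →
          triArea v w < s →
          ∫⁻ ω, ENNReal.ofReal
              ‖A x v ω + A (x + tq v) (w - v) ω + A (x + tq w) (-w) ω‖ ^ p ∂P
            ≤ ENNReal.ofReal (M * triArea v w ^ (p * α / 2))) :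
    Proc P (fun x y ω => A (tq x) (y - x) ω) p α r s M where
  m := fun x y h => hm _ _ h
  seg := by
    intro x y h1 h2
    rcases (norm_nonneg (y - x)).eq_or_lt with h0 | h0
    · have e : y - x = 0 := norm_eq_zero.1 h0.symm
      have hz : ∀ᵐ ω ∂P, ENNReal.ofReal ‖A (tq x) (y - x) ω‖ ^ p = 0 := by
        filter_upwards [hadd (tq x) 0 (by simp) 0 (by simp)] with ω hω
        simp [tq_zero] at hω
        rw [e, hω]
        simp [hp]
      rw [lintegral_congr_ae hz]
      simp
    · exact hseg _ _ h0 h1 h2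
  tri := by
    intro x y z h1 h2 h3 h4
    have e1 : ∀ a b : E3, tq a + tq (b - a) = tq b := fun a b => by
      rw [← tq_add]; congr 1; abel
    have ht := triArea_le (y - x) (z - x)
    rw [show z - x - (y - x) = z - y by abel] at ht
    have h := htri (tq x) (y - x) (z - x) h1 h2
      (by rw [show y - x - (z - x) = -(z - y) by abel, norm_neg]; exact h3) (ht.trans_lt h4)
    rw [e1, e1, show z - x - (y - x) = z - y by abel, neg_sub] at h
    refine h.trans (ENNReal.ofReal_le_ofReal ?_)
    have := triArea_nonneg (y - x) (z - x)
    gcongr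
  per := by
    intro k x y ω
    rw [tq_add, tq_pt, add_zero, add_sub_add_right_eq_sub]

lemma Sm_eq {A : T3 → E3 → Ω → V} {ρ : ℝ}
    (hadd : ∀ (x : T3) (v : E3), ‖v‖ ≤ 1/4 → ∀ c ∈ Set.Icc (0:ℝ) 1,
          ∀ᵐ ω ∂P, A x v ω = A x (c • v) ω + A (x + tq (c • v)) ((1 - c) • v) ω)
    (hmod : ∀ x y, ‖y - x‖ ≤ ρ →
      ∀ᵐ ω ∂P, ft (fun x y => A (tq x) (y - x) ω) x y = A (tq x) (y - x) ω)
    (hcont : ∀ᵐ ω ∂P, ContinuousOn (fun q : E3 × E3 => ft (fun x y => A (tq x) (y - x) ω) q.1 q.2)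
      {q | ‖q.2 - q.1‖ < ρ})
    {n m : ℕ} (hn : 0 < n) (hm : 0 < m)
    (U : Set (T3 × E3)) (hU4 : ∀ q ∈ U, ‖q.2‖ ≤ 1/4) (hUn : ∀ q ∈ U, ‖q.2‖ / n < ρ)
    (hUm : ∀ q ∈ U, ‖q.2‖ / m < ρ) :
    ∀ᵐ ω ∂P, ∀ q ∈ U, Sm A n q.1 q.2 ω = Sm A m q.1 q.2 ω := by
  obtain ⟨D, hDc, hDd⟩ := TopologicalSpace.exists_countable_dense U
  have hD : ∀ᵐ ω ∂P, ∀ q ∈ D, Sm A n q.1.1 q.1.2 ω = Sm A m q.1.1 q.1.2 ω := by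
    rw [ae_ball_iff hDc]
    intro q _
    filter_upwards [Sm_mod hadd hmod hn (x := q.1.1) (hU4 _ q.2) (hUn _ q.2),
      Sm_mod hadd hmod hm (x := q.1.1) (hU4 _ q.2) (hUm _ q.2)] with ω h1 h2
    rw [h1, h2]
  filter_upwards [hD, hcont] with ω h1 h2 q hq
  have c1 : Continuous fun q : U => Sm A n q.1.1 q.1.2 ω := by
    have : ContinuousOn (fun q : T3 × E3 => Sm A n q.1 q.2 ω) U := fun q hq =>
      (Sm_cont h2 hn (hUn q hq)).continuousWithinAt
    exact continuousOn_iff_continuous_restrict.1 this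
  have c2 : Continuous fun q : U => Sm A m q.1.1 q.1.2 ω := by
    have : ContinuousOn (fun q : T3 × E3 => Sm A m q.1 q.2 ω) U := fun q hq =>
      (Sm_cont h2 hm (hUm q hq)).continuousWithinAt
    exact continuousOn_iff_continuous_restrict.1 this
  exact congrFun (Continuous.ext_on hDd c1 c2 h1) ⟨q, hq⟩

lemma Sm4_bd {A : T3 → E3 → Ω → V} {ω : Ω} {ρ K β : ℝ} (hβ : 0 < β) (hK : 0 ≤ K)
    (h : ∀ x y, 0 < ‖y - x‖ → ‖y - x‖ ≤ ρ →
        ‖ft (fun x y => A (tq x) (y - x) ω) x y‖ ≤ K * ‖y - x‖ ^ β)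
    (x : T3) {v : E3} (h0 : 0 < ‖v‖) (hv : ‖v‖ / 4 ≤ ρ) :
    ‖Sm A 4 x v ω‖ ≤ 4 * K * ‖v‖ ^ β := by
  unfold Sm
  refine (norm_sum_le _ _).trans ?_
  have : ∀ j ∈ Finset.range 4, ‖A0 A (x + tq (((j : ℝ) / (4:ℕ)) • v)) ((1 / ((4:ℕ) : ℝ)) • v) ω‖
      ≤ K * ‖v‖ ^ β := by
    intro j _
    obtain ⟨z, hz⟩ := tq_surj (x + tq (((j : ℝ) / (4:ℕ)) • v))
    have hn : ‖(1 / ((4:ℕ) : ℝ)) • v‖ = ‖v‖ / 4 := by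
      rw [norm_smul, Real.norm_of_nonneg (by positivity)]; push_cast; ring
    rw [← hz, A0_tq]
    refine (h _ _ ?_ ?_).trans ?_
    · rw [add_sub_cancel_left, hn]; positivity
    · rw [add_sub_cancel_left, hn]; exact hv
    · rw [add_sub_cancel_left, hn]
      gcongr
      linarith
  refine (Finset.sum_le_sum this).trans ?_
  simp
  linarith

theorem final {A : T3 → E3 → Ω → V} {p α β r s M : ℝ}
    (hF : Proc P (fun x y ω => A (tq x) (y - x) ω) p α r s M)
    (hadd : ∀ (x : T3) (v : E3), ‖v‖ ≤ 1/4 → ∀ c ∈ Set.Icc (0:ℝ) 1,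
          ∀ᵐ ω ∂P, A x v ω = A x (c • v) ω + A (x + tq (c • v)) ((1 - c) • v) ω)
    (hp : 0 < p) (hα : 0 < α) (hα1 : α ≤ 1) (hβ : 0 < β) (hβ1 : β ≤ 1)
    (hγ : 24 < p * (α - β)) (hM : 0 < M)
    (hr : r ∈ Set.Ioo (0:ℝ) 1) (hs : s ∈ Set.Ioo (0:ℝ) 1) (hC : 0 < 14 * (1 + 4 * GG β)) :
    ∃ Atil : T3 → E3 → Ω → V,
      (∀ (x : T3) (v : E3), ‖v‖ ≤ 1/4 → ∀ᵐ ω ∂P, Atil x v ω = A x v ω) ∧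
      (∀ᵐ ω ∂P, ContinuousOn (fun q : T3 × E3 => Atil q.1 q.2 ω)
            {q : T3 × E3 | ‖q.2‖ ≤ 1/4}) ∧
      ∫⁻ ω, (⨆ (x : T3) (v : E3) (_ : 0 < ‖v‖) (_ : ‖v‖ < r) (_ : ‖v‖ ≤ 1/4),
              ENNReal.ofReal (‖Atil x v ω‖ / ‖v‖ ^ β) ^ p) ∂P
            ≤ ENNReal.ofReal
                (((4 * (14 * (1 + 4 * GG β))) ^ p * (2000 * 2 ^ p * 256 ^ 6)) * M *
                  ((s ^ (-(6:ℝ)) + r ^ (-(12:ℝ))) * r ^ (p * (α - β)) + 1)) := by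
  obtain ⟨hmod, hcont, Z, hZm, hZi, hZ⟩ := core hF hp hα hα1 hβ hβ1 hγ hM hr hs
  have hm0 : 0 < min r (1/4) := lt_min hr.1 (by norm_num)
  set ρ := min r (1/4) / 2 with hρ
  have hρ0 : 0 < ρ := by linarith
  obtain ⟨n, hn⟩ := exists_nat_gt ((1/4) / ρ)
  have hnR : (0:ℝ) < n := lt_trans (by positivity) hn
  have hn0 : 0 < n := by exact_mod_cast hnR
  have hnv : ∀ v : E3, ‖v‖ ≤ 1/4 → ‖v‖ / n < ρ := by
    intro v hv
    rw [div_lt_iff₀ hρ0] at hn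
    rw [div_lt_iff₀ hnR]
    linarith
  have h4v : ∀ v : E3, ‖v‖ < r → ‖v‖ ≤ 1/4 → ‖v‖ / (4:ℕ) < ρ := by
    intro v h1 h2
    have := le_min h1.le h2
    push_cast
    linarith
  set C := 14 * (1 + 4 * GG β) with hCdef
  refine ⟨Sm A n, fun x v hv => Sm_mod hadd hmod hn0 hv (hnv v hv), ?_, ?_⟩
  · filter_upwards [hcont] with ω h q hq
    exact (Sm_cont h hn0 (hnv q.2 hq)).continuousWithinAt
  · have hEq := Sm_eq (m := 4) hadd hmod hcont hn0 (by norm_num)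
      {q : T3 × E3 | ‖q.2‖ < r ∧ ‖q.2‖ ≤ 1/4} (fun q hq => hq.2) (fun q hq => hnv _ hq.2)
      (fun q hq => h4v _ hq.1 hq.2)
    have hae : ∀ᵐ ω ∂P, (⨆ (x : T3) (v : E3) (_ : 0 < ‖v‖) (_ : ‖v‖ < r) (_ : ‖v‖ ≤ 1/4),
              ENNReal.ofReal (‖Sm A n x v ω‖ / ‖v‖ ^ β) ^ p) ≤
              ENNReal.ofReal ((4 * C) ^ p) * Z ω := by
      filter_upwards [hEq, hZ] with ω h1 h2
      obtain ⟨hfin, h2⟩ := h2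
      refine iSup_le fun x => iSup_le fun v => iSup_le fun hv0 => iSup_le fun hvr =>
        iSup_le fun hv4 => ?_
      rw [h1 (x, v) ⟨hvr, hv4⟩]
      have hb := Sm4_bd (K := (Z ω).toReal ^ (1/p) * C) hβ (by positivity) h2 x hv0
        (by have := (h4v v hvr hv4).le; push_cast at this; exact this)
      have hvp : 0 < ‖v‖ ^ β := Real.rpow_pos_of_pos hv0 β
      have hle : ‖Sm A 4 x v ω‖ / ‖v‖ ^ β ≤ 4 * C * (Z ω).toReal ^ (1/p) := by
        rw [div_le_iff₀ hvp]
        refine hb.trans (le_of_eq (by ring))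
      calc ENNReal.ofReal (‖Sm A 4 x v ω‖ / ‖v‖ ^ β) ^ p
          ≤ ENNReal.ofReal (4 * C * (Z ω).toReal ^ (1/p)) ^ p := by gcongr
        _ = ENNReal.ofReal ((4 * C) ^ p) * Z ω := by
          rw [ENNReal.ofReal_rpow_of_nonneg (by positivity) hp.le,
            Real.mul_rpow (by positivity) (by positivity), ← Real.rpow_mul (by positivity),
            one_div_mul_cancel hp.ne', Real.rpow_one, ENNReal.ofReal_mul (by positivity),
            ENNReal.ofReal_toReal hfin]
    refine (lintegral_mono_ae hae).trans ?_
    rw [lintegral_const_mul _ hZm]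
    refine (mul_le_mul_right hZi _).trans ?_
    rw [← ENNReal.ofReal_mul (by positivity)]
    apply ENNReal.ofReal_le_ofReal
    obtain ⟨hr0, hr1⟩ := hr
    obtain ⟨hs0, hs1⟩ := hs
    set X := (s ^ (-(6:ℝ)) + r ^ (-(12:ℝ))) * r ^ (p * (α - β)) with hX
    have hq : 256 ^ 6 * (s ^ (-(6:ℝ)) + r ^ (-(12:ℝ))) * r ^ (p * (α - β)) + 1
        ≤ 256 ^ 6 * (X + 1) := by
      rw [mul_assoc, ← hX]; linarith
    calc _ ≤ (4 * C) ^ p * (2000 * 2 ^ p * M * (256 ^ 6 * (X + 1))) := by gcongr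
      _ = _ := by ring

end fin


end helpers

/-- Kolmogorov-type continuity criterion for additive, `V`-valued stochastic processes
indexed by the segments `𝒳 = {(x,v) : x ∈ 𝕋³, v ∈ ℝ³, ‖v‖ ≤ 1/4}`: the constant `lam`
depends only on `p`, `α`, `ᾱ`. -/
theorem stmt_1 (p α ᾱ : ℝ) (hp : 0 < p) (hα : α ∈ Set.Ioc (0:ℝ) 1)
    (hᾱ : ᾱ ∈ Set.Ioo (0:ℝ) (α - 24 / p)) :
    ∃ lam : ℝ, 0 < lam ∧
      ∀ (Ω : Type uo) [MeasurableSpace Ω] (P : Measure Ω) [IsProbabilityMeasure P]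
        (V : Type uv) [NormedAddCommGroup V] [NormedSpace ℝ V] [FiniteDimensional ℝ V]
        [MeasurableSpace V] [BorelSpace V]
        (A : T3 → E3 → Ω → V) (r s M : ℝ),
        r ∈ Set.Ioo (0:ℝ) 1 → s ∈ Set.Ioo (0:ℝ) 1 → 0 < M →
        -- each `A(ℓ)` is measurable
        (∀ (x : T3) (v : E3), ‖v‖ ≤ 1/4 → Measurable (A x v)) →
        -- almost-sure additivity
        (∀ (x : T3) (v : E3), ‖v‖ ≤ 1/4 → ∀ c ∈ Set.Icc (0:ℝ) 1,
          ∀ᵐ ω ∂P, A x v ω = A x (c • v) ω + A (x + tq (c • v)) ((1 - c) • v) ω) →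
        -- moment bound on short segments
        (∀ (x : T3) (v : E3), 0 < ‖v‖ → ‖v‖ < r → ‖v‖ ≤ 1/4 →
          ∫⁻ ω, ENNReal.ofReal ‖A x v ω‖ ^ p ∂P ≤ ENNReal.ofReal (M * ‖v‖ ^ (p * α))) →
        -- moment bound on small triangle boundaries
        (∀ (x : T3) (v w : E3), ‖v‖ ≤ 1/4 → ‖w‖ ≤ 1/4 → ‖v - w‖ ≤ 1/4 →
          triArea v w < s →
          ∫⁻ ω, ENNReal.ofReal
              ‖A x v ω + A (x + tq v) (w - v) ω + A (x + tq w) (-w) ω‖ ^ p ∂P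
            ≤ ENNReal.ofReal (M * triArea v w ^ (p * α / 2))) →
        ∃ Atil : T3 → E3 → Ω → V,
          -- `Atil` is a modification of `A`
          (∀ (x : T3) (v : E3), ‖v‖ ≤ 1/4 → ∀ᵐ ω ∂P, Atil x v ω = A x v ω) ∧
          -- `Atil` is almost surely continuous on `𝒳`
          (∀ᵐ ω ∂P, ContinuousOn (fun q : T3 × E3 => Atil q.1 q.2 ω)
            {q : T3 × E3 | ‖q.2‖ ≤ 1/4}) ∧
          -- moment bound on the Hölder-type supremum
          ∫⁻ ω, (⨆ (x : T3) (v : E3) (_ : 0 < ‖v‖) (_ : ‖v‖ < r) (_ : ‖v‖ ≤ 1/4),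
              ENNReal.ofReal (‖Atil x v ω‖ / ‖v‖ ^ ᾱ) ^ p) ∂P
            ≤ ENNReal.ofReal
                (lam * M * ((s ^ (-(6:ℝ)) + r ^ (-(12:ℝ))) * r ^ (p * (α - ᾱ)) + 1)) := by
  obtain ⟨hα0, hα1⟩ := hα
  obtain ⟨hb0, hb1⟩ := hᾱ
  have hdp : 0 < 24 / p := by positivity
  have hγ : 24 < p * (α - ᾱ) := by
    have : 24 / p < α - ᾱ := by linarith
    rw [div_lt_iff₀ hp] at this
    linarith
  have hG : 0 < GG ᾱ := by exact GG_pos hb0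
  have hC : 0 < 14 * (1 + 4 * GG ᾱ) := by positivity
  refine ⟨(4 * (14 * (1 + 4 * GG ᾱ))) ^ p * (2000 * 2 ^ p * 256 ^ 6), by positivity, ?_⟩
  intro Ω _ P _ V _ _ _ _ _ A r s M hr hs hM hm hadd hseg htri
  have : CompleteSpace V := FiniteDimensional.complete ℝ V
  have : ProperSpace V := FiniteDimensional.proper_real V
  exact final (mkProc hp hα0 hM hm hadd hseg htri) hadd hp hα0 hα1 hb0 (by linarith) hγ hM hr hs hC
end
end

section
/- For every κ ∈ (1/2,1) there exists C > 0 with the following property. For every x ∈ ℝ³, every v ∈ ℝ³ with 0 < ‖v‖ ≤ 1/4, and every t ∈ (0,1), writing c(k) := ‖v‖ ∫₀¹ exp(−2πi(⟨k,x⟩ + s⟨k,v⟩)) ds ∈ ℂ for k ∈ ℤ³, one has ∑_{k∈ℤ³} (1+‖k‖²)^{−κ} e^{−t‖k‖²} |c(k)|² ≤ C t^{2κ−2} ‖v‖. -/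
noncomputable section
open scoped ENNReal

/-- `kn2 k = ‖k‖²` for `k ∈ ℤ³`. -/
def kn2 (k : Fin 3 → ℤ) : ℝ := ∑ i, ((k i : ℝ)) ^ 2

/-- The `k`-th Fourier coefficient of the line-integration measure `δ_ℓ` on the torus
associated to the segment `ℓ = (x, v)`:
`c(k) = ‖v‖ ∫₀¹ exp(−2πi(⟨k,x⟩ + s⟨k,v⟩)) ds`. -/
def lineCoef (x v : EuclideanSpace ℝ (Fin 3)) (k : Fin 3 → ℤ) : ℂ :=
  (‖v‖ : ℂ) * ∫ s in (0:ℝ)..1,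
    Complex.exp (-2 * (Real.pi : ℂ) * Complex.I *
      ((((∑ i, (k i : ℝ) * x i) + s * ∑ i, (k i : ℝ) * v i : ℝ)) : ℂ))

lemma aux_nat (w : ℝ) (hw : 0 < w) (hw1 : w ≤ 1/4) :
    ∑' n : ℕ, ENNReal.ofReal (1 / (1 + w^2 * (n:ℝ)^2)) ≤ ENNReal.ofReal (4 / w) := by
  apply ENNReal.tsum_le_of_sum_range_le
  intro N
  rw [← ENNReal.ofReal_sum_of_nonneg (fun i _ => by positivity)]
  apply ENNReal.ofReal_le_ofReal
  have h : ∀ N : ℕ, ∑ i ∈ Finset.range N, 1 / (1 + w^2 * (i:ℝ)^2) ≤ 4 / w - 4 / w / (1 + w * N) := by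
    intro N
    induction N with
    | zero => simp
    | succ n ih =>
      rw [Finset.sum_range_succ]
      have hu : 0 ≤ w * n := by positivity
      have key : 1 / (1 + w^2 * (n:ℝ)^2) ≤ 4 / w / (1 + w * n) - 4 / w / (1 + w * (n+1:ℕ)) := by
        have e : 4 / w / (1 + w * n) - 4 / w / (1 + w * (n+1:ℕ)) = 4 / ((1 + w * n) * (1 + w * n + w)) := by
          push_cast
          have : 1 + w * n + w ≠ 0 := by positivity
          have : 1 + w * (n+1) ≠ 0 := by positivity
          field_simp
          ring
        rw [e, div_le_div_iff₀ (by positivity) (by positivity)]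
        have : w^2 * (n:ℝ)^2 = (w*n)^2 := by ring
        rw [this]
        nlinarith [sq_nonneg (w*n-1), mul_nonneg hu hw.le]
      linarith
  refine (h N).trans ?_
  have : 0 ≤ 4 / w / (1 + w * N) := by positivity
  linarith

lemma aux_int (w : ℝ) (hw : 0 < w) (hw1 : w ≤ 1/4) :
    ∑' n : ℤ, ENNReal.ofReal (1 / (1 + w^2 * (n:ℝ)^2)) ≤ ENNReal.ofReal (8 / w) := by
  rw [tsum_of_nat_of_neg_add_one ENNReal.summable ENNReal.summable]
  have e : ENNReal.ofReal (8 / w) = ENNReal.ofReal (4 / w) + ENNReal.ofReal (4 / w) := by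
    rw [← ENNReal.ofReal_add (by positivity) (by positivity)]; congr 1; ring
  rw [e]
  refine add_le_add ?_ ?_
  · simpa using aux_nat w hw hw1
  · refine le_trans (ENNReal.tsum_le_tsum fun n => ?_) (aux_nat w hw hw1)
    apply ENNReal.ofReal_le_ofReal
    push_cast
    have : (0:ℝ) ≤ n := by positivity
    apply one_div_le_one_div_of_le (by positivity)
    have : (n:ℝ)^2 ≤ (-1 + -(n:ℝ))^2 := by nlinarith
    have := mul_le_mul_of_nonneg_left this (sq_nonneg w)
    ring_nf at this ⊢
    linarith

lemma aux_shift (w a : ℝ) (hw : w ≠ 0) (hw1 : |w| ≤ 1/4) :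
    ∑' n : ℤ, ENNReal.ofReal (2 / (1 + (n * w + a)^2)) ≤ ENNReal.ofReal (32 / |w|) := by
  have hp : 0 < |w| := abs_pos.mpr hw
  set m := ⌊a / w⌋
  rw [← (Equiv.subRight m).tsum_eq]
  have e : ENNReal.ofReal (32 / |w|) = ENNReal.ofReal 4 * ENNReal.ofReal (8 / |w|) := by
    rw [← ENNReal.ofReal_mul (by positivity)]; congr 1; ring
  rw [e]
  refine le_trans ?_ (mul_le_mul_right (aux_int |w| hp hw1) _)
  rw [← ENNReal.tsum_mul_left]
  refine ENNReal.tsum_le_tsum fun n => ?_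
  rw [← ENNReal.ofReal_mul (by positivity)]
  apply ENNReal.ofReal_le_ofReal
  simp only [Equiv.subRight_apply, sq_abs]
  push_cast
  have h1 : (m:ℝ) ≤ a / w := Int.floor_le _
  have h2 : a / w < m + 1 := Int.lt_floor_add_one _
  obtain ⟨θ, hθ⟩ : ∃ θ, θ = a / w - m := ⟨_, rfl⟩
  have ha : a = w * (m + θ) := by rw [hθ]; field_simp; ring
  have e2 : ((n:ℝ) - m) * w + a = w * (n + θ) := by rw [ha]; ring
  rw [e2, mul_one_div, div_le_div_iff₀ (by positivity) (by positivity)]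
  have h3 : (n:ℝ)^2 / 2 - 1 ≤ (n + θ)^2 := by
    nlinarith [sq_nonneg ((n:ℝ) + 2 * θ)]
  have h4 := mul_le_mul_of_nonneg_left h3 (sq_nonneg w)
  have h5 : w^2 ≤ 1/16 := by
    rw [← sq_abs]; nlinarith
  nlinarith

lemma aux_coef (x v : EuclideanSpace ℝ (Fin 3)) (k : Fin 3 → ℤ) :
    ‖lineCoef x v k‖ ^ 2 ≤ ‖v‖^2 * (2 / (1 + (∑ i, (k i : ℝ) * v i)^2)) := by
  unfold lineCoef
  set X := ∑ i, (k i : ℝ) * x i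
  set y := ∑ i, (k i : ℝ) * v i
  rw [norm_mul, mul_pow, Complex.norm_real, norm_norm]
  apply mul_le_mul_of_nonneg_left _ (sq_nonneg _)
  have hn : ∀ r : ℝ, ‖Complex.exp (-2 * (Real.pi : ℂ) * Complex.I * (r:ℂ))‖ = 1 := by
    intro r
    rw [← Complex.norm_exp_ofReal_mul_I (-2 * Real.pi * r)]
    congr 2; push_cast; ring
  set J := ∫ s in (0:ℝ)..1, Complex.exp (-2 * (Real.pi : ℂ) * Complex.I * ((X + s * y : ℝ) : ℂ)) with hJ
  have h1 : ‖J‖ ≤ 1 := by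
    have := intervalIntegral.norm_integral_le_of_norm_le_const (a := (0:ℝ)) (b := 1) (C := 1)
      (f := fun s : ℝ => Complex.exp (-2 * (Real.pi : ℂ) * Complex.I * ((X + s * y : ℝ) : ℂ)))
      (fun s _ => (hn _).le)
    rw [sub_zero, abs_one, mul_one] at this
    exact this
  have h2 : ‖J‖ * |y| ≤ 1 := by
    by_cases hy : y = 0
    · simp [hy]
    have hc : (-2 * (Real.pi : ℂ) * Complex.I * y) ≠ 0 := by
      simp [Real.pi_ne_zero, hy]
    have e : J = Complex.exp (-2 * (Real.pi : ℂ) * Complex.I * (X:ℂ)) *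
        ((Complex.exp (-2 * (Real.pi : ℂ) * Complex.I * (y:ℂ)) - 1) / (-2 * (Real.pi : ℂ) * Complex.I * y)) := by
      have := integral_exp_mul_complex (a := 0) (b := 1) hc
      simp only [Complex.ofReal_one, mul_one, Complex.ofReal_zero, mul_zero, Complex.exp_zero] at this
      rw [← this, ← intervalIntegral.integral_const_mul, hJ]
      congr 1; ext s
      rw [← Complex.exp_add]; congr 1; push_cast; ring
    rw [e, norm_mul, hn, one_mul, norm_div]
    have h3 : ‖Complex.exp (-2 * (Real.pi : ℂ) * Complex.I * (y:ℂ)) - 1‖ ≤ 2 := by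
      refine (norm_sub_le _ _).trans ?_
      rw [hn]; norm_num
    have h4 : ‖(-2 * (Real.pi : ℂ) * Complex.I * y)‖ = 2 * Real.pi * |y| := by
      simp [abs_of_pos Real.pi_pos]
    rw [h4, div_mul_eq_mul_div]
    have : 0 < |y| := abs_pos.mpr hy
    have := Real.pi_pos
    rw [div_le_one (by positivity)]
    nlinarith [Real.pi_gt_three]
  rw [le_div_iff₀ (by positivity)]
  have h5 : (‖J‖ * |y|)^2 ≤ 1 := by
    have : 0 ≤ ‖J‖ * |y| := by positivity
    nlinarith
  rw [mul_pow, sq_abs] at h5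
  nlinarith [norm_nonneg J]

lemma aux_sum (b : ℝ) (hb : 1 < b) :
    ∑' n : ℤ, ENNReal.ofReal ((1 + (n:ℝ)^2) ^ (-(b/2))) ≠ ⊤ := by
  apply Summable.tsum_ofReal_ne_top
  refine Summable.of_norm_bounded_eventually (Real.summable_abs_int_rpow hb) ?_
  have : ∀ᶠ n : ℤ in Filter.cofinite, n ≠ 0 := by
    exact (Set.finite_singleton (0:ℤ)).eventually_cofinite_notMem
  filter_upwards [this] with n hn
  have hn' : 0 < |(n:ℝ)| := by simpa using hn
  rw [Real.norm_of_nonneg (by positivity)]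
  have : |(n:ℝ)| ^ (-b) = ((n:ℝ)^2) ^ (-(b/2)) := by
    rw [← sq_abs, ← Real.rpow_natCast, ← Real.rpow_mul hn'.le]
    congr 1; push_cast; ring
  rw [this]
  have : 0 < (n:ℝ)^2 := by rw [← sq_abs]; positivity
  apply Real.rpow_le_rpow_of_nonpos this <;> linarith

lemma aux_weight (κ t K m n : ℝ) (hκ : κ ∈ Set.Ioo (1/2 : ℝ) 1) (ht : t ∈ Set.Ioo (0:ℝ) 1)
    (hK : m^2 + n^2 ≤ K) :
    (1 + K) ^ (-κ) * Real.exp (-t * K) ≤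
      Real.exp 1 * t ^ (2 * κ - 2) * ((1 + m^2) ^ (-((2-κ)/2)) * (1 + n^2) ^ (-((2-κ)/2))) := by
  obtain ⟨hk1, hk2⟩ := hκ
  obtain ⟨ht0, ht1⟩ := ht
  have hK1 : 0 < 1 + K := by nlinarith [sq_nonneg m, sq_nonneg n]
  set s := t * (1 + K) with hs
  have hs0 : 0 < s := by positivity
  have h1 : s ^ (2 - 2*κ) ≤ Real.exp s := by
    have h := Real.add_one_le_exp s
    rcases le_total s 1 with h' | h'
    · have := Real.rpow_le_one hs0.le h' (by linarith : 0 ≤ 2 - 2*κ)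
      linarith
    · have := Real.rpow_le_rpow_of_exponent_le h' (by linarith : 2 - 2*κ ≤ 1)
      rw [Real.rpow_one] at this
      linarith
  have h2 : Real.exp (-t * K) ≤ Real.exp 1 * s ^ (2*κ - 2) := by
    have a1 : Real.exp (-t*K) ≤ Real.exp 1 * (Real.exp s)⁻¹ := by
      rw [← Real.exp_neg, ← Real.exp_add]
      apply Real.exp_le_exp.mpr
      rw [hs]; linarith
    refine a1.trans (mul_le_mul_of_nonneg_left ?_ (Real.exp_pos _).le)
    have : s ^ (2*κ-2) = (s ^ (2 - 2*κ))⁻¹ := by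
      rw [← Real.rpow_neg hs0.le]; congr 1; ring
    rw [this]
    exact inv_anti₀ (by positivity) h1
  have h3 : (1 + K) ^ (-κ) * (1 + K) ^ (2*κ-2) ≤ (1 + m^2) ^ (-((2-κ)/2)) * (1 + n^2) ^ (-((2-κ)/2)) := by
    rw [← Real.rpow_add hK1, ← Real.mul_rpow (by positivity) (by positivity)]
    have : (1 + K) ^ (-κ + (2*κ-2)) = ((1+K)^2) ^ (-((2-κ)/2)) := by
      rw [← Real.rpow_natCast, ← Real.rpow_mul hK1.le]
      congr 1; push_cast; ring
    rw [this]
    apply Real.rpow_le_rpow_of_nonpos (by positivity)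
    · nlinarith [sq_nonneg m, sq_nonneg n, mul_nonneg (sq_nonneg m) (sq_nonneg n)]
    · linarith
  calc _ ≤ (1 + K) ^ (-κ) * (Real.exp 1 * s ^ (2*κ - 2)) := by gcongr
    _ = Real.exp 1 * t ^ (2*κ-2) * ((1 + K) ^ (-κ) * (1 + K) ^ (2*κ-2)) := by
      rw [hs, Real.mul_rpow ht0.le hK1.le]; ring
    _ ≤ _ := by gcongr

theorem stmt_2 (κ : ℝ) (hκ : κ ∈ Set.Ioo (1/2 : ℝ) 1) :
    ∃ C : ℝ, 0 < C ∧
      ∀ (x v : EuclideanSpace ℝ (Fin 3)) (t : ℝ),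
        0 < ‖v‖ → ‖v‖ ≤ 1/4 → t ∈ Set.Ioo (0:ℝ) 1 →
        ∑' k : Fin 3 → ℤ,
            ENNReal.ofReal
              ((1 + kn2 k) ^ (-κ) * Real.exp (-t * kn2 k) * ‖lineCoef x v k‖ ^ 2)
          ≤ ENNReal.ofReal (C * t ^ (2 * κ - 2) * ‖v‖) := by
  have hS := aux_sum (2 - κ) (by linarith [hκ.2])
  set g : ℤ → ℝ := fun n => (1 + (n:ℝ)^2) ^ (-((2-κ)/2)) with hg
  have hg0 : ∀ n, 0 ≤ g n := fun n => by simp only [hg]; positivity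
  set S := ∑' n : ℤ, ENNReal.ofReal (g n) with hSdef
  refine ⟨64 * Real.exp 1 * (S.toReal^2 + 1), by positivity, ?_⟩
  intro x v t hv hv1 ht
  have ht0 := ht.1
  obtain ⟨i, hi⟩ : ∃ i, ‖v‖ ≤ 2 * |v i| := by
    by_contra! h
    have e := EuclideanSpace.norm_sq_eq v
    simp only [Fin.sum_univ_three, Real.norm_eq_abs] at e
    nlinarith [h 0, h 1, h 2, abs_nonneg (v 0), abs_nonneg (v 1), abs_nonneg (v 2)]
  have hi1 : |v i| ≤ 1/4 := (PiLp.norm_apply_le v i).trans hv1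
  have hi0 : 0 < |v i| := by linarith
  rw [← (Fin.insertNthEquiv (fun _ => ℤ) i).tsum_eq, ENNReal.tsum_prod', ENNReal.tsum_comm,
    ← (finTwoArrowEquiv ℤ).symm.tsum_eq, ENNReal.tsum_prod']
  set A : ℝ := Real.exp 1 * t ^ (2*κ-2) * ‖v‖^2 with hA
  have hA0 : 0 ≤ A := by positivity
  calc _ ≤ ∑' (m : ℤ) (n : ℤ), ENNReal.ofReal A * ENNReal.ofReal (g m) * ENNReal.ofReal (g n) *
          ENNReal.ofReal (32 / |v i|) := by
        refine ENNReal.tsum_le_tsum fun m => ENNReal.tsum_le_tsum fun n => ?_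
        set a : ℝ := m * v (i.succAbove 0) + n * v (i.succAbove 1) with ha
        refine le_trans ?_ (mul_le_mul_right (aux_shift (v i) a (abs_pos.mp hi0) hi1) _)
        rw [← ENNReal.tsum_mul_left]
        refine ENNReal.tsum_le_tsum fun l => ?_
        rw [← ENNReal.ofReal_mul hA0, ← ENNReal.ofReal_mul (mul_nonneg hA0 (hg0 m)),
          ← ENNReal.ofReal_mul (mul_nonneg (mul_nonneg hA0 (hg0 m)) (hg0 n))]
        apply ENNReal.ofReal_le_ofReal
        set k := (Fin.insertNthEquiv (fun _ => ℤ) i) (l, (finTwoArrowEquiv ℤ).symm (m, n)) with hk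
        have hk0 : k i = l := by simp [hk]
        have hk1 : k (i.succAbove 0) = m := by simp [hk]
        have hk2 : k (i.succAbove 1) = n := by simp [hk]
        have hy : ∑ j, (k j : ℝ) * v j = l * v i + a := by
          rw [Fin.sum_univ_succAbove _ i, Fin.sum_univ_two, hk0, hk1, hk2]
        have hkn : (m:ℝ)^2 + (n:ℝ)^2 ≤ kn2 k := by
          unfold kn2
          rw [Fin.sum_univ_succAbove _ i, Fin.sum_univ_two, hk0, hk1, hk2]
          nlinarith [sq_nonneg (l:ℝ)]
        have w1 := aux_weight κ t (kn2 k) m n hκ ht hkn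
        have w2 := aux_coef x v k
        rw [hy] at w2
        have := mul_le_mul w1 w2 (sq_nonneg _) (by positivity)
        refine this.trans (le_of_eq ?_)
        simp only [hA, hg]; ring
    _ = ENNReal.ofReal A * S * S * ENNReal.ofReal (32 / |v i|) := by
        simp only [ENNReal.tsum_mul_right, ENNReal.tsum_mul_left, ← hSdef]
    _ = ENNReal.ofReal (A * S.toReal * S.toReal * (32 / |v i|)) := by
        clear_value A
        rw [ENNReal.ofReal_mul (p := A * S.toReal * S.toReal) (by positivity),
          ENNReal.ofReal_mul (p := A * S.toReal) (by positivity),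
          ENNReal.ofReal_mul (p := A) hA0, ENNReal.ofReal_toReal hS]
    _ ≤ _ := by
        apply ENNReal.ofReal_le_ofReal
        have h1 : ‖v‖^2 * (32 / |v i|) ≤ 64 * ‖v‖ := by
          rw [mul_div_assoc', div_le_iff₀ hi0]
          nlinarith
        have h2 : 0 ≤ Real.exp 1 * t ^ (2*κ-2) := by positivity
        calc A * S.toReal * S.toReal * (32 / |v i|)
            = Real.exp 1 * t ^ (2*κ-2) * S.toReal^2 * (‖v‖^2 * (32 / |v i|)) := by rw [hA]; ring
          _ ≤ Real.exp 1 * t ^ (2*κ-2) * (S.toReal^2 + 1) * (64 * ‖v‖) := by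
            gcongr; linarith
          _ = _ := by ring
end
end

section
/- Let d ≥ 1, γ ∈ (0,d), α ∈ (0,γ), and let k be a multi-index on ℝ^d with |k| ≤ 1 (so ∂^k is either the identity or a single first-order partial derivative). Let p_t(y) := (4πt)^{−d/2} exp(−‖y‖²/(4t)) denote the heat kernel on ℝ^d. Then there exists C > 0 such that for every measurable ℤ^d-periodic function f : ℝ^d → ℝ satisfying |f(y)| ≤ dist(y,ℤ^d)^{−γ} for all y ∉ ℤ^d, every t ∈ (0,1), and every x ∈ ℝ^d with x ∉ ℤ^d, one has ∫_{ℝ^d} |∂^k p_t(y)| · |f(x−y)| dy ≤ C t^{−(α+|k|)/2} dist(x,ℤ^d)^{α−γ}. In particular the same bound holds for |(∂^k P_t f)(x)|, where P_t f := p_t * f is the heat semigroup applied to f. -/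
noncomputable section
open MeasureTheory

/-- The lattice `ℤ^d ⊆ ℝ^d`. -/
def intLat (d : ℕ) : Set (EuclideanSpace ℝ (Fin d)) :=
  Set.range fun m : Fin d → ℤ =>
    ((WithLp.equiv 2 (Fin d → ℝ)).symm fun i => (m i : ℝ))

/-- The heat kernel `p_t(y) = (4πt)^{−d/2} exp(−‖y‖²/(4t))` on `ℝ^d`. -/
def heatKer (d : ℕ) (t : ℝ) (y : EuclideanSpace ℝ (Fin d)) : ℝ :=
  (4 * Real.pi * t) ^ (-(d : ℝ) / 2) * Real.exp (-‖y‖ ^ 2 / (4 * t))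

/-- `∂^k p_t` for a multi-index `k` with `|k| ≤ 1`, encoded by `j : Option (Fin d)`:
`j = none` is the identity (`|k| = 0`) and `j = some i` is `∂_i` (`|k| = 1`). -/
def heatKerD (d : ℕ) (j : Option (Fin d)) (t : ℝ) : EuclideanSpace ℝ (Fin d) → ℝ :=
  match j with
  | none => heatKer d t
  | some i => fun y => fderiv ℝ (heatKer d t) y (EuclideanSpace.single i 1)

def hh (a b ρ s : ℝ) : ℝ := s ^ (-a) * (max s ρ) ^ (-b)

lemma rpow_le_exp_aux (p c : ℝ) (hp : 0 < p) (hc : 0 < c) (w : ℝ) (hw : 0 ≤ w) :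
    w ^ p ≤ (p / c) ^ p * Real.exp (c * w) := by
  have h1 : c * w / p ≤ Real.exp (c * w / p) := by
    linarith [Real.add_one_le_exp (c * w / p)]
  have h2 : (c * w / p) ^ p ≤ Real.exp (c * w) := by
    calc (c * w / p) ^ p ≤ (Real.exp (c * w / p)) ^ p :=
          Real.rpow_le_rpow (by positivity) h1 hp.le
      _ = Real.exp (c * w) := by
          rw [← Real.exp_mul]; congr 1; field_simp
  have h3 : w = (p / c) * (c * w / p) := by field_simp
  calc w ^ p = ((p / c) * (c * w / p)) ^ p := by rw [← h3]
    _ = (p / c) ^ p * (c * w / p) ^ p := Real.mul_rpow (by positivity) (by positivity)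
    _ ≤ _ := by gcongr

lemma hh_int_one (d : ℕ) (hd : 1 ≤ d) (a b : ℝ) (ha : a < d) (hab : (d : ℝ) < a + b) :
    Integrable (fun y : EuclideanSpace ℝ (Fin d) => hh a b 1 ‖y‖) := by
  have : Nonempty (Fin d) := ⟨⟨0, hd⟩⟩
  rw [integrable_fun_norm_addHaar (volume : Measure (EuclideanSpace ℝ (Fin d))) (f := hh a b 1)]
  rw [finrank_euclideanSpace_fin, ← Set.Ioc_union_Ioi_eq_Ioi (zero_le_one (α := ℝ))]
  have hd1 : ((d - 1 : ℕ) : ℝ) = d - 1 := by simp [hd]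
  refine IntegrableOn.union ?_ ?_
  · have : IntegrableOn (fun s : ℝ => s ^ ((d:ℝ) - 1 - a)) (Set.Ioc 0 1) := by
      rw [← intervalIntegrable_iff_integrableOn_Ioc_of_le zero_le_one]
      exact intervalIntegral.intervalIntegrable_rpow' (by linarith)
    refine this.congr_fun (fun s hs => ?_) measurableSet_Ioc
    have hs0 : 0 < s := hs.1
    simp only [hh, smul_eq_mul, max_eq_right hs.2, Real.one_rpow, mul_one]
    rw [← Real.rpow_natCast, ← Real.rpow_add hs0, hd1]; congr 1
  · have : IntegrableOn (fun s : ℝ => s ^ ((d:ℝ) - 1 - a - b)) (Set.Ioi 1) :=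
      integrableOn_Ioi_rpow_of_lt (by linarith) one_pos
    refine this.congr_fun (fun s hs => ?_) measurableSet_Ioi
    have hs1 : 1 < s := hs
    have hs0 : 0 < s := by linarith
    simp only [hh, smul_eq_mul, max_eq_left hs1.le]
    rw [← Real.rpow_natCast, ← Real.rpow_add hs0, ← Real.rpow_add hs0, hd1]; congr 1; ring

lemma hh_scale (a b ρ s : ℝ) (hρ : 0 < ρ) (hs : 0 ≤ s) :
    hh a b ρ s = ρ ^ (-a - b) * hh a b 1 (ρ⁻¹ * s) := by
  unfold hh
  have h1 : s = ρ * (ρ⁻¹ * s) := by field_simp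
  have h2 : max s ρ = ρ * max (ρ⁻¹ * s) 1 := by
    rw [mul_max_of_nonneg _ _ hρ.le, ← h1, mul_one]
  have h3 : 0 ≤ ρ⁻¹ * s := by positivity
  rw [h2, Real.mul_rpow hρ.le (by positivity)]
  conv_lhs => rw [h1]
  rw [Real.mul_rpow hρ.le h3, sub_eq_add_neg, Real.rpow_add hρ]
  have : ρ⁻¹ * (ρ * (ρ⁻¹ * s)) = ρ⁻¹ * s := by rw [← h1]
  simp only [this]
  ring

lemma hh_nonneg (a b ρ s : ℝ) (hs : 0 ≤ s) : 0 ≤ hh a b ρ s := by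
  unfold hh
  have : 0 ≤ max s ρ := le_max_of_le_left hs
  positivity

lemma hh_lint (d : ℕ) (hd : 1 ≤ d) (a b : ℝ) (ha : a < d) (hab : (d : ℝ) < a + b) :
    ∃ K : ℝ, 0 ≤ K ∧ ∀ ρ : ℝ, 0 < ρ →
      ∫⁻ y : EuclideanSpace ℝ (Fin d), ENNReal.ofReal (hh a b ρ ‖y‖)
        = ENNReal.ofReal (K * ρ ^ ((d : ℝ) - a - b)) := by
  have hI := hh_int_one d hd a b ha hab
  refine ⟨∫ y : EuclideanSpace ℝ (Fin d), hh a b 1 ‖y‖,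
    integral_nonneg fun y => hh_nonneg _ _ _ _ (norm_nonneg _), fun ρ hρ => ?_⟩
  have e : (fun y : EuclideanSpace ℝ (Fin d) => hh a b ρ ‖y‖)
      = fun y => ρ ^ (-a - b) * hh a b 1 ‖ρ⁻¹ • y‖ := by
    ext y
    rw [hh_scale a b ρ _ hρ (norm_nonneg _), norm_smul, Real.norm_of_nonneg (by positivity)]
  have hI2 : Integrable (fun y : EuclideanSpace ℝ (Fin d) => hh a b ρ ‖y‖) := by
    rw [e]
    exact (hI.comp_smul (inv_ne_zero hρ.ne')).const_mul _
  rw [← ofReal_integral_eq_lintegral_ofReal hI2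
    (Filter.Eventually.of_forall fun y => hh_nonneg _ _ _ _ (norm_nonneg _)), e,
    integral_const_mul,
    Measure.integral_comp_smul volume (fun y : EuclideanSpace ℝ (Fin d) => hh a b 1 ‖y‖),
    finrank_euclideanSpace_fin, abs_of_pos (by positivity)]
  congr 1
  rw [inv_pow, inv_inv, smul_eq_mul, show (d:ℝ) - a - b = (-a - b) + d by ring,
    Real.rpow_add hρ, Real.rpow_natCast]
  ring

lemma hh_pt (a b ρ u D : ℝ) (ha : 0 ≤ a) (hb : 0 ≤ b) (hu : 0 < u) (hD : 0 < D)
    (h : 2 * ρ ≤ u + D) : u ^ (-a) * D ^ (-b) ≤ hh a b ρ u + hh b a ρ D := by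
  rcases le_total u D with h1 | h1
  · have : u ^ (-a) * D ^ (-b) ≤ hh a b ρ u := by
      unfold hh
      gcongr ?_ * ?_
      exact Real.rpow_le_rpow_of_nonpos (by positivity) (max_le h1 (by linarith)) (by linarith)
    linarith [hh_nonneg b a ρ D hD.le]
  · have : u ^ (-a) * D ^ (-b) ≤ hh b a ρ D := by
      unfold hh
      rw [mul_comm]
      gcongr ?_ * ?_
      exact Real.rpow_le_rpow_of_nonpos (by positivity) (max_le h1 (by linarith)) (by linarith)
    linarith [hh_nonneg a b ρ u hu.le]

/-- lattice point -/
def latp (d : ℕ) (m : Fin d → ℤ) : EuclideanSpace ℝ (Fin d) :=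
  (WithLp.equiv 2 (Fin d → ℝ)).symm fun i => (m i : ℝ)

lemma lp_apply (d : ℕ) (m : Fin d → ℤ) (i : Fin d) : latp d m i = m i := rfl

lemma intLat_eq (d : ℕ) : intLat d = Set.range (latp d) := rfl

lemma intLat_closed (d : ℕ) : IsClosed (intLat d) := by
  have : intLat d = ⋂ i : Fin d, {x | x i ∈ Set.range ((↑) : ℤ → ℝ)} := by
    ext x
    simp only [intLat_eq, Set.mem_range, Set.mem_iInter, Set.mem_ofPred_eq]
    constructor
    · rintro ⟨m, rfl⟩ i
      exact ⟨m i, rfl⟩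
    · intro h
      choose m hm using h
      refine ⟨m, ?_⟩
      ext i
      rw [lp_apply, hm]
  rw [this]
  refine isClosed_iInter fun i => ?_
  exact Int.isClosedEmbedding_coe_real.isClosed_range.preimage (by fun_prop)

lemma intLat_near (d : ℕ) (z : EuclideanSpace ℝ (Fin d)) :
    ∃ m : Fin d → ℤ, Metric.infDist z (intLat d) = ‖z - latp d m‖ := by
  obtain ⟨y, ⟨m, rfl⟩, h⟩ := (intLat_closed d).exists_infDist_eq_dist ⟨_, ⟨0, rfl⟩⟩ z
  exact ⟨m, by rw [h, dist_eq_norm]; rfl⟩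

lemma intLat_countable (d : ℕ) : (intLat d).Countable := Set.countable_range _

lemma lp_dist (d : ℕ) (m n : Fin d → ℤ) (h : m ≠ n) : 1 ≤ dist (latp d m) (latp d n) := by
  obtain ⟨i, hi⟩ := Function.ne_iff.mp h
  rw [dist_eq_norm]
  refine le_trans ?_ (PiLp.norm_apply_le (latp d m - latp d n) i)
  rw [PiLp.sub_apply, lp_apply, lp_apply, Real.norm_eq_abs, ← Int.cast_sub, ← Int.cast_abs]
  exact_mod_cast Int.one_le_abs (sub_ne_zero.mpr hi)

lemma gauss_integrable (d : ℕ) (c : ℝ) (hc : 0 < c) :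
    Integrable (fun v : EuclideanSpace ℝ (Fin d) => Real.exp (-c * ‖v‖ ^ 2)) := by
  have := (GaussianFourier.integrable_cexp_neg_mul_sq_norm_add (V := EuclideanSpace ℝ (Fin d))
    (b := (c : ℂ)) (by simpa using hc) 0 0).norm
  refine this.congr (Filter.Eventually.of_forall fun v => ?_)
  simp only [Complex.norm_exp]
  congr 1
  simp [← Complex.ofReal_pow]

lemma lat_sum (d : ℕ) : ∃ S : ℝ, 0 ≤ S ∧ ∀ v : EuclideanSpace ℝ (Fin d),
    ∑' m : Fin d → ℤ, ENNReal.ofReal (Real.exp (-‖v - latp d m‖ ^ 2 / 16)) ≤ ENNReal.ofReal S := by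
  set G : EuclideanSpace ℝ (Fin d) → ℝ := fun u => Real.exp (-(1/32) * ‖u‖ ^ 2) with hG
  have hGi : Integrable G := gauss_integrable d (1/32) (by norm_num)
  set V := volume (Metric.ball (0 : EuclideanSpace ℝ (Fin d)) (1/2)) with hV
  have hV0 : V ≠ 0 := (Metric.measure_ball_pos volume _ (by norm_num)).ne'
  have hVt : V ≠ ⊤ := measure_ball_lt_top.ne
  set A : ENNReal := V⁻¹ * (ENNReal.ofReal (Real.exp (1/64)) * ∫⁻ u, ENNReal.ofReal (G u)) with hA
  have hAt : A ≠ ⊤ := by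
    refine ENNReal.mul_ne_top (ENNReal.inv_ne_top.mpr hV0)
      (ENNReal.mul_ne_top ENNReal.ofReal_ne_top ?_)
    rw [← ofReal_integral_eq_lintegral_ofReal hGi
      (Filter.Eventually.of_forall fun u => (Real.exp_pos _).le)]
    exact ENNReal.ofReal_ne_top
  refine ⟨A.toReal, ENNReal.toReal_nonneg, fun v => ?_⟩
  rw [ENNReal.ofReal_toReal hAt]
  have key : ∀ m : Fin d → ℤ, ENNReal.ofReal (Real.exp (-‖v - latp d m‖ ^ 2 / 16)) ≤
      V⁻¹ * ∫⁻ z in Metric.ball (latp d m) (1/2),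
        ENNReal.ofReal (Real.exp (1/64)) * ENNReal.ofReal (G (v - z)) := by
    intro m
    rw [mul_comm V⁻¹, ← div_eq_mul_inv, ENNReal.le_div_iff_mul_le (Or.inl hV0) (Or.inl hVt)]
    have : V = volume (Metric.ball (latp d m) (1/2)) := by
      exact (Measure.addHaar_ball_center volume (latp d m) (1/2)).symm
    rw [this, ← setLIntegral_const]
    refine setLIntegral_mono' measurableSet_ball fun z hz => ?_
    rw [← ENNReal.ofReal_mul (Real.exp_pos _).le]
    refine ENNReal.ofReal_le_ofReal ?_
    rw [hG, ← Real.exp_add]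
    refine Real.exp_le_exp.mpr ?_
    rw [Metric.mem_ball, dist_eq_norm] at hz
    have h1 : ‖v - z‖ ≤ ‖v - latp d m‖ + ‖z - latp d m‖ := by
      have := norm_sub_le (v - latp d m) (z - latp d m)
      simpa using this
    have h2 : ‖v - z‖ ^ 2 ≤ (‖v - latp d m‖ + 1/2) ^ 2 := by
      gcongr; linarith
    nlinarith [sq_nonneg (‖v - latp d m‖ - 1/2)]
  refine (ENNReal.tsum_le_tsum key).trans ?_
  rw [ENNReal.tsum_mul_left, hA]
  gcongr
  rw [← lintegral_iUnion (fun m => measurableSet_ball)]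
  · refine (setLIntegral_le_lintegral _ _).trans ?_
    rw [lintegral_const_mul' _ _ ENNReal.ofReal_ne_top,
      lintegral_sub_left_eq_self (fun u => ENNReal.ofReal (G u)) v]
  · intro m n hmn
    refine Metric.ball_disjoint_ball ?_
    have := lp_dist d m n hmn
    norm_num
    exact this

lemma hh_meas (a b ρ : ℝ) : Measurable (hh a b ρ) := by
  unfold hh; fun_prop

lemma periodise (d : ℕ) (S : ℝ)
    (hS : ∀ v : EuclideanSpace ℝ (Fin d),
    ∑' m : Fin d → ℤ, ENNReal.ofReal (Real.exp (-‖v - latp d m‖ ^ 2 / 16)) ≤ ENNReal.ofReal S)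
    (g : ℝ → ENNReal) (hg : Measurable g) (x : EuclideanSpace ℝ (Fin d)) :
    ∫⁻ y, ENNReal.ofReal (Real.exp (-‖y‖ ^ 2 / 16)) * g (Metric.infDist (x - y) (intLat d)) ≤
      ENNReal.ofReal S * ∫⁻ w : EuclideanSpace ℝ (Fin d), g ‖w‖ := by
  calc _ ≤ ∫⁻ y, ∑' m : Fin d → ℤ, ENNReal.ofReal (Real.exp (-‖y‖ ^ 2 / 16)) *
            g ‖x - y - latp d m‖ := by
        refine lintegral_mono fun y => ?_
        obtain ⟨m, hm⟩ := intLat_near d (x - y)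
        simp only [hm]
        exact ENNReal.le_tsum (f := fun m => ENNReal.ofReal (Real.exp (-‖y‖ ^ 2 / 16)) *
            g ‖x - y - latp d m‖) m
    _ = ∑' m : Fin d → ℤ, ∫⁻ y, ENNReal.ofReal (Real.exp (-‖y‖ ^ 2 / 16)) *
            g ‖x - y - latp d m‖ := by
        rw [lintegral_tsum]
        intro m
        fun_prop
    _ = ∑' m : Fin d → ℤ, ∫⁻ w, ENNReal.ofReal (Real.exp (-‖x - w - latp d m‖ ^ 2 / 16)) *
            g ‖w‖ := by
        congr 1; ext m
        rw [← lintegral_sub_left_eq_self (fun w => ENNReal.ofReal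
          (Real.exp (-‖x - w - latp d m‖ ^ 2 / 16)) * g ‖w‖) (x - latp d m)]
        congr 1; ext y
        have e1 : x - (x - latp d m - y) - latp d m = y := by abel
        have e2 : x - latp d m - y = x - y - latp d m := by abel
        rw [e1, e2]
    _ = ∫⁻ w, ∑' m : Fin d → ℤ, ENNReal.ofReal (Real.exp (-‖x - w - latp d m‖ ^ 2 / 16)) *
            g ‖w‖ := by
        rw [lintegral_tsum]
        intro m
        fun_prop
    _ ≤ ∫⁻ w : EuclideanSpace ℝ (Fin d), ENNReal.ofReal S * g ‖w‖ := by
        refine lintegral_mono fun w => ?_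
        simp only [ENNReal.tsum_mul_right]
        gcongr
        exact hS _
    _ = _ := by
        rw [lintegral_const_mul' _ _ ENNReal.ofReal_ne_top]

lemma heatKer_fderiv (d : ℕ) (t : ℝ) (ht : 0 < t) (y : EuclideanSpace ℝ (Fin d)) (i : Fin d) :
    fderiv ℝ (heatKer d t) y (EuclideanSpace.single i 1) = -(y i / (2 * t)) * heatKer d t y := by
  have h1 : HasFDerivAt (fun y : EuclideanSpace ℝ (Fin d) => ‖y‖ ^ 2) (2 • innerSL ℝ y) y :=
    (hasStrictFDerivAt_norm_sq y).hasFDerivAt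
  have h2 : HasFDerivAt (heatKer d t) _ y :=
    ((h1.neg.mul_const ((4 * t)⁻¹)).exp.const_mul ((4 * Real.pi * t) ^ (-(d : ℝ) / 2)))
  rw [h2.fderiv]
  simp [heatKer, div_eq_mul_inv]
  have h3 : inner ℝ y (EuclideanSpace.single i (1:ℝ)) = y i := by
    simp [EuclideanSpace.inner_single_right]
  rw [h3]
  field_simp
  ring

lemma kern_core (β s t : ℝ) (hβ : 0 < β) (hs : 0 < s) (ht : t ∈ Set.Ioo (0:ℝ) 1) :
    (s ^ 2 / t) ^ (β / 2) * Real.exp (-s ^ 2 / (4 * t)) ≤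
      ((β / 2) / (3 / 16)) ^ (β / 2) * Real.exp (-s ^ 2 / 16) := by
  have ht0 := ht.1
  have h := rpow_le_exp_aux (β / 2) (3 / 16) (by positivity) (by norm_num) (s ^ 2 / t)
    (by positivity)
  calc _ ≤ (((β / 2) / (3 / 16)) ^ (β / 2) * Real.exp (3 / 16 * (s ^ 2 / t))) *
        Real.exp (-s ^ 2 / (4 * t)) := by gcongr
    _ = ((β / 2) / (3 / 16)) ^ (β / 2) * Real.exp (- (s ^ 2 / t) / 16) := by
        rw [mul_assoc, ← Real.exp_add]; congr 2; field_simp; ring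
    _ ≤ _ := by
        gcongr
        rw [le_div_iff₀ ht0]
        nlinarith [ht.2, sq_nonneg s]

lemma kern_alg (D α s t : ℝ) (k : ℝ) (hs : 0 < s) (ht : 0 < t) :
    t ^ (-D / 2) * (s / t) ^ k =
      t ^ (-(α + k) / 2) * s ^ (-(D - α)) * (s ^ 2 / t) ^ ((D - α + k) / 2) := by
  rw [Real.div_rpow hs.le ht.le, Real.div_rpow (by positivity) ht.le, ← Real.rpow_natCast s 2,
    ← Real.rpow_mul hs.le, div_eq_mul_inv (s ^ k), div_eq_mul_inv (s ^ _), ← Real.rpow_neg ht.le,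
    ← Real.rpow_neg ht.le]
  have e1 : t ^ (-D / 2) * (s ^ k * t ^ (-k)) = s ^ k * t ^ (-D / 2 + -k) := by
    rw [Real.rpow_add ht]; ring
  have e2 : t ^ (-(α + k) / 2) * s ^ (-(D - α)) *
      (s ^ (((2 : ℕ) : ℝ) * ((D - α + k) / 2)) * t ^ (-((D - α + k) / 2))) =
      s ^ (-(D - α) + ((2 : ℕ) : ℝ) * ((D - α + k) / 2)) *
        t ^ (-(α + k) / 2 + -((D - α + k) / 2)) := by
    rw [Real.rpow_add ht, Real.rpow_add hs]; ring
  rw [e1, e2]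
  congr 2
  · push_cast; ring
  · ring

lemma kern_bound (d : ℕ) (α : ℝ) (hαd : α < d) (j : Option (Fin d)) :
    ∃ C : ℝ, 0 < C ∧ ∀ t ∈ Set.Ioo (0 : ℝ) 1, ∀ y : EuclideanSpace ℝ (Fin d), y ≠ 0 →
      |heatKerD d j t y| ≤ C * t ^ (-(α + if j.isSome then (1:ℝ) else 0) / 2) *
        (‖y‖ ^ (-((d : ℝ) - α)) * Real.exp (-‖y‖ ^ 2 / 16)) := by
  set k : ℝ := if j.isSome then (1:ℝ) else 0 with hk
  have hk0 : 0 ≤ k := by rw [hk]; split_ifs <;> norm_num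
  have hβ : 0 < (d : ℝ) - α + k := by linarith
  set B := (((d : ℝ) - α + k) / 2 / (3 / 16)) ^ (((d : ℝ) - α + k) / 2) with hB
  have hBp : 0 < B := by positivity
  refine ⟨(4 * Real.pi) ^ (-(d : ℝ) / 2) * B, by positivity, fun t ht y hy => ?_⟩
  have ht0 := ht.1
  have hs : 0 < ‖y‖ := norm_pos_iff.mpr hy
  have h1 : |heatKerD d j t y| ≤ (‖y‖ / t) ^ k * heatKer d t y := by
    have hp : 0 ≤ heatKer d t y := by unfold heatKer; positivity
    rcases j with _ | i
    · simp [hk, heatKerD, abs_of_nonneg hp]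
    · simp only [hk, heatKerD, Option.isSome_some, if_true, Real.rpow_one]
      rw [heatKer_fderiv d t ht0, abs_mul, abs_neg, abs_of_nonneg hp, abs_div,
        abs_of_pos (by positivity : 0 < 2 * t)]
      have := PiLp.norm_apply_le y i
      rw [Real.norm_eq_abs] at this
      gcongr
      linarith
  have h2 := kern_core _ ‖y‖ t hβ hs ht
  rw [← hB] at h2
  have h3 := kern_alg d α ‖y‖ t k hs ht0
  refine h1.trans ?_
  unfold heatKer
  rw [Real.mul_rpow (by positivity) ht0.le]
  calc _ = (4 * Real.pi) ^ (-(d : ℝ) / 2) * (t ^ (-(d : ℝ) / 2) * (‖y‖ / t) ^ k) *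
        Real.exp (-‖y‖ ^ 2 / (4 * t)) := by ring
    _ = (4 * Real.pi) ^ (-(d : ℝ) / 2) * (t ^ (-(α + k) / 2) * ‖y‖ ^ (-((d : ℝ) - α))) *
        ((‖y‖ ^ 2 / t) ^ (((d : ℝ) - α + k) / 2) * Real.exp (-‖y‖ ^ 2 / (4 * t))) := by
        rw [h3]; ring
    _ ≤ (4 * Real.pi) ^ (-(d : ℝ) / 2) * (t ^ (-(α + k) / 2) * ‖y‖ ^ (-((d : ℝ) - α))) *
        (B * Real.exp (-‖y‖ ^ 2 / 16)) := by gcongr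
    _ = _ := by ring

theorem stmt_4 (d : ℕ) (hd : 1 ≤ d) (γ α : ℝ)
    (hγ : γ ∈ Set.Ioo (0 : ℝ) (d : ℝ)) (hα : α ∈ Set.Ioo (0 : ℝ) γ)
    (j : Option (Fin d)) :
    ∃ C : ℝ, 0 < C ∧
      ∀ f : EuclideanSpace ℝ (Fin d) → ℝ, Measurable f →
        (∀ (m : Fin d → ℤ) (y : EuclideanSpace ℝ (Fin d)),
          f (y + (WithLp.equiv 2 (Fin d → ℝ)).symm fun i => (m i : ℝ)) = f y) →
        (∀ y : EuclideanSpace ℝ (Fin d), y ∉ intLat d →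
          |f y| ≤ Metric.infDist y (intLat d) ^ (-γ)) →
        ∀ t ∈ Set.Ioo (0 : ℝ) 1, ∀ x : EuclideanSpace ℝ (Fin d), x ∉ intLat d →
          (∫⁻ y, ENNReal.ofReal (|heatKerD d j t y| * |f (x - y)|))
              ≤ ENNReal.ofReal
                (C * t ^ (-(α + if j.isSome then (1:ℝ) else 0) / 2) *
                  Metric.infDist x (intLat d) ^ (α - γ)) ∧
            |∫ y, heatKerD d j t y * f (x - y)| ≤
              C * t ^ (-(α + if j.isSome then (1:ℝ) else 0) / 2) *
                Metric.infDist x (intLat d) ^ (α - γ) := by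
  obtain ⟨hγ0, hγd⟩ := hγ
  obtain ⟨hα0, hαγ⟩ := hα
  have : Nonempty (Fin d) := ⟨⟨0, hd⟩⟩
  obtain ⟨C1, hC1, hker⟩ := kern_bound d α (hαγ.trans hγd) j
  obtain ⟨K1, hK1, hI1⟩ := hh_lint d hd ((d : ℝ) - α) γ (by linarith) (by linarith)
  obtain ⟨K2, hK2, hI2⟩ := hh_lint d hd γ ((d : ℝ) - α) hγd (by linarith)
  obtain ⟨S, hS0, hS⟩ := lat_sum d
  refine ⟨C1 * (K1 + S * K2) * (1 / 2) ^ (α - γ) + 1, by positivity, ?_⟩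
  intro f hf _ hfb t ht x hx
  have ht0 := ht.1
  set r := Metric.infDist x (intLat d) with hr
  have hne : (intLat d).Nonempty := ⟨_, ⟨0, rfl⟩⟩
  have hpos : ∀ z, z ∉ intLat d → 0 < Metric.infDist z (intLat d) := fun z hz =>
    ((intLat_closed d).notMem_iff_infDist_pos hne).mp hz
  have hr0 : 0 < r := hpos x hx
  set T := t ^ (-(α + if j.isSome then (1:ℝ) else 0) / 2) with hT
  have hT0 : 0 < T := Real.rpow_pos_of_pos ht0 _
  have hρ : 0 < r / 2 := by positivity
  have main : (∫⁻ y, ENNReal.ofReal (|heatKerD d j t y| * |f (x - y)|))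
      ≤ ENNReal.ofReal ((C1 * (K1 + S * K2) * (1 / 2) ^ (α - γ) + 1) * T * r ^ (α - γ)) := by
    have hae : ∀ᵐ y : EuclideanSpace ℝ (Fin d), y ≠ 0 ∧ x - y ∉ intLat d := by
      have h1 : ∀ᵐ y : EuclideanSpace ℝ (Fin d), y ∉ ({0} : Set (EuclideanSpace ℝ (Fin d))) :=
        (Set.countable_singleton _).ae_notMem _
      have h2 : ∀ᵐ y : EuclideanSpace ℝ (Fin d), y ∉ (fun z => x - z) '' intLat d :=
        ((intLat_countable d).image _).ae_notMem _
      filter_upwards [h1, h2] with y hy1 hy2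
      exact ⟨hy1, fun h => hy2 ⟨x - y, h, by simp⟩⟩
    calc _ ≤ ∫⁻ y, ENNReal.ofReal (C1 * T) * (ENNReal.ofReal (hh ((d : ℝ) - α) γ (r / 2) ‖y‖) +
          ENNReal.ofReal (Real.exp (-‖y‖ ^ 2 / 16)) * ENNReal.ofReal
            (hh γ ((d : ℝ) - α) (r / 2) (Metric.infDist (x - y) (intLat d)))) := by
          refine lintegral_mono_ae ?_
          filter_upwards [hae] with y hy
          have hD := hpos _ hy.2
          have hn : 0 < ‖y‖ := norm_pos_iff.mpr hy.1
          have hLip : 2 * (r / 2) ≤ ‖y‖ + Metric.infDist (x - y) (intLat d) := by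
            have := Metric.infDist_le_infDist_add_dist (s := intLat d) (x := x) (y := x - y)
            rw [dist_eq_norm, sub_sub_cancel] at this
            linarith
          have h1 := hh_pt ((d : ℝ) - α) γ (r / 2) ‖y‖ _ (by linarith) hγ0.le hn hD hLip
          have h2 := hker t ht y hy.1
          have h3 := hfb _ hy.2
          have p1 := hh_nonneg ((d : ℝ) - α) γ (r / 2) ‖y‖ hn.le
          have p2 := hh_nonneg γ ((d : ℝ) - α) (r / 2) _ hD.le
          rw [← ENNReal.ofReal_mul (Real.exp_pos _).le, ← ENNReal.ofReal_add p1 (by positivity),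
            ← ENNReal.ofReal_mul (by positivity)]
          refine ENNReal.ofReal_le_ofReal ?_
          have hE1 : Real.exp (-‖y‖ ^ 2 / 16) ≤ 1 := by
            rw [Real.exp_le_one_iff]; nlinarith [sq_nonneg ‖y‖]
          calc _ ≤ (C1 * T * (‖y‖ ^ (-((d : ℝ) - α)) * Real.exp (-‖y‖ ^ 2 / 16))) *
                Metric.infDist (x - y) (intLat d) ^ (-γ) := by gcongr
            _ = C1 * T * (Real.exp (-‖y‖ ^ 2 / 16) * (‖y‖ ^ (-((d : ℝ) - α)) *
                Metric.infDist (x - y) (intLat d) ^ (-γ))) := by ring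
            _ ≤ C1 * T * (Real.exp (-‖y‖ ^ 2 / 16) * (hh ((d : ℝ) - α) γ (r / 2) ‖y‖ +
                hh γ ((d : ℝ) - α) (r / 2) (Metric.infDist (x - y) (intLat d)))) := by gcongr
            _ ≤ _ := by
                rw [mul_add (Real.exp _)]
                gcongr
                exact mul_le_of_le_one_left p1 hE1
      _ ≤ ENNReal.ofReal (C1 * T) * (ENNReal.ofReal (K1 * (r / 2) ^ ((d : ℝ) - (d - α) - γ)) +
            ENNReal.ofReal S * ENNReal.ofReal (K2 * (r / 2) ^ ((d : ℝ) - γ - (d - α)))) := by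
          have hm := hh_meas ((d : ℝ) - α) γ (r / 2)
          rw [lintegral_const_mul' _ _ ENNReal.ofReal_ne_top, lintegral_add_left (by fun_prop),
            ← hI1 _ hρ, ← hI2 _ hρ]
          gcongr
          exact periodise d S hS (fun s => ENNReal.ofReal (hh γ ((d : ℝ) - α) (r / 2) s))
            (hh_meas _ _ _).ennreal_ofReal x
      _ ≤ _ := by
          rw [show (d : ℝ) - (d - α) - γ = α - γ by ring, show (d : ℝ) - γ - (d - α) = α - γ by ring,
            ← ENNReal.ofReal_mul hS0, ← ENNReal.ofReal_add (by positivity) (by positivity),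
            ← ENNReal.ofReal_mul (by positivity), div_eq_mul_one_div r 2,
            Real.mul_rpow hr0.le (by norm_num)]
          refine ENNReal.ofReal_le_ofReal ?_
          have : 0 ≤ T * r ^ (α - γ) := by positivity
          nlinarith
  refine ⟨main, ?_⟩
  have h := norm_integral_le_lintegral_norm (μ := volume) (fun y => heatKerD d j t y * f (x - y))
  simp only [Real.norm_eq_abs, abs_mul] at h
  exact h.trans (ENNReal.toReal_le_of_le_ofReal (by positivity) main)
end
end

section
/- Let V be a normed real vector space, α ∈ (0,1] and t ∈ (0,1). Let A be a V-valued function on the set of segments {(x,v) : x ∈ ℝ³, v ∈ ℝ³, ‖v‖ ≤ 1/4} which is additive, i.e. A(x,v) = A(x,cv) + A(x+cv,(1−c)v) for every segment (x,v) and every c ∈ [0,1]. If M ≥ 0 is such that ‖A(x,v)‖ ≤ M‖v‖^α for every segment with 0 < ‖v‖ < t, then ‖A(x,v)‖ ≤ t^{−(1−α)} M ‖v‖^α for every segment with 0 < ‖v‖ ≤ 1/4. Equivalently, |A|_α ≤ t^{−(1−α)} |A|_{α;<t}. -/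
theorem stmt_5 {V : Type*} [NormedAddCommGroup V] [NormedSpace ℝ V]
    (α t : ℝ) (hα : α ∈ Set.Ioc (0:ℝ) 1) (ht : t ∈ Set.Ioo (0:ℝ) 1)
    (A : EuclideanSpace ℝ (Fin 3) → EuclideanSpace ℝ (Fin 3) → V)
    (hadd : ∀ (x v : EuclideanSpace ℝ (Fin 3)), ‖v‖ ≤ 1/4 →
      ∀ c ∈ Set.Icc (0:ℝ) 1, A x v = A x (c • v) + A (x + c • v) ((1 - c) • v))
    (M : ℝ) (hM : 0 ≤ M)
    (hshort : ∀ (x v : EuclideanSpace ℝ (Fin 3)), 0 < ‖v‖ → ‖v‖ < t → ‖v‖ ≤ 1/4 →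
      ‖A x v‖ ≤ M * ‖v‖ ^ α) :
    ∀ (x v : EuclideanSpace ℝ (Fin 3)), 0 < ‖v‖ → ‖v‖ ≤ 1/4 →
      ‖A x v‖ ≤ t ^ (-(1 - α)) * M * ‖v‖ ^ α := by
  obtain ⟨ht0, ht1⟩ := ht
  have key : ∀ (n : ℕ) (x w : EuclideanSpace ℝ (Fin 3)), 0 < ‖w‖ → ‖w‖ < t →
      ((n:ℝ) + 1) * ‖w‖ ≤ 1/4 → ‖A x (((n:ℝ) + 1) • w)‖ ≤ ((n:ℝ) + 1) * (M * ‖w‖ ^ α) := by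
    intro n
    induction n with
    | zero =>
      intro x w h0 h1 h2
      simp only [Nat.cast_zero, zero_add, one_mul, one_smul] at *
      exact hshort x w h0 h1 h2
    | succ n ih =>
      intro x w h0 h1 h2
      push_cast at *
      have hn : (0:ℝ) ≤ n := Nat.cast_nonneg n
      have hp : (0:ℝ) < (n:ℝ) + 1 + 1 := by positivity
      have hc : ((n:ℝ) + 1 + 1)⁻¹ ∈ Set.Icc (0:ℝ) 1 :=
        ⟨by positivity, inv_le_one_of_one_le₀ (by linarith)⟩
      have e := hadd x (((n:ℝ) + 1 + 1) • w)
        (by rw [norm_smul, Real.norm_of_nonneg hp.le]; exact h2) _ hc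
      have e1 : ((n:ℝ) + 1 + 1)⁻¹ • (((n:ℝ) + 1 + 1) • w) = w := by
        rw [smul_smul, inv_mul_cancel₀ hp.ne', one_smul]
      have e2 : (1 - ((n:ℝ) + 1 + 1)⁻¹) • (((n:ℝ) + 1 + 1) • w) = ((n:ℝ) + 1) • w := by
        rw [smul_smul]; congr 1; field_simp; ring
      rw [e1, e2] at e
      rw [e]
      have a1 := ih (x + w) w h0 h1 (by nlinarith)
      have a2 := hshort x w h0 h1 (by nlinarith)
      have a3 := norm_add_le (A x w) (A (x + w) (((n:ℝ) + 1) • w))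
      linarith
  intro x v hv hv4
  have h1t : 1 ≤ 1 / t := by rw [le_div_iff₀ ht0]; linarith
  obtain ⟨n, hn⟩ : ∃ n : ℕ, ⌊1 / t⌋₊ = n + 1 :=
    Nat.exists_eq_succ_of_ne_zero (Nat.floor_pos.2 h1t).ne'
  have hle : ((n:ℝ) + 1) ≤ 1 / t := by
    have := Nat.floor_le (zero_le_one.trans h1t)
    rw [hn] at this; exact_mod_cast this
  have hlt : 1 / t < (n:ℝ) + 1 + 1 := by
    have := Nat.lt_floor_add_one (1 / t)
    rw [hn] at this; exact_mod_cast this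
  have hn0 : (0:ℝ) ≤ n := Nat.cast_nonneg n
  have hp : (0:ℝ) < (n:ℝ) + 1 := by positivity
  rw [div_lt_iff₀ ht0] at hlt
  have hnw : ‖((n:ℝ) + 1)⁻¹ • v‖ = ((n:ℝ) + 1)⁻¹ * ‖v‖ := by
    rw [norm_smul, Real.norm_of_nonneg (by positivity)]
  have k := key n x (((n:ℝ) + 1)⁻¹ • v) (by rw [hnw]; positivity)
    (by rw [hnw, inv_mul_lt_iff₀ hp]; nlinarith)
    (by rw [hnw, mul_inv_cancel_left₀ hp.ne']; exact hv4)
  rw [smul_smul, mul_inv_cancel₀ hp.ne', one_smul, hnw,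
    Real.mul_rpow (by positivity) (by positivity)] at k
  have e : ((n:ℝ) + 1) * (((n:ℝ) + 1)⁻¹) ^ α = ((n:ℝ) + 1) ^ (1 - α) := by
    rw [Real.rpow_sub hp, Real.rpow_one, Real.inv_rpow hp.le]; rfl
  have f : ((n:ℝ) + 1) ^ (1 - α) ≤ t ^ (-(1 - α)) := by
    rw [Real.rpow_neg ht0.le, ← Real.inv_rpow ht0.le, ← one_div]
    exact Real.rpow_le_rpow hp.le hle (by linarith [hα.2])
  calc ‖A x v‖ ≤ _ := k
    _ = (((n:ℝ) + 1) * (((n:ℝ) + 1)⁻¹) ^ α) * (M * ‖v‖ ^ α) := by ring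
    _ ≤ t ^ (-(1 - α)) * (M * ‖v‖ ^ α) := by
      rw [e]; exact mul_le_mul_of_nonneg_right f (by positivity)
    _ = _ := by ring
end

section
/- Let G_τ(x) := ∑_{m∈ℤ³} (4πτ)^{−3/2} exp(−‖x+m‖²/(4τ)) for τ > 0 and x ∈ ℝ³ denote the heat kernel on the torus 𝕋³ = ℝ³/ℤ³, and for r,s ≥ 0 set C_{r,s}(x) := ∫₀^{min(r,s)} G_{r+s−2u}(x) du (equal to 0 if min(r,s)=0). Then for every T > 0 there exists C > 0 such that for all r,s ∈ [0,T] and all x ∈ ℝ³ with δ(x) := dist(x,ℤ³) > 0: (a) 0 ≤ C_{r,s}(x) ≤ C δ(x)^{−1}; and (b) |C_{r,r}(x) − C_{r,s}(x)| ≤ C |r−s|^{1/2} δ(x)^{−2}. -/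
noncomputable section

/-- The lattice point of `ℝ³` associated to `m ∈ ℤ³`. -/
def latt3 (m : Fin 3 → ℤ) : EuclideanSpace ℝ (Fin 3) :=
  (WithLp.equiv 2 (Fin 3 → ℝ)).symm fun i => (m i : ℝ)

/-- The heat kernel `G_τ(x) = ∑_{m ∈ ℤ³} (4πτ)^{−3/2} exp(−‖x+m‖²/(4τ))` on the torus
`𝕋³ = ℝ³/ℤ³`. -/
def heatT (τ : ℝ) (x : EuclideanSpace ℝ (Fin 3)) : ℝ :=
  ∑' m : Fin 3 → ℤ,
    (4 * Real.pi * τ) ^ (-(3:ℝ)/2) * Real.exp (-‖x + latt3 m‖ ^ 2 / (4 * τ))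

/-- The covariance `C_{r,s}(x) = ∫₀^{min(r,s)} G_{r+s−2u}(x) du`. -/
def covK (r s : ℝ) (x : EuclideanSpace ℝ (Fin 3)) : ℝ :=
  ∫ u in (0:ℝ)..(min r s), heatT (r + s - 2 * u) x


lemma aux_int_s7 {F F' G : ℝ → ℝ} {p q : ℝ} (hpq : p ≤ q) (hF : ContinuousOn F (Set.Icc p q))
    (hd : ∀ t ∈ Set.Ioo p q, HasDerivAt F (F' t) t) (hG : Measurable G)
    (h0 : ∀ t ∈ Set.Ioo p q, 0 ≤ G t) (h1 : ∀ t ∈ Set.Ioo p q, G t ≤ F' t) :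
    IntervalIntegrable G MeasureTheory.volume p q ∧ 0 ≤ ∫ t in p..q, G t ∧
      ∫ t in p..q, G t ≤ F q - F p := by
  have hi : MeasureTheory.IntegrableOn F' (Set.Ioc p q) :=
    intervalIntegral.integrableOn_deriv_of_nonneg hF hd
      (fun t ht => (h0 t ht).trans (h1 t ht))
  have hi2 : IntervalIntegrable F' MeasureTheory.volume p q :=
    (intervalIntegrable_iff_integrableOn_Ioc_of_le hpq).2 hi
  have hiG : IntervalIntegrable G MeasureTheory.volume p q := by
    rw [intervalIntegrable_iff_integrableOn_Ioo_of_le hpq]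
    have hi3 := hi.mono_set (Set.Ioo_subset_Ioc_self)
    refine MeasureTheory.Integrable.mono' hi3 hG.aestronglyMeasurable ?_
    refine (MeasureTheory.ae_restrict_iff' measurableSet_Ioo).2 (Filter.Eventually.of_forall ?_)
    intro t ht
    rw [Real.norm_eq_abs, abs_of_nonneg (h0 t ht)]
    exact h1 t ht
  refine ⟨hiG, ?_, ?_⟩
  · rw [intervalIntegral.integral_of_le hpq, MeasureTheory.integral_Ioc_eq_integral_Ioo]
    exact MeasureTheory.setIntegral_nonneg measurableSet_Ioo h0
  · rw [← intervalIntegral.integral_eq_sub_of_hasDerivAt_of_le hpq hF hd hi2]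
    exact intervalIntegral.integral_mono_on_of_le_Ioo hpq hiG hi2 h1

lemma heat_meas (x : EuclideanSpace ℝ (Fin 3)) : Measurable (fun τ => heatT τ x) := by
  have : (fun τ => heatT τ x) = fun τ : ℝ => (4 * Real.pi * τ) ^ (-(3:ℝ)/2) *
      (∑' m : Fin 3 → ℤ, ENNReal.ofReal (Real.exp (-‖x + latt3 m‖ ^ 2 / (4 * τ)))).toReal := by
    funext τ
    rw [ENNReal.tsum_toReal_eq (fun _ => ENNReal.ofReal_ne_top), heatT, tsum_mul_left]
    congr 1
    refine tsum_congr fun m => ?_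
    rw [ENNReal.toReal_ofReal (Real.exp_pos _).le]
  rw [this]
  refine Measurable.mul (by fun_prop) ?_
  refine (Measurable.tsum fun m => ?_).ennreal_toReal
  fun_prop

lemma summ1 (c : ℝ) (hc : 0 < c) : Summable (fun n : ℤ => Real.exp (-c * (n:ℝ)^2)) := by
  have h : Summable (fun n : ℕ => Real.exp (n * (-c))) :=
    Real.summable_exp_nat_mul_iff.2 (by linarith)
  refine Summable.of_nat_of_neg ?_ ?_
  all_goals
    refine Summable.of_nonneg_of_le (fun _ => (Real.exp_pos _).le) (fun n => ?_) h
    apply Real.exp_le_exp.2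
    push_cast
    have : (n:ℝ) ≤ n^2 := by exact_mod_cast Nat.le_self_pow (by norm_num) n
    nlinarith

lemma summ3 (c : ℝ) (hc : 0 < c) :
    Summable (fun m : Fin 3 → ℤ => Real.exp (-c * ‖latt3 m‖^2)) := by
  have h := summ1 c hc
  have h2 := h.mul_of_nonneg h (fun _ => (Real.exp_pos _).le) (fun _ => (Real.exp_pos _).le)
  have h3 := h.mul_of_nonneg h2 (fun _ => (Real.exp_pos _).le) (fun _ => by positivity)
  let e : (Fin 3 → ℤ) → ℤ × ℤ × ℤ := fun m => (m 0, m 1, m 2)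
  have he : Function.Injective e := by
    intro a b hab
    simp only [e, Prod.mk.injEq] at hab
    funext i
    fin_cases i <;> simp [hab]
  refine (h3.comp_injective he).congr fun m => ?_
  simp only [Function.comp, e]
  rw [EuclideanSpace.norm_sq_eq, ← Real.exp_add, ← Real.exp_add, Fin.sum_univ_three]
  simp only [latt3, Real.norm_eq_abs, sq_abs]
  congr 1
  simp
  ring

lemma latt3_add (a b : Fin 3 → ℤ) : latt3 (a + b) = latt3 a + latt3 b := by
  ext i; simp [latt3]

lemma latt3_neg (a : Fin 3 → ℤ) : latt3 (-a) = -latt3 a := by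
  ext i; simp [latt3]

lemma gaussK (c : ℝ) (hc : 0 < c) : ∃ K : ℝ, 0 < K ∧ ∀ x : EuclideanSpace ℝ (Fin 3),
    Summable (fun m : Fin 3 → ℤ => Real.exp (-c * ‖x + latt3 m‖^2)) ∧
    ∑' m : Fin 3 → ℤ, Real.exp (-c * ‖x + latt3 m‖^2) ≤ K := by
  have hs := (summ3 (c/2) (by positivity)).mul_left (Real.exp (3 * c))
  refine ⟨_, hs.tsum_pos (fun _ => by positivity) 0 (by positivity), fun x => ?_⟩
  let k : Fin 3 → ℤ := fun i => ⌊x i⌋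
  set y : EuclideanSpace ℝ (Fin 3) := x - latt3 k with hy
  have hyn : ‖y‖^2 ≤ 3 := by
    rw [EuclideanSpace.norm_sq_eq, Fin.sum_univ_three]
    have : ∀ i, ‖y i‖^2 ≤ 1 := by
      intro i
      have : y i = Int.fract (x i) := by
        rw [← Int.self_sub_floor]; simp [hy, latt3, k]
      rw [this, Real.norm_eq_abs, sq_abs]
      have := Int.fract_nonneg (x i)
      have := Int.fract_lt_one (x i)
      nlinarith
    linarith [this 0, this 1, this 2]
  have hle : ∀ m, Real.exp (-c * ‖y + latt3 m‖^2) ≤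
      Real.exp (3 * c) * Real.exp (-(c/2) * ‖latt3 m‖^2) := by
    intro m
    rw [← Real.exp_add]
    apply Real.exp_le_exp.2
    have h1 : ‖latt3 m‖ ≤ ‖y + latt3 m‖ + ‖y‖ := by
      have := norm_sub_le (y + latt3 m) y
      simpa using this
    have h2 : ‖latt3 m‖^2 ≤ 2 * ‖y + latt3 m‖^2 + 2 * ‖y‖^2 := by
      nlinarith [sq_nonneg (‖y + latt3 m‖ - ‖y‖), norm_nonneg (latt3 m), norm_nonneg y]
    nlinarith
  have hs1 : Summable (fun m => Real.exp (-c * ‖y + latt3 m‖^2)) :=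
    Summable.of_nonneg_of_le (fun _ => (Real.exp_pos _).le) hle hs
  have heq : (fun m : Fin 3 → ℤ => Real.exp (-c * ‖x + latt3 m‖^2)) =
      (fun m => Real.exp (-c * ‖y + latt3 m‖^2)) ∘ (Equiv.addLeft k) := by
    funext m
    have : y + latt3 (k + m) = x + latt3 m := by rw [hy, latt3_add]; abel
    simp [this]
  rw [heq]
  refine ⟨(Equiv.summable_iff _).2 hs1, ?_⟩
  have := (Equiv.addLeft k).tsum_eq (fun m => Real.exp (-c * ‖y + latt3 m‖^2))
  simp only [Function.comp_def]
  rw [this]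
  exact hs1.tsum_le_tsum hle hs

lemma heat_nonneg {τ : ℝ} (hτ : 0 ≤ τ) (x : EuclideanSpace ℝ (Fin 3)) : 0 ≤ heatT τ x :=
  tsum_nonneg fun m => by have := Real.pi_pos; positivity

lemma delta_le (x : EuclideanSpace ℝ (Fin 3)) (m : Fin 3 → ℤ) :
    Metric.infDist x (Set.range latt3) ≤ ‖x + latt3 m‖ := by
  have := Metric.infDist_le_dist_of_mem (x := x) (Set.mem_range_self (f := latt3) (-m))
  rwa [dist_eq_norm, latt3_neg, sub_neg_eq_add] at this

lemma heat_bound (T : ℝ) (hT : 0 < T) : ∃ K : ℝ, 0 < K ∧ ∀ x : EuclideanSpace ℝ (Fin 3),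
    ∀ τ, 0 < τ → τ ≤ 2 * T → heatT τ x ≤
      K / (√τ * (τ + Metric.infDist x (Set.range latt3) ^ 2 / 8)) := by
  obtain ⟨K, hK, h⟩ := gaussK (1 / (16 * T)) (by positivity)
  refine ⟨K, hK, fun x τ hτ hτT => ?_⟩
  obtain ⟨hs, hle⟩ := h x
  set δ := Metric.infDist x (Set.range latt3) with hδ
  have hδ0 : 0 ≤ δ := Metric.infDist_nonneg
  have key : ∀ m, Real.exp (-‖x + latt3 m‖ ^ 2 / (4 * τ)) ≤
      Real.exp (-(δ^2 / (8 * τ))) * Real.exp (-(1 / (16 * T)) * ‖x + latt3 m‖^2) := by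
    intro m
    rw [← Real.exp_add]
    apply Real.exp_le_exp.2
    have h1 : δ^2 ≤ ‖x + latt3 m‖^2 := pow_le_pow_left₀ hδ0 (delta_le x m) 2
    have h2 : δ^2 / (8 * τ) ≤ ‖x + latt3 m‖^2 / (8 * τ) := by gcongr
    have h3 : ‖x + latt3 m‖^2 / (16 * T) ≤ ‖x + latt3 m‖^2 / (8 * τ) := by
      exact div_le_div_of_nonneg_left (by positivity) (by positivity) (by linarith)
    have h4 : -‖x + latt3 m‖ ^ 2 / (4 * τ) =
      -(‖x + latt3 m‖^2 / (8 * τ)) - ‖x + latt3 m‖^2 / (8 * τ) := by field_simp; ring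
    have h5 : -(1 / (16 * T)) * ‖x + latt3 m‖^2 = - (‖x + latt3 m‖^2 / (16 * T)) := by
      field_simp
    rw [h4, h5]; linarith
  have hs2 := hs.mul_left (Real.exp (-(δ^2 / (8 * τ))))
  have hs1 := Summable.of_nonneg_of_le (fun _ => (Real.exp_pos _).le) key hs2
  have hsum := hs1.tsum_le_tsum key hs2
  rw [tsum_mul_left] at hsum
  have hexp : Real.exp (-(δ^2 / (8 * τ))) ≤ 1 / (1 + δ^2 / (8 * τ)) := by
    rw [Real.exp_neg, ← one_div]
    have := Real.add_one_le_exp (δ^2 / (8 * τ))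
    gcongr
    linarith
  have hpow : (4 * Real.pi * τ) ^ (-(3:ℝ)/2) ≤ 1 / (τ * √τ) := by
    have h1 : (4 * Real.pi * τ) ^ (-(3:ℝ)/2) ≤ τ ^ (-(3:ℝ)/2) := by
      apply Real.rpow_le_rpow_of_nonpos hτ _ (by norm_num)
      nlinarith [Real.pi_gt_three]
    refine h1.trans_eq ?_
    rw [show (-(3:ℝ)/2) = -(1 + 1/2) by norm_num, Real.rpow_neg hτ.le, Real.rpow_add hτ,
      Real.rpow_one, ← Real.sqrt_eq_rpow, one_div]
  rw [heatT, tsum_mul_left]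
  have hsq : 0 < √τ := Real.sqrt_pos.2 hτ
  calc _ ≤ 1 / (τ * √τ) * ((1 / (1 + δ^2 / (8 * τ))) * K) := by
        apply mul_le_mul hpow (hsum.trans _) (tsum_nonneg fun _ => (Real.exp_pos _).le)
          (by positivity)
        apply mul_le_mul hexp hle (tsum_nonneg fun _ => (Real.exp_pos _).le) (by positivity)
    _ = _ := by field_simp

lemma covK_eq (r s : ℝ) (x : EuclideanSpace ℝ (Fin 3)) :
    covK r s x = 2⁻¹ * ∫ τ in |r - s|..(r + s), heatT τ x := by
  rw [covK, intervalIntegral.integral_comp_sub_mul (fun τ => heatT τ x) two_ne_zero, smul_eq_mul]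
  congr 2
  · rcases le_total r s with h | h
    · rw [min_eq_left h, abs_of_nonpos (by linarith)]; ring
    · rw [min_eq_right h, abs_of_nonneg (by linarith)]; ring
  · ring

lemma sqrt_sub {p q : ℝ} (hp : 0 ≤ p) (hpq : p ≤ q) : √q - √p ≤ √(q - p) := by
  have h : √q ≤ √(q - p) + √p := by
    apply Real.sqrt_le_iff.2 ⟨by positivity, ?_⟩
    have h1 := Real.sq_sqrt hp
    have h2 := Real.sq_sqrt (sub_nonneg.2 hpq)
    nlinarith [mul_nonneg (Real.sqrt_nonneg (q - p)) (Real.sqrt_nonneg p)]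
  linarith

theorem stmt_7 (T : ℝ) (hT : 0 < T) :
    ∃ C : ℝ, 0 < C ∧
      ∀ r s : ℝ, r ∈ Set.Icc (0:ℝ) T → s ∈ Set.Icc (0:ℝ) T →
        ∀ x : EuclideanSpace ℝ (Fin 3),
          0 < Metric.infDist x (Set.range latt3) →
          (0 ≤ covK r s x ∧
            covK r s x ≤ C * (Metric.infDist x (Set.range latt3))⁻¹) ∧
          |covK r r x - covK r s x| ≤
            C * |r - s| ^ ((1:ℝ)/2) * ((Metric.infDist x (Set.range latt3))⁻¹) ^ 2 := by
  obtain ⟨K, hK, hb⟩ := heat_bound T hT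
  refine ⟨16 * K, by positivity, fun r s hr hs x hδ => ?_⟩
  have hbx := hb x
  set δ := Metric.infDist x (Set.range latt3) with hδdef
  obtain ⟨hr0, hrT⟩ := hr
  obtain ⟨hs0, hsT⟩ := hs
  have hm := heat_meas x
  have habs : |r - s| ≤ r + s := by rw [abs_le]; constructor <;> linarith
  -- first bound
  have A : ∀ p q : ℝ, 0 ≤ p → p ≤ q → q ≤ 2 * T →
      0 ≤ ∫ τ in p..q, heatT τ x ∧ ∫ τ in p..q, heatT τ x ≤ 32 * K * δ⁻¹ := by
    intro p q hp hpq hq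
    set a := δ / √8 with ha
    have h8 : 0 < √(8:ℝ) := by positivity
    have ha0 : 0 < a := by positivity
    have ha2 : a^2 = δ^2 / 8 := by rw [ha, div_pow, Real.sq_sqrt (by norm_num)]
    have := aux_int_s7 (F := fun t => (2 * K / a) * Real.arctan (√t / a))
      (F' := fun t => K / (√t * (t + δ^2/8))) (G := fun τ => heatT τ x) hpq
      (by fun_prop) (fun t ht => ?_) hm
      (fun t ht => heat_nonneg (hp.trans ht.1.le) x)
      (fun t ht => hbx t (hp.trans_lt ht.1) (ht.2.le.trans hq))
    · refine ⟨this.2.1, this.2.2.trans ?_⟩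
      have h1 : Real.arctan (√q / a) ≤ 2 := by
        linarith [Real.arctan_lt_pi_div_two (√q / a), Real.pi_lt_four]
      have h2 : 0 ≤ Real.arctan (√p / a) := Real.arctan_nonneg.2 (by positivity)
      have h3 : 0 < 2 * K / a := by positivity
      have h4 : 2 * K / a = 2 * K * √8 * δ⁻¹ := by rw [ha]; field_simp
      have h5 : √(8:ℝ) ≤ 8 := by rw [Real.sqrt_le_left (by norm_num)]; norm_num
      have h6 : 2 * K * √8 * δ⁻¹ ≤ 2 * K * 8 * δ⁻¹ := by gcongr
      nlinarith
    · have ht0 : 0 < t := hp.trans_lt ht.1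
      have hd := (((Real.hasDerivAt_sqrt ht0.ne').div_const a).arctan).const_mul (2 * K / a)
      refine hd.congr_deriv ?_
      rw [div_pow, Real.sq_sqrt ht0.le, ← ha2]
      have := Real.sqrt_pos.2 ht0
      field_simp
      ring
  have B : ∀ p q : ℝ, 0 ≤ p → p ≤ q → q ≤ 2 * T →
      IntervalIntegrable (fun τ => heatT τ x) MeasureTheory.volume p q ∧
      0 ≤ ∫ τ in p..q, heatT τ x ∧ ∫ τ in p..q, heatT τ x ≤ 16 * K * √(q - p) * δ⁻¹^2 := by
    intro p q hp hpq hq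
    have := aux_int_s7 (F := fun t => (16 * K * δ⁻¹^2) * √t)
      (F' := fun t => (16 * K * δ⁻¹^2) * (1 / (2 * √t))) (G := fun τ => heatT τ x) hpq
      (by fun_prop) (fun t ht => (Real.hasDerivAt_sqrt (hp.trans_lt ht.1).ne').const_mul _) hm
      (fun t ht => heat_nonneg (hp.trans ht.1.le) x)
      (fun t ht => (hbx t (hp.trans_lt ht.1) (ht.2.le.trans hq)).trans ?_)
    · refine ⟨this.1, this.2.1, this.2.2.trans ?_⟩
      have h1 := sqrt_sub hp hpq
      have h2 : 0 < 16 * K * δ⁻¹^2 := by positivity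
      nlinarith
    · have ht0 : 0 < t := hp.trans_lt ht.1
      have := Real.sqrt_pos.2 ht0
      calc K / (√t * (t + δ^2/8)) ≤ K / (√t * (δ^2/8)) := by
            gcongr; linarith
        _ = _ := by field_simp; norm_num
  refine ⟨?_, ?_⟩
  · obtain ⟨h1, h2⟩ := A |r - s| (r + s) (abs_nonneg _) habs (by linarith)
    rw [covK_eq]
    constructor
    · positivity
    · linarith
  · rw [covK_eq, covK_eq, sub_self, abs_zero, ← Real.sqrt_eq_rpow]
    obtain ⟨i1, n1, b1⟩ := B 0 |r - s| le_rfl (abs_nonneg _) (by linarith)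
    obtain ⟨i2, -, -⟩ := B |r - s| (r + s) (abs_nonneg _) habs (by linarith)
    rw [sub_zero] at b1
    have e1 := intervalIntegral.integral_add_adjacent_intervals i1 i2
    have i12 := i1.trans i2
    rcases le_total r s with h | h
    · obtain ⟨i3, n3, b3⟩ := B (r + r) (r + s) (by linarith) (by linarith) (by linarith)
      obtain ⟨i4, -, -⟩ := B 0 (r + r) le_rfl (by linarith) (by linarith)
      have e2 := intervalIntegral.integral_add_adjacent_intervals i4 i3
      have : r + s - (r + r) = |r - s| := by rw [abs_of_nonpos (by linarith)]; ring
      rw [this] at b3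
      rw [abs_le]; constructor <;> linarith
    · obtain ⟨i3, n3, b3⟩ := B (r + s) (r + r) (by linarith) (by linarith) (by linarith)
      have e2 := intervalIntegral.integral_add_adjacent_intervals i12 i3
      have : r + r - (r + s) = |r - s| := by rw [abs_of_nonneg (by linarith)]; ring
      rw [this] at b3
      rw [abs_le]; constructor <;> linarith
end
end

section
/- Let X be a topological space and x₀ ∈ X a point such that S := X \ {x₀} is open in X. Let ~ be an equivalence relation on X such that the equivalence class of x₀ is exactly {x₀}, and such that for every x ∈ S the point x₀ lies in the closure of the equivalence class of x. Let π : X → X/~ be the quotient map and equip X/~ with the quotient topology. Then for every subset O ⊆ X/~ with O ≠ X/~: O is open if and only if π(x₀) ∉ O and π⁻¹(O) is open in X (equivalently, since S is open, π⁻¹(O) is open in S). -/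
theorem stmt_9 {X : Type*} [TopologicalSpace X] (x₀ : X)
    (hS : IsOpen ({x₀}ᶜ : Set X)) (s : Setoid X)
    (hclass : ∀ y : X, s.r y x₀ ↔ y = x₀)
    (hcl : ∀ x : X, x ≠ x₀ → x₀ ∈ closure {y : X | s.r y x}) :
    ∀ O : Set (Quotient s), O ≠ Set.univ →
      (IsOpen O ↔ Quotient.mk s x₀ ∉ O ∧ IsOpen (Quotient.mk s ⁻¹' O)) := by
  intro O hO
  refine ⟨fun h => ?_, fun h => h.2⟩
  have h' : IsOpen (Quotient.mk s ⁻¹' O) := h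
  refine ⟨fun h0 => hO ?_, h'⟩
  rw [Set.eq_univ_iff_forall]
  intro q
  induction q using Quotient.inductionOn with
  | h x =>
    by_cases hx : x = x₀
    · rw [hx]; exact h0
    · obtain ⟨y, hy, hyx⟩ := mem_closure_iff.1 (hcl x hx) _ h' h0
      have e : Quotient.mk s y = Quotient.mk s x := Quotient.sound hyx
      rw [← e]; exact hy
end

section
/- Let (E,d) be a metric space, let ~ be an equivalence relation on E whose graph {(x,y) ∈ E×E : x ~ y} is closed in E×E, and let F : E → [0,∞] be a lower semicontinuous function such that the sublevel set {x ∈ E : F(x) ≤ R} is compact for every R ∈ [0,∞). Then the function m : E → [0,∞] defined by m(x) := inf{F(y) : y ~ x} is lower semicontinuous. -/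
open scoped NNReal ENNReal

theorem stmt_10 {E : Type*} [MetricSpace E]
    (r : E → E → Prop) (hr : Equivalence r)
    (hgraph : IsClosed {p : E × E | r p.1 p.2})
    (F : E → ℝ≥0∞) (hF : LowerSemicontinuous F)
    (hcpt : ∀ R : ℝ≥0, IsCompact {x : E | F x ≤ R}) :
    LowerSemicontinuous fun x : E => ⨅ y ∈ {y : E | r y x}, F y := by
  intro x a ha
  obtain ⟨R, haR, hRm⟩ := ENNReal.lt_iff_exists_nnreal_btwn.1 ha
  have h : ∀ᶠ x' in nhds x, ∀ y ∈ {y : E | F y ≤ R}, ¬ r y x' := by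
    apply (hcpt R).eventually_forall_of_forall_eventually
    intro y hy
    have hn : ¬ r y x := fun hyx =>
      absurd (lt_of_lt_of_le hRm (iInf₂_le (f := fun y (_ : y ∈ {y : E | r y x}) => F y) y hyx))
        (not_lt.2 hy)
    have ho : IsOpen {p : E × E | ¬ r p.2 p.1} :=
      (hgraph.preimage continuous_swap).isOpen_compl
    exact ho.mem_nhds (x := (x, y)) hn
  filter_upwards [h] with x' hx'
  refine lt_of_lt_of_le haR (le_iInf₂ fun y hy => ?_)
  by_contra hlt
  exact hx' y (not_le.1 hlt).le hy
end
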